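/- Let Ω ⊂ ℝ² be a bounded open strictly convex domain (the curvature κ of ∂Ω is everywhere positive), and let v be the solution of the Saint Venant torsion problem Δv = 2 in Ω, v = 0 on ∂Ω. If v is uniformly second order convex (v is convex and G_v ≥ λ on Ω for some λ > 0), then there is ε > 0 such that for every H with 0 < H < ε the solution u(·;H) of problem (*) is strictly second order convex (its Hessian is positive definite on Ω); in particular, if Ω is bounded by an ellipse, small bubbles are convex. Conversely, if the Gauss curvature of graph(v) is negative at some point of Ω, then for arbitrarily small H > 0 the solution u(·;H) fails to be convex. -/

import Mathlib

/-!
Put `w = u / H` and identify `ℝ²` with `ℂ`.  A function is handled through its second order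
expansions `Jet w z p q s`: gradient `p` and Hessian `h ↦ s |h|² + Re (q h²)`, which has trace `2 s`
and eigenvalues `s ± |q|`.  In these terms `w` solves
`Δw + H² D²w[ip, ip] = 2 (1 + H² |p|²)^{3/2}` (`Eqn`), a perturbation of the torsion equation
`Δv = 2`.  A barrier in a slab and a doubling of variables give a Lipschitz bound independent of `H`
(`SolC.lip`), and the comparison principle gives `|w - v| = O(H²)` as soon as one of `v`, `w` is
convex (`SolC.close_of_convex_v`, `SolC.close_of_convex_w`); convexity together with the equation
bounds the Hessian of that function, hence the error in the equation of the other one.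

*Failure of convexity.*  If all `w` for a sequence `H → 0` were convex, they would be uniformly close
to `v`, and `v` would inherit the midpoint inequality, which a negative direction of `D²v` violates
at one fixed distance (`nonconvex_small`).

*Convexity.*  Uniform convexity of `v` is strong midpoint convexity (`strong_convex`).  Closeness of
`w` to `v` transfers it to pairs of points at a fixed distance; it has to be transferred to nearby
points as well.  For pairs with one point `ξ` on the boundary this uses a second order expansion of
`w` at `ξ` with a rate independent of `H` and `ξ` (`Stage.expansion`).  It comes from an improvement
of flatness iteration: after subtraction of a quadratic model and rescaling, the error is almost
harmonic and almost zero on an almost flat boundary (`Normalized`); such a function is approximately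
Hölder continuous (`Normalized.holder`), so an explicit Fejér sum approximates it by polynomials
`∑ βₖ Im zᵏ` (`fejer_approx`), whose first two terms improve the model (`improvement`).  The
expansion and the closeness at one scale give strong midpoint convexity from boundary points
(`bdry_pos`, `bdry_convex`).  A concavity maximum principle for
`w ((x+y)/2) - (w x + w y)/2 + c |x-y|² (1 + |(x+y)/2|²)` shows that a positive maximum cannot be
interior (`two_point`), so the inequality holds for all pairs, and its infinitesimal form is
positivity of `D²w` (`two_point_hess`).

The boundary frames needed for the iteration are read off from the defining function of the domain
(`frame_at`, `geometry`).
-/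

noncomputable section
open Set
open scoped RealInnerProductSpace

/-- The plane ℝ². -/
abbrev E2 : Type := EuclideanSpace ℝ (Fin 2)

/-- Standard basis vectors of ℝ². -/
def e2 (i : Fin 2) : E2 := EuclideanSpace.single i 1

/-- The mean curvature operator `M u = div (Du / √(1+|Du|²))`. -/
def mcDiv (u : E2 → ℝ) (x : E2) : ℝ :=
  ∑ i : Fin 2,
    fderiv ℝ (fun y => (Real.sqrt (1 + ‖gradient u y‖ ^ 2))⁻¹ • gradient u y) x (e2 i) i

/-- `u` is a solution of problem (*) on `Ω` with mean curvature `H`: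
`u ∈ C²(Ω) ∩ C⁰(closure Ω)`, `div(Du/√(1+|Du|²)) = 2H` in `Ω`, `u = 0` on `∂Ω`. -/
def SolvesStar (Ω : Set E2) (H : ℝ) (u : E2 → ℝ) : Prop :=
  ContDiffOn ℝ 2 u Ω ∧ ContinuousOn u (closure Ω) ∧
    (∀ x ∈ Ω, mcDiv u x = 2 * H) ∧ (∀ x ∈ frontier Ω, u x = 0)

/-- `u` is a `C²(closure Ω)` solution of problem (*). -/
def SolvesStarC2 (Ω : Set E2) (H : ℝ) (u : E2 → ℝ) : Prop :=
  ContDiffOn ℝ 2 u (closure Ω) ∧ (∀ x ∈ Ω, mcDiv u x = 2 * H) ∧ ∀ x ∈ frontier Ω, u x = 0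

/-- `H_max = sup {H ≥ 0 : (*) has a unique solution in C²(closure Ω)}`. -/
def Hmax (Ω : Set E2) : ℝ :=
  sSup {H : ℝ | 0 ≤ H ∧ (∃ u, SolvesStarC2 Ω H u) ∧
    ∀ u v, SolvesStarC2 Ω H u → SolvesStarC2 Ω H v → EqOn u v (closure Ω)}

/-- The Hessian bilinear form of `u` at `x` evaluated at `(w₁, w₂)`. -/
def hess2 (u : E2 → ℝ) (x : E2) (w₁ w₂ : E2) : ℝ :=
  fderiv ℝ (fun y => fderiv ℝ u y w₂) x w₁

/-- `G_v = v_xx v_yy − v_xy²`, the determinant of the Hessian. -/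
def Gdet (v : E2 → ℝ) (x : E2) : ℝ :=
  hess2 v x (e2 0) (e2 0) * hess2 v x (e2 1) (e2 1) - hess2 v x (e2 0) (e2 1) ^ 2

/-- `L_v = v_y² v_xx − 2 v_x v_y v_xy + v_x² v_yy`. -/
def Lcurv (v : E2 → ℝ) (x : E2) : ℝ :=
  (fderiv ℝ v x (e2 1)) ^ 2 * hess2 v x (e2 0) (e2 0)
    - 2 * fderiv ℝ v x (e2 0) * fderiv ℝ v x (e2 1) * hess2 v x (e2 0) (e2 1)
    + (fderiv ℝ v x (e2 0)) ^ 2 * hess2 v x (e2 1) (e2 1)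

/-- `Ω` is a bounded strictly convex domain with `C^{2,α}` boundary: it has a `C²` defining
function `f` with `α`-Hölder second derivative, nonvanishing boundary gradient, and the
second fundamental form of the boundary (tangential Hessian of `f`) is positive, i.e. the
curvature of `∂Ω` is everywhere positive. -/
def StrictlyConvexDomain (α : ℝ) (Ω : Set E2) : Prop :=
  IsOpen Ω ∧ Bornology.IsBounded Ω ∧ Ω.Nonempty ∧
    ∃ f : E2 → ℝ, ContDiff ℝ 2 f ∧ Ω = {x | f x < 0} ∧ frontier Ω = {x | f x = 0} ∧
      (∃ C : ℝ, ∀ x y : E2,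
        ‖iteratedFDeriv ℝ 2 f x - iteratedFDeriv ℝ 2 f y‖ ≤ C * ‖x - y‖ ^ α) ∧
      (∀ x ∈ frontier Ω, gradient f x ≠ 0) ∧
      (∀ x ∈ frontier Ω, ∀ w : E2, w ≠ 0 → ⟪w, gradient f x⟫ = (0:ℝ) →
        0 < hess2 f x w w)

/-- The unit direction `e_θ = (cos θ, sin θ)`. -/
def dirVec (θ : ℝ) : E2 := Real.cos θ • e2 0 + Real.sin θ • e2 1

open Filter Topology Asymptotics

/-! ### Second order expansions and comparison -/

/-- The real linear form `h ↦ ⟨p, h⟩` on `ℂ = ℝ²`. -/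
def lin (p h : ℂ) : ℝ := p.re * h.re + p.im * h.im

/-- The quadratic form `h ↦ s |h|² + Re (q h²)` on `ℂ = ℝ²`: its trace is `2 s`, its eigenvalues
are `s ± |q|`. -/
def qf (s : ℝ) (q h : ℂ) : ℝ :=
  s * (h.re ^ 2 + h.im ^ 2) + (q.re * (h.re ^ 2 - h.im ^ 2) - 2 * q.im * h.re * h.im)

/-- `φ t = φ 0 + a t + b t² / 2 + o(t²)` at `t = 0`. -/
def T2 (φ : ℝ → ℝ) (a b : ℝ) : Prop :=
  (fun t => φ t - φ 0 - a * t - b / 2 * t ^ 2) =o[𝓝 0] (fun t => t ^ 2)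

/-- `w` has the second order Taylor expansion at `z` with gradient `p` and Hessian `qf s q`. -/
def Jet (w : ℂ → ℝ) (z p q : ℂ) (s : ℝ) : Prop :=
  (fun h : ℂ => w (z + h) - w z - lin p h - qf s q h / 2) =o[𝓝 0] (fun h => ‖h‖ ^ 2)

theorem T2.add {φ ψ : ℝ → ℝ} {a b c d : ℝ} (h : T2 φ a b) (k : T2 ψ c d) :
    T2 (fun t => φ t + ψ t) (a + c) (b + d) := by
  unfold T2 at *
  refine (IsLittleO.add h k).congr_left ?_
  intro t; ring

theorem T2.const_mul {φ : ℝ → ℝ} {a b : ℝ} (c : ℝ) (h : T2 φ a b) :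
    T2 (fun t => c * φ t) (c * a) (c * b) := by
  unfold T2 at *
  refine (IsLittleO.const_mul_left h c).congr_left ?_
  intro t; ring

/-- If `φ` lies below a cubic polynomial touching it at `0`, then first derivatives agree there and
second derivatives are ordered. -/
theorem T2.le_of_upper {φ : ℝ → ℝ} {a b A B C : ℝ} (h : T2 φ a b)
    (hu : ∀ᶠ t in 𝓝 (0:ℝ), φ t ≤ φ 0 + A * t + B / 2 * t ^ 2 + C * |t| ^ 3) :
    a = A ∧ b ≤ B := by
  have key : ∀ ε > 0, ∃ r > 0, ∀ t : ℝ, |t| < r →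
      (a - A) * t + (b - B) / 2 * t ^ 2 ≤ ε * t ^ 2 := by
    intro ε hε
    have h1 : ∀ᶠ t in 𝓝 (0:ℝ), ‖φ t - φ 0 - a * t - b / 2 * t ^ 2‖ ≤ (ε/2) * ‖t ^ 2‖ :=
      h.def (by positivity)
    have h2 : ∀ᶠ t in 𝓝 (0:ℝ), |C| * |t| < ε / 2 := by
      have : Tendsto (fun t : ℝ => |C| * |t|) (𝓝 0) (𝓝 (|C| * |(0:ℝ)|)) := by
        apply Continuous.tendsto; fun_prop
      simp only [abs_zero, mul_zero] at this
      exact this.eventually (gt_mem_nhds (by positivity))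
    obtain ⟨r, hr, hb⟩ := Metric.eventually_nhds_iff.1 (h1.and (h2.and hu))
    refine ⟨r, hr, fun t ht => ?_⟩
    obtain ⟨k1, k2, k3⟩ := hb (by simpa [Real.dist_eq] using ht)
    rw [Real.norm_eq_abs, Real.norm_eq_abs, abs_of_nonneg (sq_nonneg t)] at k1
    have k4 := neg_le_of_abs_le k1
    have k5 : C * |t| ^ 3 ≤ ε / 2 * t ^ 2 := by
      have : C * |t| ^ 3 ≤ (|C| * |t|) * t ^ 2 := by
        rw [← sq_abs t]
        have : C * |t| ^ 3 ≤ |C| * |t| ^ 3 := by gcongr; exact le_abs_self C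
        linarith [this]
      nlinarith [sq_nonneg t]
    nlinarith
  have hA : a = A := by
    by_contra hne
    obtain ⟨r, hr, hk⟩ := key 1 one_pos
    have hpos : 0 < |a - A| := abs_pos.2 (sub_ne_zero.2 hne)
    set M := |(b - B) / 2| + 1 with hM
    have hM0 : 0 < M := by positivity
    set τ := min (r/2) (|a - A| / (2 * M)) with hτ
    have hτ0 : 0 < τ := by positivity
    have h1 : τ < r := lt_of_le_of_lt (min_le_left _ _) (by linarith)
    have h2 : τ * (2 * M) ≤ |a - A| := by
      have := min_le_right (r/2) (|a - A| / (2 * M))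
      rwa [← hτ, le_div_iff₀ (by positivity)] at this
    have h3 : -|(b - B)/2| ≤ (b - B)/2 := neg_abs_le _
    rcases le_total 0 (a - A) with h | h
    · have := hk τ (by rwa [abs_of_pos hτ0])
      rw [abs_of_nonneg h] at h2 hpos
      nlinarith [mul_pos hτ0 hpos, sq_nonneg τ]
    · have := hk (-τ) (by rwa [abs_neg, abs_of_pos hτ0])
      rw [abs_of_nonpos h] at h2 hpos
      nlinarith [mul_pos hτ0 hpos, sq_nonneg τ]
  refine ⟨hA, ?_⟩
  apply le_of_forall_pos_le_add
  intro ε hε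
  obtain ⟨r, hr, hk⟩ := key (ε/2) (by positivity)
  have := hk (r/2) (by rw [abs_of_pos (by positivity)]; linarith)
  rw [hA] at this
  have h2 : 0 < (r/2)^2 := by positivity
  nlinarith

theorem T2.of_quadratic (c a b : ℝ) : T2 (fun t => c + a * t + b / 2 * t ^ 2) a b := by
  unfold T2
  refine (isLittleO_zero _ _).congr_left ?_
  intro t; ring

theorem Jet.line {w : ℂ → ℝ} {z p q : ℂ} {s : ℝ} (h : Jet w z p q s) (μ : ℂ) :
    T2 (fun t => w (z + t * μ)) (lin p μ) (qf s q μ) := by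
  unfold T2 Jet at *
  have ht : Tendsto (fun t : ℝ => (t:ℂ) * μ) (𝓝 0) (𝓝 0) := by
    have : Continuous (fun t : ℝ => (t:ℂ) * μ) := by fun_prop
    simpa using this.tendsto 0
  have h2 := h.comp_tendsto ht
  have h3 : (fun t : ℝ => (fun h : ℂ => ‖h‖ ^ 2) ((t:ℂ) * μ)) =O[𝓝 0] (fun t => t ^ 2) := by
    refine IsBigO.of_bound (‖μ‖ ^ 2) (Eventually.of_forall fun t => ?_)
    simp only [norm_mul, Complex.norm_real, Real.norm_eq_abs, norm_pow, abs_abs, abs_norm]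
    rw [mul_pow]; linarith [mul_comm (|t|^2) (‖μ‖^2)]
  refine (h2.trans_isBigO h3).congr_left ?_
  intro t
  simp only [Function.comp, lin, qf, Complex.mul_re, Complex.mul_im, Complex.ofReal_re,
    Complex.ofReal_im, Complex.ofReal_zero, zero_mul, add_zero]
  ring

theorem Jet.add {w v : ℂ → ℝ} {z p q p' q' : ℂ} {s s' : ℝ} (h : Jet w z p q s)
    (k : Jet v z p' q' s') : Jet (fun x => w x + v x) z (p + p') (q + q') (s + s') := by
  unfold Jet at *
  refine (IsLittleO.add h k).congr_left ?_
  intro t; simp only [lin, qf, Complex.add_re, Complex.add_im]; ring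

theorem Jet.const_mul {w : ℂ → ℝ} {z p q : ℂ} {s : ℝ} (c : ℝ) (h : Jet w z p q s) :
    Jet (fun x => c * w x) z (c * p) (c * q) (c * s) := by
  unfold Jet at *
  refine (IsLittleO.const_mul_left h c).congr_left ?_
  intro t; simp [lin, qf]; ring

theorem Jet.neg {w : ℂ → ℝ} {z p q : ℂ} {s : ℝ} (h : Jet w z p q s) :
    Jet (fun x => - w x) z (-p) (-q) (-s) := by
  have := h.const_mul (-1)
  simpa using this

theorem Jet.sub {w v : ℂ → ℝ} {z p q p' q' : ℂ} {s s' : ℝ} (h : Jet w z p q s)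
    (k : Jet v z p' q' s') : Jet (fun x => w x - v x) z (p - p') (q - q') (s - s') := by
  simpa [sub_eq_add_neg] using h.add k.neg

theorem Jet.sum {ι : Type*} (S : Finset ι) {w : ι → ℂ → ℝ} {z : ℂ} {p q : ι → ℂ} {s : ι → ℝ}
    (h : ∀ i ∈ S, Jet (w i) z (p i) (q i) (s i)) :
    Jet (fun x => ∑ i ∈ S, w i x) z (∑ i ∈ S, p i) (∑ i ∈ S, q i) (∑ i ∈ S, s i) := by
  classical
  induction S using Finset.induction_on with
  | empty =>
    unfold Jet
    refine (isLittleO_zero _ _).congr_left ?_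
    intro t; simp [lin, qf]
  | insert i S hi ih =>
    simp only [Finset.sum_insert hi]
    exact (h i (by simp)).add (ih fun j hj => h j (by simp [hj]))

/-- Jets of quadratic polynomials, recognised through their exact expansion. -/
theorem Jet.of_exact {w : ℂ → ℝ} {z p q : ℂ} {s : ℝ}
    (h : ∀ k, w (z + k) = w z + lin p k + qf s q k / 2) : Jet w z p q s := by
  unfold Jet
  refine (isLittleO_zero _ _).congr_left ?_
  intro t; rw [h]; ring

theorem Jet.const (c : ℝ) (z : ℂ) : Jet (fun _ => c) z 0 0 0 :=
  Jet.of_exact fun k => by simp [lin, qf]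

theorem Jet.congr {w v : ℂ → ℝ} {z p q : ℂ} {s : ℝ} (h : Jet w z p q s)
    (e : ∀ᶠ x in 𝓝 z, w x = v x) : Jet v z p q s := by
  unfold Jet at *
  have ht : Tendsto (fun h : ℂ => z + h) (𝓝 0) (𝓝 z) := by
    have : Continuous (fun h : ℂ => z + h) := by fun_prop
    simpa using this.tendsto 0
  refine h.congr' ?_ EventuallyEq.rfl
  filter_upwards [ht.eventually e] with k hk
  rw [hk, e.self_of_nhds]

/-- Chain rule for jets under the similarity `ζ ↦ x₀ + c ζ`. -/
theorem Jet.comp_affine {w : ℂ → ℝ} {x₀ c ζ p q : ℂ} {s : ℝ} (h : Jet w (x₀ + c * ζ) p q s) :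
    Jet (fun ζ => w (x₀ + c * ζ)) ζ (starRingEnd ℂ c * p) (c ^ 2 * q) (‖c‖ ^ 2 * s) := by
  unfold Jet at *
  have ht : Tendsto (fun h : ℂ => c * h) (𝓝 0) (𝓝 0) := by
    have : Continuous (fun h : ℂ => c * h) := by fun_prop
    simpa using this.tendsto 0
  have h2 := h.comp_tendsto ht
  have h3 : (fun t : ℂ => (fun h : ℂ => ‖h‖ ^ 2) (c * t)) =O[𝓝 0] (fun t => ‖t‖ ^ 2) := by
    refine IsBigO.of_bound (‖c‖ ^ 2) (Eventually.of_forall fun t => ?_)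
    simp [mul_pow]
  refine (h2.trans_isBigO h3).congr_left ?_
  intro t
  have e1 : x₀ + c * (ζ + t) = x₀ + c * ζ + c * t := by ring
  have e2 : ‖c‖ ^ 2 = c.re ^ 2 + c.im ^ 2 := by
    rw [← Complex.normSq_eq_norm_sq, Complex.normSq_apply]; ring
  simp only [Function.comp, e1, e2, lin, qf, Complex.mul_re, Complex.mul_im, Complex.conj_re,
    Complex.conj_im, sq]
  ring

theorem norm_sq_eq (h : ℂ) : ‖h‖ ^ 2 = h.re ^ 2 + h.im ^ 2 := by
  rw [← Complex.normSq_eq_norm_sq, Complex.normSq_apply]; ring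

theorem qf_eq (s : ℝ) (q h : ℂ) : qf s q h = s * ‖h‖ ^ 2 + (q * h ^ 2).re := by
  rw [norm_sq_eq]; simp only [qf, Complex.mul_re, sq, Complex.mul_im]; ring

theorem qf_le (s : ℝ) (q h : ℂ) : qf s q h ≤ (s + ‖q‖) * ‖h‖ ^ 2 := by
  rw [qf_eq]
  have := Complex.re_le_norm (q * h ^ 2)
  rw [norm_mul, norm_pow] at this
  linarith

theorem le_qf (s : ℝ) (q h : ℂ) : (s - ‖q‖) * ‖h‖ ^ 2 ≤ qf s q h := by
  rw [qf_eq]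
  have := (abs_le.1 (Complex.abs_re_le_norm (q * h ^ 2))).1
  rw [norm_mul, norm_pow] at this
  linarith

theorem lin_le (p h : ℂ) : |lin p h| ≤ ‖p‖ * ‖h‖ := by
  have : lin p h = (starRingEnd ℂ p * h).re := by simp [lin]
  rw [this]
  refine (Complex.abs_re_le_norm _).trans ?_
  simp

theorem qf_abs_le (s : ℝ) (q h : ℂ) : |qf s q h| ≤ (|s| + ‖q‖) * ‖h‖ ^ 2 := by
  have h1 := qf_le s q h
  have h2 := le_qf s q h
  have h3 := le_abs_self s
  have h4 := neg_abs_le s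
  have h5 := sq_nonneg ‖h‖
  rw [abs_le]; constructor <;> nlinarith

/-- The top eigenvalue of `qf s q` is `s + |q|`, attained at a square root of `conj q`. -/
theorem eig_le {s c : ℝ} {q : ℂ} (h : ∀ μ, qf s q μ ≤ c * ‖μ‖ ^ 2) : s + ‖q‖ ≤ c := by
  rcases eq_or_ne q 0 with rfl | hq
  · have := h 1
    simpa [qf] using this
  · obtain ⟨μ, hμ⟩ := IsAlgClosed.exists_pow_nat_eq (starRingEnd ℂ q) (n := 2) (by norm_num)
    have h1 := h μ
    rw [qf_eq, hμ, Complex.mul_conj, Complex.normSq_eq_norm_sq, Complex.ofReal_re] at h1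
    have h2 : ‖μ‖ ^ 2 = ‖q‖ := by rw [← norm_pow, hμ]; simp
    rw [h2] at h1
    have : 0 < ‖q‖ := norm_pos_iff.2 hq
    nlinarith

theorem le_eig {s c : ℝ} {q : ℂ} (h : ∀ μ, c * ‖μ‖ ^ 2 ≤ qf s q μ) : c ≤ s - ‖q‖ := by
  have : ∀ μ, qf (-s) (-q) μ ≤ (-c) * ‖μ‖ ^ 2 := by
    intro μ
    have := h μ
    have e : qf (-s) (-q) μ = - qf s q μ := by simp [qf]; ring
    rw [e]; linarith
  have := eig_le this
  rw [norm_neg] at this; linarith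

/-- First and second order conditions at a local maximum. -/
theorem Jet.local_max {w : ℂ → ℝ} {z p q : ℂ} {s : ℝ} (h : Jet w z p q s)
    (hm : ∀ᶠ x in 𝓝 z, w x ≤ w z) : p = 0 ∧ s + ‖q‖ ≤ 0 := by
  have key : ∀ μ, lin p μ = 0 ∧ qf s q μ ≤ 0 := by
    intro μ
    have ht : Tendsto (fun t : ℝ => z + (t:ℂ) * μ) (𝓝 0) (𝓝 z) := by
      have : Continuous (fun t : ℝ => z + (t:ℂ) * μ) := by fun_prop
      simpa using this.tendsto 0
    apply (h.line μ).le_of_upper (C := 0)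
    filter_upwards [ht.eventually hm] with t ht
    simpa using ht
  refine ⟨?_, eig_le fun μ => by simpa using (key μ).2⟩
  have h1 := (key 1).1
  have h2 := (key Complex.I).1
  apply Complex.ext
  · simpa [lin] using h1
  · simpa [lin] using h2

/-- If `b` touches `w` from above at `z`, then the gradients agree and `D²w ≤ D²b`; the Hessian
inequality is stated through the top eigenvalue of the difference. -/
theorem Jet.touch {w b : ℂ → ℝ} {z p q p' q' : ℂ} {s s' : ℝ} (h : Jet w z p q s)
    (k : Jet b z p' q' s') (hm : ∀ᶠ x in 𝓝 z, w x - b x ≤ w z - b z) :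
    p = p' ∧ s + ‖q - q'‖ ≤ s' := by
  obtain ⟨h1, h2⟩ := (h.sub k).local_max hm
  exact ⟨sub_eq_zero.1 h1, by linarith⟩

theorem Jet.unique {w : ℂ → ℝ} {z p q p' q' : ℂ} {s s' : ℝ} (h : Jet w z p q s)
    (k : Jet w z p' q' s') : p = p' ∧ q = q' ∧ s = s' := by
  obtain ⟨h1, h2⟩ := h.touch k (by simp)
  obtain ⟨h3, h4⟩ := k.touch h (by simp)
  have h5 := norm_nonneg (q - q')
  have h6 : ‖q' - q‖ = ‖q - q'‖ := norm_sub_rev _ _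
  refine ⟨h1, sub_eq_zero.1 (norm_eq_zero.1 (by linarith)), by linarith⟩

theorem exists_max_interior {X : Type*} [TopologicalSpace X] {K : Set X} (hK : IsCompact K)
    {φ : X → ℝ} (hφ : ContinuousOn φ K) {x₁ : X} (hx : x₁ ∈ K) {c : ℝ} (hc : c < φ x₁) :
    ∃ x ∈ K, c < φ x ∧ ∀ y ∈ K, φ y ≤ φ x := by
  obtain ⟨x, hxK, hmax⟩ := hK.exists_isMaxOn ⟨x₁, hx⟩ hφ
  exact ⟨x, hxK, lt_of_lt_of_le hc (hmax hx), fun y hy => hmax hy⟩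

/-- Comparison principle: if a test function `b` that dominates `w` on the boundary can never touch
`w` from above inside, then `w ≤ b`. -/
theorem comparison {V : Set ℂ} (hV : IsOpen V) (hb : Bornology.IsBounded V) {w b : ℂ → ℝ}
    (hw : ContinuousOn w (closure V)) (hbc : ContinuousOn b (closure V))
    (hbd : ∀ z ∈ frontier V, w z ≤ b z)
    (heqn : ∀ z ∈ V, b z < w z → ∃ p q p' q' s s', Jet w z p q s ∧ Jet b z p' q' s' ∧
      (p = p' → s + ‖q - q'‖ ≤ s' → False)) :
    ∀ z ∈ closure V, w z ≤ b z := by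
  by_contra hcon
  push Not at hcon
  obtain ⟨z₁, hz₁, hlt⟩ := hcon
  obtain ⟨z, hz, hpos, hmax⟩ := exists_max_interior (Metric.isCompact_of_isClosed_isBounded
    isClosed_closure hb.closure) (hw.sub hbc) hz₁ (c := 0) (by simpa using hlt)
  have hzV : z ∈ V := by
    by_contra hn
    have : z ∈ frontier V := ⟨hz, fun h => hn (interior_subset h)⟩
    have := hbd z this
    simp only [Pi.sub_apply] at hpos
    linarith
  have hpos' : b z < w z := by simpa using hpos
  obtain ⟨p, q, p', q', s, s', j1, j2, hF⟩ := heqn z hzV hpos'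
  obtain ⟨h1, h2⟩ := j1.touch j2 (by
    filter_upwards [hV.mem_nhds hzV] with x hx
    simpa using hmax x (subset_closure hx))
  exact hF h1 h2

theorem frontier_inter_ball_subset {U : Set ℂ} {x : ℂ} {r : ℝ} {z : ℂ}
    (hz : z ∈ frontier (U ∩ Metric.ball x r)) :
    (z ∈ frontier U ∧ z ∈ Metric.closedBall x r) ∨ (z ∈ closure U ∧ z ∈ Metric.sphere x r) := by
  have h := frontier_inter_subset _ _ hz
  rcases h with ⟨h1, h2⟩ | ⟨h1, h2⟩
  · exact Or.inl ⟨h1, Metric.closure_ball_subset_closedBall h2⟩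
  · exact Or.inr ⟨h1, Metric.frontier_ball_subset_sphere h2⟩

/-! ### Almost harmonic functions near an almost flat boundary -/

/-- `E` has a jet at `z` whose trace is small relative to its other coefficients; this is what
remains of an almost harmonic equation after normalisation. -/
def SmallLap (δ : ℝ) (E : ℂ → ℝ) (z : ℂ) : Prop :=
  ∃ p q s, Jet E z p q s ∧ |s| ≤ δ * (‖q‖ + ‖p‖ + 1)

/-- Normalised boundary situation in the unit ball: `U` is `δ`-close to the upper half plane, and
`E` is bounded by `1`, almost zero on the boundary of `U`, and almost harmonic. -/
structure Normalized (δ : ℝ) (U : Set ℂ) (E : ℂ → ℝ) : Prop where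
  isOpen : IsOpen U
  up : ∀ z ∈ U, ‖z‖ < 1 → 0 < z.im
  full : ∀ z : ℂ, ‖z‖ < 1 → δ < z.im → z ∈ U
  cont : ContinuousOn E (closure U ∩ Metric.closedBall 0 1)
  bdd : ∀ z ∈ closure U, ‖z‖ ≤ 1 → |E z| ≤ 1
  bdry : ∀ z ∈ frontier U, ‖z‖ < 1 → |E z| ≤ δ
  small : ∀ z ∈ U, ‖z‖ < 1 → SmallLap δ E z

namespace Normalized
variable {δ : ℝ} {U : Set ℂ} {E : ℂ → ℝ}

theorem neg (h : Normalized δ U E) : Normalized δ U (fun z => - E z) where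
  isOpen := h.isOpen
  up := h.up
  full := h.full
  cont := h.cont.neg
  bdd := by simpa using h.bdd
  bdry := by simpa using h.bdry
  small := fun z hz hz1 => by
    obtain ⟨p, q, s, j, hs⟩ := h.small z hz hz1
    exact ⟨-p, -q, -s, j.neg, by simpa using hs⟩

theorem im_nonneg (h : Normalized δ U E) {z : ℂ} (hz : z ∈ closure U) (hz1 : ‖z‖ < 1) :
    0 ≤ z.im := by
  have h1 : z ∈ closure (U ∩ Metric.ball 0 1) :=
    closure_inter_open_nonempty_aux Metric.isOpen_ball hz (by simpa using hz1)
  have h2 : U ∩ Metric.ball 0 1 ⊆ {z : ℂ | 0 ≤ z.im} := fun x hx =>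
    (h.up x hx.1 (by simpa using hx.2)).le
  have h3 : IsClosed {z : ℂ | 0 ≤ z.im} := isClosed_le continuous_const Complex.continuous_im
  exact closure_minimal h2 h3 h1
where
  closure_inter_open_nonempty_aux {U V : Set ℂ} (hV : IsOpen V) {z : ℂ} (hz : z ∈ closure U)
      (hzV : z ∈ V) : z ∈ closure (U ∩ V) := by
    rw [mem_closure_iff_nhds] at *
    intro t ht
    obtain ⟨x, hx⟩ := hz (t ∩ V) (inter_mem ht (hV.mem_nhds hzV))
    exact ⟨x, hx.1.1, hx.2, hx.1.2⟩

theorem im_le (h : Normalized δ U E) {z : ℂ} (hz : z ∉ U) (hz1 : ‖z‖ < 1) :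
    z.im ≤ δ := by
  by_contra hc
  exact hz (h.full z hz1 (not_le.1 hc))

theorem mem_of_not_frontier {z : ℂ} (hz : z ∈ closure U) (hn : z ∉ frontier U) : z ∈ U := by
  by_contra h
  exact hn ⟨hz, fun h' => h (interior_subset h')⟩

theorem not_mem_of_frontier (hU : IsOpen U) {z : ℂ} (hn : z ∈ frontier U) : z ∉ U :=
  fun h => hn.2 (by rwa [hU.interior_eq])

/-- Linear growth off the boundary, from a quadratic barrier centred at the foot of the
perpendicular on the real axis. -/
theorem upper_linear (h : Normalized δ U E) (hδ : 0 < δ) (hδ1 : δ ≤ 1/100) {z : ℂ}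
    (hz : z ∈ closure U) (hz1 : ‖z‖ ≤ 3/4) : E z ≤ 25 * z.im + δ := by
  have hy0 : 0 ≤ z.im := h.im_nonneg hz (by linarith)
  rcases le_or_gt (1/5) z.im with hy | hy
  · have := (abs_le.1 (h.bdd z hz (by linarith))).2
    linarith
  set t : ℝ := z.re with ht
  have ht1 : |t| ≤ 3/4 := (Complex.abs_re_le_norm z).trans hz1
  have htn : ‖(t:ℂ)‖ ≤ 3/4 := by simpa using ht1
  set V := U ∩ Metric.ball (t:ℂ) (1/5) with hV
  set b : ℂ → ℝ := fun x => 20 * x.im - 100 * x.im ^ 2 + 25 * ((x.re - t) ^ 2 + x.im ^ 2) + δ with hb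
  have hdist : ∀ x : ℂ, dist x (t:ℂ) ^ 2 = (x.re - t) ^ 2 + x.im ^ 2 := by
    intro x; rw [dist_eq_norm, norm_sq_eq]; simp
  have hnear : ∀ x ∈ Metric.closedBall (t:ℂ) (1/5), ‖x‖ < 1 := by
    intro x hx
    have h1 : ‖x‖ ≤ ‖x - t‖ + ‖(t:ℂ)‖ := by simpa using norm_add_le (x - t) (t:ℂ)
    rw [Metric.mem_closedBall, dist_eq_norm] at hx
    linarith
  have hclV : closure V ⊆ closure U ∩ Metric.closedBall (t:ℂ) (1/5) := fun x hx =>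
    ⟨closure_mono inter_subset_left hx,
      Metric.closure_ball_subset_closedBall (closure_mono inter_subset_right hx)⟩
  have hle : ∀ x ∈ Metric.closedBall (t:ℂ) (1/5), x.im ≤ 1/5 := by
    intro x hx
    have h1 := (le_abs_self _).trans (Complex.abs_im_le_norm (x - t))
    rw [Metric.mem_closedBall, dist_eq_norm] at hx
    simp at h1; linarith
  have hcmp := comparison (V := V) (w := E) (b := b) (h.isOpen.inter Metric.isOpen_ball)
    (Metric.isBounded_ball.subset inter_subset_right)
    (h.cont.mono fun x hx => ⟨(hclV hx).1, by
      simpa using (hnear x (hclV hx).2).le⟩)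
    (by apply Continuous.continuousOn; fun_prop) ?_ ?_ z
    (im_nonneg.closure_inter_open_nonempty_aux Metric.isOpen_ball hz (by
      have := hdist z
      rw [Metric.mem_ball]
      apply lt_of_pow_lt_pow_left₀ 2 (by norm_num)
      rw [this, ht]; nlinarith))
  · refine hcmp.trans ?_
    simp only [hb, ht]; nlinarith
  · intro x hx
    rcases frontier_inter_ball_subset hx with ⟨h1, h2⟩ | ⟨h1, h2⟩
    · have k1 := hnear x h2
      have k2 := (abs_le.1 (h.bdry x h1 k1)).2
      have k3 := h.im_nonneg h1.1 k1
      have k4 := hle x h2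
      simp only [hb]; nlinarith [sq_nonneg (x.re - t), sq_nonneg x.im]
    · have h2' := Metric.sphere_subset_closedBall h2
      have k1 := hnear x h2'
      have k2 := (abs_le.1 (h.bdd x h1 k1.le)).2
      have k3 := h.im_nonneg h1 k1
      have k4 := hle x h2'
      have k5 := hdist x
      rw [Metric.mem_sphere.1 h2] at k5
      simp only [hb]; nlinarith
  · intro x hx _
    have hxc := Metric.ball_subset_closedBall hx.2
    have k1 := hnear x hxc
    obtain ⟨p, q, s, j, hs⟩ := h.small x hx.1 k1
    have hy1 := h.up x hx.1 k1
    have hy2 := hle x hxc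
    have hxr : |x.re - t| ≤ 1/5 := by
      have h1 := Complex.abs_re_le_norm (x - t)
      rw [Metric.mem_closedBall, dist_eq_norm] at hxc
      simp only [Complex.sub_re, Complex.ofReal_re] at h1; linarith
    refine ⟨p, q, ⟨50 * (x.re - t), 20 - 150 * x.im⟩, 100, s, -50, j, ?_, ?_⟩
    · apply Jet.of_exact
      intro k; simp only [hb, lin, qf, Complex.add_re, Complex.add_im]; norm_num; ring
    · intro hp hs'
      have n1 : ‖p‖ ≤ 30 := by
        rw [hp]
        refine (Complex.norm_le_abs_re_add_abs_im _).trans ?_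
        have : |20 - 150 * x.im| ≤ 20 := by rw [abs_le]; constructor <;> linarith
        simp only [abs_mul]; rw [abs_of_pos (by norm_num : (0:ℝ) < 50)]; linarith
      have n2 : ‖q‖ ≤ ‖q - 100‖ + 100 := by
        have := norm_add_le (q - 100) 100
        simpa using this
      have n3 := neg_abs_le s
      have n4 : |s| ≤ 1/100 * (‖q‖ + ‖p‖ + 1) := hs.trans (by gcongr)
      have n5 : |s| = - s := abs_of_neg (by linarith [norm_nonneg (q - 100)])
      linarith [norm_nonneg (q - 100)]

theorem abs_linear (h : Normalized δ U E) (hδ : 0 < δ) (hδ1 : δ ≤ 1/100) {z : ℂ}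
    (hz : z ∈ closure U) (hz1 : ‖z‖ ≤ 3/4) : |E z| ≤ 25 * z.im + δ := by
  rw [abs_le]
  have h1 := h.upper_linear hδ hδ1 hz hz1
  have h2 := h.neg.upper_linear hδ hδ1 hz hz1
  constructor <;> linarith

end Normalized

/-- Quadratic upper bound for `√|z|` along a line, used as a test function in doubling arguments. -/
theorem sqrt_norm_le (z ζ : ℂ) (hz : z ≠ 0) (t : ℝ) :
    √‖z + t * ζ‖ ≤ √‖z‖ + lin z ζ / (2 * √‖z‖ ^ 3) * t
      + (‖ζ‖ ^ 2 / (2 * √‖z‖ ^ 3)) / 2 * t ^ 2 := by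
  set ρ := √‖z‖ with hρ
  set ψ := √‖z + t * ζ‖ with hψ
  have hρ0 : 0 < ρ := Real.sqrt_pos.2 (norm_pos_iff.2 hz)
  have hψ0 : 0 ≤ ψ := Real.sqrt_nonneg _
  have e1 : ρ ^ 4 = ‖z‖ ^ 2 := by
    rw [show ρ ^ 4 = (ρ ^ 2) ^ 2 by ring, hρ, Real.sq_sqrt (norm_nonneg _)]
  have e2 : ψ ^ 4 = ‖z + t * ζ‖ ^ 2 := by
    rw [show ψ ^ 4 = (ψ ^ 2) ^ 2 by ring, hψ, Real.sq_sqrt (norm_nonneg _)]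
  have e3 : ψ ^ 4 = ρ ^ 4 + 2 * t * lin z ζ + t ^ 2 * ‖ζ‖ ^ 2 := by
    rw [e1, e2]; simp only [norm_sq_eq, lin]; simp; ring
  have key : ψ ≤ ρ + (ψ ^ 4 - ρ ^ 4) / (4 * ρ ^ 3) := by
    rw [← sub_le_iff_le_add', le_div_iff₀ (by positivity)]
    nlinarith [mul_nonneg (sq_nonneg (ψ - ρ)) (by positivity : 0 ≤ ψ^2 + 2*ρ*ψ+3*ρ^2)]
  refine key.trans (le_of_eq ?_)
  rw [e3]; field_simp; ring

theorem sqrt_add_le {r τ : ℝ} (hr : 0 < r) (hτ : -r ≤ τ) :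
    √(r + τ) ≤ √r + τ / (2 * √r) - τ ^ 2 / (8 * √r ^ 3) + |τ| ^ 3 / (16 * √r ^ 5) := by
  have h0 : √(r + τ) ≤ √r + τ / (2 * √r) - τ ^ 2 / (8 * √r ^ 3) + τ ^ 3 / (16 * √r ^ 5) := by
    set ρ := √r with hρ
    set ψ := √(r + τ) with hψ
    have hρ0 : 0 < ρ := Real.sqrt_pos.2 hr
    have e1 : ρ ^ 2 = r := Real.sq_sqrt hr.le
    have e2 : ψ ^ 2 = r + τ := Real.sq_sqrt (by linarith)
    have e3 : τ = ψ ^ 2 - ρ ^ 2 := by linarith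
    have : ρ + τ / (2 * ρ) - τ ^ 2 / (8 * ρ ^ 3) + τ ^ 3 / (16 * ρ ^ 5) - ψ
        = (ψ - ρ) ^ 4 * ((ψ + 2 * ρ) ^ 2 + ρ ^ 2) / (16 * ρ ^ 5) := by
      rw [e3]; field_simp; ring
    have h2 : 0 ≤ (ψ - ρ) ^ 4 * ((ψ + 2 * ρ) ^ 2 + ρ ^ 2) / (16 * ρ ^ 5) := by positivity
    linarith
  refine h0.trans ?_
  have : τ ^ 3 ≤ |τ| ^ 3 := by rw [← abs_pow]; exact le_abs_self _
  have h5 : 0 < √r ^ 5 := by have := Real.sqrt_pos.2 hr; positivity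
  gcongr

theorem norm_le_of_lin {p : ℂ} {c : ℝ} (h : ∀ μ, lin p μ ≤ c * ‖μ‖) : ‖p‖ ≤ c := by
  rcases eq_or_ne p 0 with rfl | hp
  · have := h 1; simpa [lin] using this
  · have h1 := h p
    have e : lin p p = ‖p‖ ^ 2 := by rw [norm_sq_eq]; simp [lin]; ring
    rw [e] at h1
    have := norm_pos_iff.2 hp
    nlinarith

theorem qf_add_rot (s : ℝ) (q e : ℂ) (he : ‖e‖ = 1) :
    qf s q e + qf s q (Complex.I * e) = 2 * s := by
  have : e.re ^ 2 + e.im ^ 2 = 1 := by rw [← norm_sq_eq, he]; norm_num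
  simp only [qf, Complex.mul_re, Complex.mul_im, Complex.I_re, Complex.I_im]
  linear_combination 2 * s * this

theorem qf_neg (s : ℝ) (q e : ℂ) : qf s q (-e) = qf s q e := by simp [qf]

/-- The interior part of the doubling argument for the modulus of continuity `1000 √r`: no interior
maximum of the doubled function is possible for an almost harmonic function. -/
theorem doubling_interior {δ : ℝ} (hδ : 0 < δ) (hδ1 : δ ≤ 1/100) {E : ℂ → ℝ} {x y x' : ℂ}
    (hx : SmallLap δ E x) (hy : SmallLap δ E y) (hxy : x ≠ y) (hr : ‖x - y‖ ≤ 1/8)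
    (hxx : ‖x - x'‖ ≤ 1/8)
    (hmax : ∀ᶠ P in 𝓝 (x, y), E P.1 - E P.2 - 1000 * √‖P.1 - P.2‖ - 128 * ‖P.1 - x'‖ ^ 2
      ≤ E x - E y - 1000 * √‖x - y‖ - 128 * ‖x - x'‖ ^ 2) : False := by
  obtain ⟨p, q, s, j, hs⟩ := hx
  obtain ⟨p', q', s', j', hs'⟩ := hy
  set z := x - y with hzdef
  have hz : z ≠ 0 := sub_ne_zero.2 hxy
  set r := ‖z‖ with hrdef
  have hr0 : 0 < r := norm_pos_iff.2 hz
  set ρ := √r with hρ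
  have hρ0 : 0 < ρ := Real.sqrt_pos.2 hr0
  have hρr : ρ ^ 2 = r := Real.sq_sqrt hr0.le
  have hT2 : ∀ μ ν : ℂ, T2 (fun t => E (x + t * μ) - E (y + t * ν)) (lin p μ - lin p' ν)
      (qf s q μ - qf s' q' ν) := by
    intro μ ν
    have := (j.line μ).add ((j'.line ν).const_mul (-1))
    simpa [sub_eq_add_neg] using this
  have hev : ∀ μ ν : ℂ, ∀ᶠ t : ℝ in 𝓝 (0:ℝ), E (x + (t:ℂ) * μ) - E (y + (t:ℂ) * ν) ≤
      E x - E y + 1000 * (√‖z + (t:ℂ) * (μ - ν)‖ - ρ)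
        + 128 * (2 * lin (x - x') μ * t + ‖μ‖ ^ 2 * t ^ 2) := by
    intro μ ν
    have ht : Tendsto (fun t : ℝ => (x + (t:ℂ) * μ, y + (t:ℂ) * ν)) (𝓝 0) (𝓝 (x, y)) := by
      have : Continuous (fun t : ℝ => (x + (t:ℂ) * μ, y + (t:ℂ) * ν)) := by fun_prop
      simpa using this.tendsto 0
    filter_upwards [ht.eventually hmax] with t h
    have e1 : x + t * μ - (y + t * ν) = z + t * (μ - ν) := by rw [hzdef]; ring
    have e2 : ‖x + t * μ - x'‖ ^ 2 = ‖x - x'‖ ^ 2 + 2 * lin (x - x') μ * t + ‖μ‖ ^ 2 * t ^ 2 := by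
      simp only [norm_sq_eq, lin]; simp; ring
    simp only [e1, e2] at h
    linarith
  have gen : ∀ μ ν : ℂ, lin p μ - lin p' ν
        = 1000 * (lin z (μ - ν) / (2 * ρ ^ 3)) + 256 * lin (x - x') μ ∧
      qf s q μ - qf s' q' ν ≤ 1000 * (‖μ - ν‖ ^ 2 / (2 * ρ ^ 3)) + 256 * ‖μ‖ ^ 2 := by
    intro μ ν
    apply (hT2 μ ν).le_of_upper (C := 0)
    filter_upwards [hev μ ν] with t h
    have := sqrt_norm_le z (μ - ν) hz t
    simp only [Complex.ofReal_zero, zero_mul, add_zero]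
    linarith
  set T := 1000 / ρ ^ 3 with hTdef
  have hT0 : 0 < T := by positivity
  have hT : ∀ a : ℝ, 1000 * (a / (2 * ρ ^ 3)) = T / 2 * a := by
    intro a; rw [hTdef]; field_simp
  have hTbig : 1000 ≤ T := by
    rw [hTdef, le_div_iff₀ (by positivity)]
    have : ρ ^ 3 ≤ 1 := pow_le_one₀ hρ0.le (by nlinarith)
    linarith
  set e := z / (r:ℂ) with he
  have hrne : (r:ℂ) ≠ 0 := by exact_mod_cast hr0.ne'
  have hen : ‖e‖ = 1 := by
    rw [he, norm_div, Complex.norm_real, Real.norm_eq_abs, abs_of_pos hr0, ← hrdef]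
    exact div_self hr0.ne'
  have hze : z = r * e := by rw [he]; field_simp
  have sec : qf s q e - qf s' q' (-e) ≤ -T + 256 := by
    refine ((hT2 e (-e)).le_of_upper (a := lin p e - lin p' (-e)) (A := 1000 / ρ + 256 * lin (x - x') e)
      (C := 500 / ρ ^ 5) ?_).2
    have hsm : ∀ᶠ t in 𝓝 (0:ℝ), |t| < r / 2 := by
      have : Tendsto (fun t : ℝ => |t|) (𝓝 0) (𝓝 |(0:ℝ)|) := continuous_abs.tendsto 0
      rw [abs_zero] at this
      exact this.eventually (gt_mem_nhds (by positivity))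
    filter_upwards [hev e (-e), hsm] with t h ht
    have ht2 := abs_lt.1 ht
    have e1 : ‖z + t * (e - -e)‖ = r + 2 * t := by
      have : z + t * (e - -e) = ((r + 2 * t : ℝ) : ℂ) * e := by
        conv_lhs => rw [hze]
        push_cast; ring
      rw [this, norm_mul, hen, Complex.norm_real, Real.norm_eq_abs, abs_of_pos (by linarith), mul_one]
    rw [e1, hen] at h
    have h2 := _root_.sqrt_add_le hr0 (τ := 2 * t) (by linarith)
    rw [← hρ, abs_mul, abs_two] at h2
    have e3 : 1000 * (2 * t / (2 * ρ) - (2 * t) ^ 2 / (8 * ρ ^ 3) + (2 * |t|) ^ 3 / (16 * ρ ^ 5))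
        = 1000 / ρ * t - T / 2 * t ^ 2 + 500 / ρ ^ 5 * |t| ^ 3 := by
      rw [hTdef]; field_simp; ring
    simp only [Complex.ofReal_zero, zero_mul, add_zero]
    linarith
  rw [qf_neg] at sec
  have third := (gen (Complex.I * e) (Complex.I * e)).2
  have hie : ‖Complex.I * e‖ = 1 := by simp [hen]
  rw [sub_self, norm_zero, hie] at third
  have tr := qf_add_rot s q e hen
  have tr' := qf_add_rot s' q' e hen
  have hq : s + ‖q‖ ≤ T / 2 + 256 := by
    apply eig_le
    intro μ
    have := (gen μ 0).2
    rw [sub_zero, hT] at this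
    have e0 : qf s' q' 0 = 0 := by simp [qf]
    linarith
  have hq' : -(T / 2) ≤ s' - ‖q'‖ := by
    apply le_eig
    intro μ
    have := (gen 0 μ).2
    rw [zero_sub, norm_neg, hT, norm_zero] at this
    have e0 : qf s q 0 = 0 := by simp [qf]
    linarith
  have hp : ‖p‖ ≤ T / 16 + 32 := by
    apply norm_le_of_lin
    intro μ
    have := (gen μ 0).1
    rw [sub_zero, hT] at this
    have e0 : lin p' 0 = 0 := by simp [lin]
    have b1 := (abs_le.1 (lin_le z μ)).2
    have b2 := (abs_le.1 (lin_le (x - x') μ)).2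
    have b3 : ‖z‖ * ‖μ‖ ≤ 1/8 * ‖μ‖ := by gcongr
    have b4 : ‖x - x'‖ * ‖μ‖ ≤ 1/8 * ‖μ‖ := by gcongr
    have b5 : T / 2 * lin z μ ≤ T / 2 * (1/8 * ‖μ‖) := by gcongr; linarith
    linarith
  have hp' : ‖p'‖ ≤ T / 16 := by
    apply norm_le_of_lin
    intro μ
    have := (gen 0 μ).1
    rw [zero_sub, hT] at this
    have e0 : lin p 0 = 0 := by simp [lin]
    have e1 : lin (x - x') 0 = 0 := by simp [lin]
    have e2 : lin z (-μ) = - lin z μ := by simp [lin]; ring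
    have b1 := (abs_le.1 (lin_le z μ)).2
    have b3 : ‖z‖ * ‖μ‖ ≤ 1/8 * ‖μ‖ := by gcongr
    have b5 : T / 2 * lin z μ ≤ T / 2 * (1/8 * ‖μ‖) := by gcongr; linarith
    rw [e2] at this
    linarith
  have m1 : |s| ≤ 1/100 * (‖q‖ + ‖p‖ + 1) := hs.trans (by gcongr)
  have m2 : |s'| ≤ 1/100 * (‖q'‖ + ‖p'‖ + 1) := hs'.trans (by gcongr)
  have a1 := neg_abs_le s
  have a2 := le_abs_self s'
  norm_num at third
  linarith

namespace Normalized
variable {δ : ℝ} {U : Set ℂ} {E : ℂ → ℝ}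

/-- Approximate Hölder continuity up to the boundary. -/
theorem holder (h : Normalized δ U E) (hδ : 0 < δ) (hδ1 : δ ≤ 1/100) {x' y' : ℂ}
    (hx' : x' ∈ closure U) (hx1 : ‖x'‖ ≤ 1/2) (hy' : y' ∈ closure U) (hy1 : ‖y'‖ ≤ 1/2) :
    E x' - E y' ≤ 1000 * √‖x' - y'‖ + 27 * δ := by
  by_contra hcon
  push Not at hcon
  set S := closure U ∩ Metric.closedBall (0:ℂ) (3/4) with hS
  have hSc : IsCompact S := (isCompact_closedBall (0:ℂ) (3/4)).inter_left isClosed_closure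
  have hES : ContinuousOn E S := h.cont.mono (inter_subset_inter_right _
    (Metric.closedBall_subset_closedBall (by norm_num)))
  obtain ⟨⟨x, y⟩, ⟨hxS, hyS⟩, hpos, hmax⟩ := exists_max_interior (hSc.prod hSc)
    (φ := fun P : ℂ × ℂ => E P.1 - E P.2 - 1000 * √‖P.1 - P.2‖ - 128 * ‖P.1 - x'‖ ^ 2)
    (x₁ := (x', y')) (c := 27 * δ) (by
      apply ContinuousOn.sub
      · apply ContinuousOn.sub
        · exact (hES.comp continuousOn_fst fun P hP => hP.1).sub
            (hES.comp continuousOn_snd fun P hP => hP.2)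
        · apply Continuous.continuousOn; fun_prop
      · apply Continuous.continuousOn; fun_prop)
    ⟨⟨hx', by simpa using hx1.trans (by norm_num)⟩, ⟨hy', by simpa using hy1.trans (by norm_num)⟩⟩
    (by simp only [sub_self, norm_zero]; linarith)
  simp only at hpos hxS hyS
  have hxn : ‖x‖ ≤ 3/4 := by simpa using hxS.2
  have hyn : ‖y‖ ≤ 3/4 := by simpa using hyS.2
  have bx := abs_le.1 (h.bdd x hxS.1 (by linarith))
  have by' := abs_le.1 (h.bdd y hyS.1 (by linarith))
  have hsq0 := Real.sqrt_nonneg ‖x - y‖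
  have hr0 := norm_nonneg (x - y)
  have hsq := Real.sq_sqrt hr0
  have hxx : ‖x - x'‖ < 1/8 := by
    by_contra hc; push Not at hc
    nlinarith
  have hxy : ‖x - y‖ < 1/8 := by
    by_contra hc; push Not at hc
    have : 1/100 ≤ √‖x - y‖ := by
      apply Real.le_sqrt_of_sq_le; linarith
    nlinarith [sq_nonneg ‖x - x'‖]
  have hne : x ≠ y := by
    rintro rfl
    simp only [sub_self, norm_zero, Real.sqrt_zero] at hpos
    nlinarith [sq_nonneg ‖x - x'‖]
  have t1 : ‖x‖ < 3/4 := by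
    have : ‖x‖ ≤ ‖x - x'‖ + ‖x'‖ := by simpa using norm_add_le (x - x') x'
    linarith
  have t2 : ‖y‖ < 3/4 := by
    have a1 : ‖x‖ ≤ ‖x - x'‖ + ‖x'‖ := by simpa using norm_add_le (x - x') x'
    have a2 : ‖y‖ ≤ ‖x - y‖ + ‖x‖ := by
      have := norm_sub_le x (x - y)
      simp only [sub_sub_cancel] at this; linarith
    linarith
  have him : |x.im - y.im| ≤ ‖x - y‖ := by simpa using Complex.abs_im_le_norm (x - y)
  have him' := abs_le.1 him
  have hlin : 25 * ‖x - y‖ ≤ 1000 * √‖x - y‖ := by nlinarith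
  have Lx := abs_le.1 (h.abs_linear hδ hδ1 hxS.1 hxn)
  have Ly := abs_le.1 (h.abs_linear hδ hδ1 hyS.1 hyn)
  have sqn := sq_nonneg ‖x - x'‖
  have hxU : x ∈ U := by
    by_contra hn
    have hf : x ∈ frontier U := by
      by_contra hf; exact hn (mem_of_not_frontier hxS.1 hf)
    have := abs_le.1 (h.bdry x hf (by linarith))
    have := h.im_le hn (by linarith)
    linarith
  have hyU : y ∈ U := by
    by_contra hn
    have hf : y ∈ frontier U := by
      by_contra hf; exact hn (mem_of_not_frontier hyS.1 hf)
    have := abs_le.1 (h.bdry y hf (by linarith))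
    have := h.im_le hn (by linarith)
    linarith
  refine doubling_interior hδ hδ1 (h.small x hxU (by linarith)) (h.small y hyU (by linarith)) hne
    hxy.le hxx.le ?_
  have o1 : U ∩ Metric.ball 0 (3/4) ∈ 𝓝 x :=
    (h.isOpen.inter Metric.isOpen_ball).mem_nhds ⟨hxU, by simpa using t1⟩
  have o2 : U ∩ Metric.ball 0 (3/4) ∈ 𝓝 y :=
    (h.isOpen.inter Metric.isOpen_ball).mem_nhds ⟨hyU, by simpa using t2⟩
  filter_upwards [prod_mem_nhds o1 o2] with P hP
  exact hmax P ⟨⟨subset_closure hP.1.1, Metric.ball_subset_closedBall hP.1.2⟩,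
    ⟨subset_closure hP.2.1, Metric.ball_subset_closedBall hP.2.2⟩⟩

end Normalized

/-! ### Fejér approximation by harmonic polynomials -/

/-- Second order expansion of `z^k`, with coefficients bounded by `k` and `k²` on the unit disc. -/
theorem pow_expansion (z : ℂ) (hz : ‖z‖ ≤ 1) (k : ℕ) : ∃ g₁ g₂ : ℂ, ‖g₁‖ ≤ k ∧ ‖g₂‖ ≤ (k:ℝ) ^ 2 ∧
    ∃ C : ℝ, 0 ≤ C ∧ ∀ h : ℂ, ‖h‖ ≤ 1 →
      ‖(z + h) ^ k - z ^ k - g₁ * h - g₂ * h ^ 2 / 2‖ ≤ C * ‖h‖ ^ 3 := by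
  induction k with
  | zero => exact ⟨0, 0, by simp, by simp, 0, le_rfl, by simp⟩
  | succ k ih =>
    obtain ⟨g₁, g₂, h1, h2, C, hC, hb⟩ := ih
    refine ⟨g₁ * z + z ^ k, g₂ * z + 2 * g₁, ?_, ?_, ‖g₂‖ / 2 + C * 2, by positivity, ?_⟩
    · refine (norm_add_le _ _).trans ?_
      rw [norm_mul, norm_pow]
      have a1 : ‖g₁‖ * ‖z‖ ≤ k * 1 := mul_le_mul h1 hz (norm_nonneg _) (by positivity)
      have a2 : ‖z‖ ^ k ≤ 1 := pow_le_one₀ (norm_nonneg _) hz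
      push_cast; linarith
    · refine (norm_add_le _ _).trans ?_
      rw [norm_mul, norm_mul]
      have a1 : ‖g₂‖ * ‖z‖ ≤ (k:ℝ) ^ 2 * 1 := mul_le_mul h2 hz (norm_nonneg _) (by positivity)
      have a2 : ‖(2:ℂ)‖ = 2 := by simp
      rw [a2]; push_cast; nlinarith
    · intro h hh
      have e : (z + h) ^ (k + 1) - z ^ (k + 1) - (g₁ * z + z ^ k) * h - (g₂ * z + 2 * g₁) * h ^ 2 / 2
          = g₂ / 2 * h ^ 3 + ((z + h) ^ k - z ^ k - g₁ * h - g₂ * h ^ 2 / 2) * (z + h) := by ring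
      rw [e]
      refine (norm_add_le _ _).trans ?_
      rw [norm_mul, norm_mul, norm_pow, norm_div]
      have a2 : ‖(2:ℂ)‖ = 2 := by simp
      have a3 : ‖z + h‖ ≤ 2 := (norm_add_le _ _).trans (by linarith)
      have a4 := mul_le_mul (hb h hh) a3 (norm_nonneg _) (by positivity)
      rw [a2]; linarith

theorem jet_of_cube_bound {w : ℂ → ℝ} {z p q : ℂ} {s C : ℝ}
    (h : ∀ k : ℂ, ‖k‖ ≤ 1 → |w (z + k) - w z - lin p k - qf s q k / 2| ≤ C * ‖k‖ ^ 3) :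
    Jet w z p q s := by
  unfold Jet
  have h1 : (fun k : ℂ => w (z + k) - w z - lin p k - qf s q k / 2) =O[𝓝 0]
      (fun k : ℂ => ‖k‖ ^ 3) := by
    refine IsBigO.of_bound C ?_
    filter_upwards [Metric.closedBall_mem_nhds (0:ℂ) one_pos] with k hk
    have := h k (by simpa using hk)
    simpa using this
  refine h1.trans_isLittleO ?_
  have := (isLittleO_pow_pow (𝕜 := ℝ) (m := 2) (n := 3) (by norm_num)).comp_tendsto
    (tendsto_norm_zero (E := ℂ))
  exact this

/-- `Im z^k` is harmonic: its jets have zero trace.  The coefficients are bounded on the unit disc. -/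
theorem jet_im_pow (z : ℂ) (hz : ‖z‖ ≤ 1) (k : ℕ) : ∃ p q : ℂ, ‖p‖ ≤ k ∧ ‖q‖ ≤ (k:ℝ) ^ 2 ∧
    Jet (fun x => (x ^ k).im) z p q 0 := by
  obtain ⟨g₁, g₂, h1, h2, C, hC, hb⟩ := pow_expansion z hz k
  refine ⟨Complex.I * starRingEnd ℂ g₁, -Complex.I * g₂, by simpa using h1, by simpa using h2, ?_⟩
  apply jet_of_cube_bound (C := C)
  intro h hh
  refine le_trans ?_ (hb h hh)
  refine le_trans (le_of_eq ?_) (Complex.abs_im_le_norm _)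
  congr 1
  have e : (g₂ * h ^ 2 / 2).im = (g₂ * h ^ 2).im / 2 := by
    rw [show (2:ℂ) = ((2:ℝ):ℂ) by norm_num, Complex.div_ofReal_im]
  simp only [Complex.sub_im, e]
  simp only [lin, qf, Complex.mul_re, Complex.mul_im, Complex.I_re, Complex.I_im, Complex.conj_re,
    Complex.conj_im, Complex.neg_re, Complex.neg_im, sq]
  ring

theorem abs_im_pow_le (z : ℂ) (hz : ‖z‖ ≤ 1) (k : ℕ) : |(z ^ k).im| ≤ k * |z.im| := by
  induction k with
  | zero => simp
  | succ k ih =>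
    rw [pow_succ, Complex.mul_im]
    refine (abs_add_le _ _).trans ?_
    rw [abs_mul, abs_mul]
    have a1 : |(z ^ k).re| ≤ 1 := (Complex.abs_re_le_norm _).trans (by
      rw [norm_pow]; exact pow_le_one₀ (norm_nonneg _) hz)
    have a2 : |z.re| ≤ 1 := (Complex.abs_re_le_norm _).trans hz
    have a3 := abs_nonneg z.im
    have a4 := abs_nonneg (z ^ k).im
    push_cast
    nlinarith

/-- The Fejér kernel identity. -/
theorem fejer_identity (y : ℂ) (hy : ‖y‖ = 1) (n : ℕ) :
    ‖∑ k ∈ Finset.range n, y ^ k‖ ^ 2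
      = 2 * ∑ k ∈ Finset.range n, ((n:ℝ) - k) * (y ^ k).re - n := by
  induction n with
  | zero => simp
  | succ n ih =>
    rw [Finset.sum_range_succ, norm_sq_eq, Complex.add_re, Complex.add_im]
    rw [norm_sq_eq] at ih
    have h1 : (y ^ n).re ^ 2 + (y ^ n).im ^ 2 = 1 := by rw [← norm_sq_eq, norm_pow, hy]; simp
    have hyc : y * starRingEnd ℂ y = 1 := by
      rw [Complex.mul_conj, Complex.normSq_eq_norm_sq, hy]; simp
    have h2 : (∑ k ∈ Finset.range n, y ^ k).re * (y ^ n).re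
        + (∑ k ∈ Finset.range n, y ^ k).im * (y ^ n).im
        = ∑ k ∈ Finset.range n, (y ^ (k + 1)).re := by
      have : ∀ a b : ℂ, a.re * b.re + a.im * b.im = (starRingEnd ℂ a * b).re := by
        intro a b; simp
      rw [this, map_sum, Finset.sum_mul, Complex.re_sum]
      rw [← Finset.sum_range_reflect]
      apply Finset.sum_congr rfl
      intro k hk
      rw [Finset.mem_range] at hk
      congr 1
      rw [map_pow]
      have e : n = (n - 1 - k) + (k + 1) := by omega
      conv_lhs => rw [e, pow_add]
      rw [show n - 1 - k + (k + 1) - 1 - k = n - 1 - k by omega, ← mul_assoc, ← mul_pow, mul_comm _ y, hyc, one_pow, one_mul]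
    have h3 : ∑ k ∈ Finset.range n, (y ^ (k + 1)).re
        = ∑ k ∈ Finset.range n, (y ^ k).re + (y ^ n).re - 1 := by
      have a := Finset.sum_range_succ (fun k => (y ^ k).re) n
      have b := Finset.sum_range_succ' (fun k => (y ^ k).re) n
      simp only [pow_zero, Complex.one_re] at b
      linarith
    have h4 : ∑ k ∈ Finset.range n, (((n + 1 : ℕ):ℝ) - k) * (y ^ k).re
        = ∑ k ∈ Finset.range n, ((n:ℝ) - k) * (y ^ k).re + ∑ k ∈ Finset.range n, (y ^ k).re := by
      rw [← Finset.sum_add_distrib]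
      apply Finset.sum_congr rfl
      intro k _; push_cast; ring
    rw [Finset.sum_range_succ, h4]
    push_cast
    linear_combination ih + h1 + 2 * h2 + 2 * h3

/-- Discrete Parseval identity at the `n`-th roots of unity: the translated Fejér kernels have
total mass one. -/
theorem fejer_mass {n : ℕ} (hn : n ≠ 0) {ω : ℂ} (hω : IsPrimitiveRoot ω n) (x : ℂ) (hx : ‖x‖ = 1) :
    ∑ j ∈ Finset.range n, ‖∑ k ∈ Finset.range n, (x * starRingEnd ℂ (ω ^ j)) ^ k‖ ^ 2
      = (n:ℝ) ^ 2 := by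
  have hωn : ‖ω‖ = 1 := hω.norm'_eq_one hn
  have hωc : ω * starRingEnd ℂ ω = 1 := by
    rw [Complex.mul_conj, Complex.normSq_eq_norm_sq, hωn]; simp
  have hxc : x * starRingEnd ℂ x = 1 := by
    rw [Complex.mul_conj, Complex.normSq_eq_norm_sq, hx]; simp
  have hω0 : ω ≠ 0 := by rintro rfl; simp at hωn
  have hconj : starRingEnd ℂ ω = ω⁻¹ := eq_inv_of_mul_eq_one_right hωc
  have key : (∑ j ∈ Finset.range n, ((‖∑ k ∈ Finset.range n, (x * starRingEnd ℂ (ω ^ j)) ^ k‖ ^ 2 : ℝ) : ℂ))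
      = (n:ℂ) ^ 2 := by
    have e1 : ∀ j ∈ Finset.range n,
        ((‖∑ k ∈ Finset.range n, (x * starRingEnd ℂ (ω ^ j)) ^ k‖ ^ 2 : ℝ) : ℂ)
        = ∑ k ∈ Finset.range n, ∑ l ∈ Finset.range n,
          (x ^ k * starRingEnd ℂ x ^ l) * (ω⁻¹ ^ k * ω ^ l) ^ j := by
      intro j _
      rw [← Complex.normSq_eq_norm_sq, ← Complex.mul_conj, map_sum, Finset.sum_mul_sum]
      refine Finset.sum_congr rfl fun k _ => Finset.sum_congr rfl fun l _ => ?_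
      simp only [map_mul, map_pow, hconj, mul_pow, ← pow_mul]
      rw [mul_comm j k, mul_comm j l, map_inv₀, hconj, inv_inv]
      ring
    rw [Finset.sum_congr rfl e1, Finset.sum_comm]
    have e2 : ∀ k ∈ Finset.range n, ∑ j ∈ Finset.range n, ∑ l ∈ Finset.range n,
        (x ^ k * starRingEnd ℂ x ^ l) * (ω⁻¹ ^ k * ω ^ l) ^ j = n := by
      intro k hk
      rw [Finset.sum_comm, Finset.sum_eq_single k]
      · have : ω⁻¹ ^ k * ω ^ k = 1 := by rw [← mul_pow, inv_mul_cancel₀ hω0, one_pow]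
        have h2 : x ^ k * starRingEnd ℂ x ^ k = 1 := by rw [← mul_pow, hxc, one_pow]
        simp only [this, h2, one_pow, mul_one, Finset.sum_const, Finset.card_range, nsmul_eq_mul]
      · intro l hl hlk
        rw [← Finset.mul_sum]
        have hne : ω⁻¹ ^ k * ω ^ l ≠ 1 := by
          intro h
          apply hlk
          apply hω.pow_inj (Finset.mem_range.1 hl) (Finset.mem_range.1 hk)
          rw [inv_pow, inv_mul_eq_one₀ (pow_ne_zero _ hω0)] at h
          exact h.symm
        have h1 : (ω⁻¹ ^ k * ω ^ l) ^ n = 1 := by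
          rw [mul_pow, ← pow_mul, ← pow_mul, mul_comm k n, mul_comm l n, pow_mul, pow_mul, hω.pow_eq_one,
            inv_pow, hω.pow_eq_one]; simp
        rw [geom_sum_eq hne, h1]; simp
      · intro h; exact absurd hk h
    rw [Finset.sum_congr rfl e2]; simp [sq]
  rw [← Complex.ofReal_sum] at key
  exact_mod_cast key

/-- Discrete Fejér approximation of an approximately Hölder odd function on the unit circle by the
boundary values of an odd harmonic polynomial with bounded coefficients. -/
theorem fejer_approx {n : ℕ} (hn : n ≠ 0) {f : ℂ → ℝ} {K c θ : ℝ} (hK : 0 ≤ K) (hc : 0 ≤ c)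
    (hθ : 0 < θ)
    (hf1 : ∀ x, |f x| ≤ 1) (hodd : ∀ x, f (starRingEnd ℂ x) = - f x)
    (hf : ∀ x y, ‖x‖ = 1 → ‖y‖ = 1 → |f x - f y| ≤ K * √‖x - y‖ + c) :
    ∃ β : ℕ → ℝ, (∀ k, |β k| ≤ 2) ∧ ∀ x, ‖x‖ = 1 →
      |∑ k ∈ Finset.range n, β k * (x ^ k).im - f x| ≤ K * √θ + c + 8 / (n * θ ^ 2) := by
  obtain ⟨ω, hω⟩ : ∃ ω : ℂ, IsPrimitiveRoot ω n :=
    ⟨_, Complex.isPrimitiveRoot_exp n hn⟩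
  have hn0 : (0:ℝ) < n := by positivity
  have hωn : ∀ j, ‖ω ^ j‖ = 1 := fun j => by rw [norm_pow, hω.norm'_eq_one hn, one_pow]
  set F : ℕ → ℂ → ℝ := fun j x => ‖∑ k ∈ Finset.range n, (x * starRingEnd ℂ (ω ^ j)) ^ k‖ ^ 2 with hF
  have hyn : ∀ j x, ‖x‖ = 1 → ‖x * starRingEnd ℂ (ω ^ j)‖ = 1 := by
    intro j x hx; rw [norm_mul, hx, RCLike.norm_conj, hωn]; norm_num
  set h : ℂ → ℝ := fun x => (∑ j ∈ Finset.range n, f (ω ^ j) * F j x) / (n:ℝ) ^ 2 with hh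
  have happ : ∀ x, ‖x‖ = 1 → |h x - f x| ≤ K * √θ + c + 8 / (n * θ ^ 2) := by
    intro x hx
    have hm : ∑ j ∈ Finset.range n, F j x = (n:ℝ) ^ 2 := fejer_mass hn hω x hx
    have e1 : h x - f x = (∑ j ∈ Finset.range n, (f (ω ^ j) - f x) * F j x) / (n:ℝ) ^ 2 := by
      simp only [sub_mul, Finset.sum_sub_distrib, ← Finset.mul_sum, hm, hh]
      field_simp
    rw [e1, abs_div, abs_of_pos (by positivity : (0:ℝ) < (n:ℝ) ^ 2), div_le_iff₀ (by positivity)]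
    refine (Finset.abs_sum_le_sum_abs _ _).trans ?_
    have hterm : ∀ j ∈ Finset.range n, |(f (ω ^ j) - f x) * F j x|
        ≤ (K * √θ + c) * F j x + 8 / θ ^ 2 := by
      intro j _
      have hF0 : 0 ≤ F j x := by simp only [hF]; positivity
      rw [abs_mul, abs_of_nonneg hF0]
      rcases le_or_gt ‖ω ^ j - x‖ θ with hle | hgt
      · have a1 := hf (ω ^ j) x (hωn j) hx
        have a2 : √‖ω ^ j - x‖ ≤ √θ := Real.sqrt_le_sqrt hle
        have a3 : |f (ω ^ j) - f x| ≤ K * √θ + c := a1.trans (by gcongr)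
        have a4 : 0 ≤ 8 / θ ^ 2 := by positivity
        nlinarith
      · set y := x * starRingEnd ℂ (ω ^ j) with hy
        have hy1 : ‖y‖ = 1 := hyn j x hx
        have a1 : ‖y - 1‖ = ‖ω ^ j - x‖ := by
          have hc1 : ω ^ j * starRingEnd ℂ (ω ^ j) = 1 := by
            rw [Complex.mul_conj, Complex.normSq_eq_norm_sq, hωn]; simp
          have : y - 1 = (x - ω ^ j) * starRingEnd ℂ (ω ^ j) := by rw [sub_mul, hc1]
          rw [this, norm_mul, RCLike.norm_conj, hωn, mul_one, norm_sub_rev]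
        have a2 : ‖∑ k ∈ Finset.range n, y ^ k‖ * ‖y - 1‖ ≤ 2 := by
          rw [← norm_mul, geom_sum_mul]
          refine (norm_sub_le _ _).trans ?_
          rw [norm_pow, hy1]; norm_num
        have a3 : F j x * θ ^ 2 ≤ 4 := by
          have : ‖∑ k ∈ Finset.range n, y ^ k‖ * θ ≤ 2 := by
            rw [a1] at a2
            exact le_trans (by gcongr) a2
          have e : F j x * θ ^ 2 = (‖∑ k ∈ Finset.range n, y ^ k‖ * θ) ^ 2 := by
            simp only [hF, ← hy]; ring
          rw [e]
          have : 0 ≤ ‖∑ k ∈ Finset.range n, y ^ k‖ * θ := by positivity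
          nlinarith
        have a4 : |f (ω ^ j) - f x| ≤ 2 := by
          have b1 := abs_le.1 (hf1 (ω ^ j))
          have b2 := abs_le.1 (hf1 x)
          rw [abs_le]; constructor <;> linarith
        have a5 : F j x ≤ 4 / θ ^ 2 := by rw [le_div_iff₀ (by positivity)]; exact a3
        have a6 : 0 ≤ (K * √θ + c) * F j x := by positivity
        have a7 : |f (ω ^ j) - f x| * F j x ≤ 2 * (4 / θ ^ 2) := by gcongr
        have a8 : 2 * (4 / θ ^ 2) = 8 / θ ^ 2 := by ring
        linarith
    refine (Finset.sum_le_sum hterm).trans (le_of_eq ?_)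
    rw [Finset.sum_add_distrib, ← Finset.mul_sum, hm]
    simp only [Finset.sum_const, Finset.card_range, nsmul_eq_mul]
    field_simp
  refine ⟨fun k => if k < n then
    (2 * ((n:ℝ) - k) * ∑ j ∈ Finset.range n, f (ω ^ j) * ((ω ^ j) ^ k).im) / (n:ℝ) ^ 2 else 0, ?_, ?_⟩
  · intro k
    simp only
    split_ifs with hk
    · have hk' : (k:ℝ) < n := by exact_mod_cast hk
      rw [abs_div, abs_of_pos (by positivity : (0:ℝ) < (n:ℝ) ^ 2), div_le_iff₀ (by positivity), abs_mul,
        abs_of_pos (by linarith : 0 < 2 * ((n:ℝ) - k))]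
      have : |∑ j ∈ Finset.range n, f (ω ^ j) * ((ω ^ j) ^ k).im| ≤ n := by
        refine (Finset.abs_sum_le_sum_abs _ _).trans ?_
        have : ∀ j ∈ Finset.range n, |f (ω ^ j) * ((ω ^ j) ^ k).im| ≤ 1 := by
          intro j _
          rw [abs_mul]
          have b1 := hf1 (ω ^ j)
          have b2 : |((ω ^ j) ^ k).im| ≤ 1 := (Complex.abs_im_le_norm _).trans (by
            rw [norm_pow, hωn, one_pow])
          have := mul_le_mul b1 b2 (abs_nonneg _) (by norm_num)
          linarith
        refine (Finset.sum_le_sum this).trans (by simp)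
      have h2 : 2 * ((n:ℝ) - k) ≤ 2 * n := by
        have : (0:ℝ) ≤ k := by positivity
        linarith
      calc 2 * ((n:ℝ) - k) * _ ≤ (2 * n) * n := mul_le_mul h2 this (abs_nonneg _) (by positivity)
        _ = 2 * (n:ℝ)^2 := by ring
    · simp
  · intro x hx
    -- the odd part of the Fejér mean
    have hsym : ∑ k ∈ Finset.range n, (if k < n then
        (2 * ((n:ℝ) - k) * ∑ j ∈ Finset.range n, f (ω ^ j) * ((ω ^ j) ^ k).im) / (n:ℝ) ^ 2 else 0)
          * (x ^ k).im = (h x - h (starRingEnd ℂ x)) / 2 := by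
      have hx' : ‖starRingEnd ℂ x‖ = 1 := by simpa using hx
      have e1 : ∀ j, F j x - F j (starRingEnd ℂ x)
          = ∑ k ∈ Finset.range n, 4 * ((n:ℝ) - k) * ((x ^ k).im * ((ω ^ j) ^ k).im) := by
        intro j
        simp only [hF]
        rw [fejer_identity _ (hyn j x hx), fejer_identity _ (hyn j _ hx')]
        have : ∀ a b : ℝ, 2 * a - n - (2 * b - n) = 2 * (a - b) := by intros; ring
        rw [this, ← Finset.sum_sub_distrib, Finset.mul_sum]
        apply Finset.sum_congr rfl
        intro k _
        rw [mul_pow, mul_pow, ← map_pow, ← map_pow]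
        simp only [Complex.mul_re, Complex.conj_re, Complex.conj_im]
        ring
      have e2 : h x - h (starRingEnd ℂ x)
          = (∑ j ∈ Finset.range n, f (ω ^ j) * (F j x - F j (starRingEnd ℂ x))) / (n:ℝ) ^ 2 := by
        simp only [hh, mul_sub, Finset.sum_sub_distrib]; ring
      rw [e2]
      simp only [e1, Finset.mul_sum]
      rw [Finset.sum_comm, Finset.sum_div, Finset.sum_div]
      apply Finset.sum_congr rfl
      intro k hk
      rw [if_pos (Finset.mem_range.1 hk), Finset.sum_div, Finset.sum_mul, Finset.sum_div, Finset.sum_div]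
      apply Finset.sum_congr rfl
      intro j _
      ring
    simp only
    rw [hsym]
    have b1 := abs_le.1 (happ x hx)
    have b2 := abs_le.1 (happ (starRingEnd ℂ x) (by simpa using hx))
    rw [hodd] at b2
    rw [abs_le]; constructor <;> linarith

/-! ### Improvement of flatness -/

namespace Normalized
variable {δ : ℝ} {U : Set ℂ} {E : ℂ → ℝ}

open Classical in
/-- `E` on the part of the circle of radius `1/2` in the closed upper domain, rescaled to the unit
circle and extended by zero. -/
def half (U : Set ℂ) (E : ℂ → ℝ) (ζ : ℂ) : ℝ :=
  if 0 < ζ.im ∧ ζ / 2 ∈ closure U ∧ ‖ζ‖ = 1 then E (ζ / 2) else 0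

/-- The boundary datum on the circle inherits the approximate Hölder bound, including across the real
axis, where it is extended by zero. -/
theorem half_holder (h : Normalized δ U E) (hδ : 0 < δ) (hδ1 : δ ≤ 1/100) {x y : ℂ}
    (hx : ‖x‖ = 1) (hy : ‖y‖ = 1) : half U E x - half U E y ≤ 1000 * √‖x - y‖ + 27 * δ := by
  have hx2 : ‖x / 2‖ = 1/2 := by simp [hx]
  have hy2 : ‖y / 2‖ = 1/2 := by simp [hy]
  have hr0 := norm_nonneg (x - y)
  have hr2 : ‖x - y‖ ≤ 2 := (norm_sub_le _ _).trans (by linarith)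
  have hsq := Real.sq_sqrt hr0
  have hsq0 := Real.sqrt_nonneg ‖x - y‖
  have hlin : 25 * ‖x - y‖ ≤ 1000 * √‖x - y‖ := by nlinarith
  have him : |x.im - y.im| ≤ ‖x - y‖ := by simpa using Complex.abs_im_le_norm (x - y)
  have him' := abs_le.1 him
  have hdiv : ∀ a : ℂ, (a / 2).im = a.im / 2 := fun a => by
    rw [show (2:ℂ) = ((2:ℝ):ℂ) by norm_num, Complex.div_ofReal_im]
  have hnot : ∀ a : ℂ, ‖a‖ = 1 → ¬ (0 < a.im ∧ a / 2 ∈ closure U ∧ ‖a‖ = 1) → a.im ≤ 2 * δ := by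
    intro a ha hn
    by_contra hc
    push Not at hc
    apply hn
    refine ⟨by linarith, subset_closure (h.full _ (by simp [ha]; norm_num) ?_), ha⟩
    rw [hdiv]; linarith
  unfold half
  split_ifs with h1 h2 h2
  · have := h.holder hδ hδ1 h1.2.1 hx2.le h2.2.1 hy2.le
    have e : ‖x / 2 - y / 2‖ ≤ ‖x - y‖ := by
      rw [← sub_div, norm_div]; simp only [Complex.norm_ofNat]; linarith
    have := Real.sqrt_le_sqrt e
    linarith
  · have := h.upper_linear hδ hδ1 h1.2.1 (by rw [hx2]; norm_num)
    rw [hdiv] at this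
    have := hnot y hy h2
    linarith
  · have := (abs_le.1 (h.abs_linear hδ hδ1 h2.2.1 (by rw [hy2]; norm_num))).1
    rw [hdiv] at this
    have := hnot x hx h1
    linarith
  · linarith

theorem half_le (h : Normalized δ U E) (x : ℂ) : |half U E x| ≤ 1 := by
  unfold half
  split_ifs with h1
  · exact h.bdd _ h1.2.1 (by simp [h1.2.2]; norm_num)
  · simp

/-- Upper half of the comparison with a harmonic polynomial on the half disc of radius `1/2`. -/
theorem upper_compare (h : Normalized δ U E) (hδ : 0 < δ) (hδ1 : δ ≤ 1/100) {n : ℕ} {κ e : ℝ}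
    (hκ : 0 < κ) (he : 0 ≤ e) (hδκ : δ * (8 * (n:ℝ) ^ 3 + 4 * (n:ℝ) ^ 2 + 2 * κ + 1) < κ)
    {β : ℕ → ℝ} (hβ : ∀ k, |β k| ≤ 2)
    (happ : ∀ ζ : ℂ, ‖ζ‖ = 1 → 0 < ζ.im → ζ / 2 ∈ closure U →
      E (ζ / 2) ≤ ∑ k ∈ Finset.range n, β k * (ζ ^ k).im + e)
    {z : ℂ} (hz : z ∈ closure U) (hz1 : ‖z‖ < 1/2) :
    E z ≤ ∑ k ∈ Finset.range n, β k * ((2 * z) ^ k).im + e + (1 + 4 * (n:ℝ) ^ 2) * δ + κ := by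
  set P : ℂ → ℝ := fun ζ => ∑ k ∈ Finset.range n, β k * (ζ ^ k).im with hP
  have hPim : ∀ ζ : ℂ, ‖ζ‖ ≤ 1 → |P ζ| ≤ 2 * (n:ℝ) ^ 2 * |ζ.im| := by
    intro ζ hζ
    refine (Finset.abs_sum_le_sum_abs _ _).trans ?_
    have : ∀ k ∈ Finset.range n, |β k * (ζ ^ k).im| ≤ 2 * n * |ζ.im| := by
      intro k hk
      have hk' : (k:ℝ) ≤ n := by exact_mod_cast (Finset.mem_range.1 hk).le
      rw [abs_mul]
      have := abs_im_pow_le ζ hζ k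
      calc |β k| * |(ζ ^ k).im| ≤ 2 * (k * |ζ.im|) := mul_le_mul (hβ k) this (abs_nonneg _) (by norm_num)
        _ ≤ 2 * n * |ζ.im| := by nlinarith [abs_nonneg ζ.im]
    refine (Finset.sum_le_sum this).trans (le_of_eq ?_)
    simp; ring
  have hPjet : ∀ ζ : ℂ, ‖ζ‖ ≤ 1 → ∃ p q : ℂ, ‖p‖ ≤ 2 * (n:ℝ) ^ 2 ∧ ‖q‖ ≤ 2 * (n:ℝ) ^ 3 ∧ Jet P ζ p q 0 := by
    intro ζ hζ
    choose p q hp hq hj using fun k => jet_im_pow ζ hζ k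
    refine ⟨∑ k ∈ Finset.range n, (β k : ℂ) * p k, ∑ k ∈ Finset.range n, (β k : ℂ) * q k, ?_, ?_, ?_⟩
    · refine (norm_sum_le _ _).trans ?_
      have : ∀ k ∈ Finset.range n, ‖(β k : ℂ) * p k‖ ≤ 2 * n := by
        intro k hk
        have hk' : (k:ℝ) ≤ n := by exact_mod_cast (Finset.mem_range.1 hk).le
        rw [norm_mul, Complex.norm_real, Real.norm_eq_abs]
        exact mul_le_mul (hβ k) ((hp k).trans hk') (norm_nonneg _) (by norm_num)
      refine (Finset.sum_le_sum this).trans (le_of_eq ?_)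
      simp; ring
    · refine (norm_sum_le _ _).trans ?_
      have : ∀ k ∈ Finset.range n, ‖(β k : ℂ) * q k‖ ≤ 2 * (n:ℝ) ^ 2 := by
        intro k hk
        have hk' : (k:ℝ) ≤ n := by exact_mod_cast (Finset.mem_range.1 hk).le
        rw [norm_mul, Complex.norm_real, Real.norm_eq_abs]
        exact mul_le_mul (hβ k) ((hq k).trans (by gcongr)) (norm_nonneg _) (by norm_num)
      refine (Finset.sum_le_sum this).trans (le_of_eq ?_)
      simp; ring
    · have := Jet.sum (Finset.range n) (fun k _ => (hj k).const_mul (β k))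
      simpa using this
  -- Barrier: the harmonic polynomial plus constants, with `κ (1 - |x|²)` supplying a strict sign.
  set b : ℂ → ℝ := fun x => P (0 + 2 * x) + (e + (1 + 4 * (n:ℝ) ^ 2) * δ + κ * (1 - (x.re ^ 2 + x.im ^ 2)))
    with hb
  set V := U ∩ Metric.ball (0:ℂ) (1/2) with hV
  have hclV : closure V ⊆ closure U ∩ Metric.closedBall (0:ℂ) (1/2) := fun x hx =>
    ⟨closure_mono inter_subset_left hx,
      Metric.closure_ball_subset_closedBall (closure_mono inter_subset_right hx)⟩
  have hPc : Continuous P := by simp only [hP]; fun_prop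
  have hcmp := comparison (V := V) (w := E) (b := b) (h.isOpen.inter Metric.isOpen_ball)
    (Metric.isBounded_ball.subset inter_subset_right)
    (h.cont.mono fun x hx => ⟨(hclV hx).1,
      Metric.closedBall_subset_closedBall (by norm_num) (hclV hx).2⟩)
    (by apply Continuous.continuousOn; fun_prop) ?_ ?_ z
    (im_nonneg.closure_inter_open_nonempty_aux Metric.isOpen_ball hz (by simpa using hz1))
  · refine hcmp.trans ?_
    simp only [hb, zero_add]
    have : 0 ≤ z.re ^ 2 + z.im ^ 2 := by positivity
    nlinarith
  · intro x hx
    have h2x : ∀ x : ℂ, ‖2 * x‖ = 2 * ‖x‖ := fun x => by simp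
    have him2 : (2 * x).im = 2 * x.im := by simp
    rcases frontier_inter_ball_subset hx with ⟨h1, h2⟩ | ⟨h1, h2⟩
    · rw [mem_closedBall_zero_iff] at h2
      have k1 : ‖x‖ < 1 := by linarith
      have k2 := (abs_le.1 (h.bdry x h1 k1)).2
      have k3 := h.im_nonneg h1.1 k1
      have k4 := h.im_le (not_mem_of_frontier h.isOpen h1) k1
      have k5 := (abs_le.1 (hPim (2 * x) (by rw [h2x]; linarith))).1
      rw [him2, abs_of_nonneg (by linarith)] at k5
      have k6 : x.re ^ 2 + x.im ^ 2 ≤ 1 := by rw [← norm_sq_eq]; nlinarith [norm_nonneg x]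
      have k7 : 2 * (n:ℝ) ^ 2 * (2 * x.im) ≤ 4 * (n:ℝ) ^ 2 * δ := by nlinarith [sq_nonneg (n:ℝ)]
      simp only [hb, zero_add]
      nlinarith
    · rw [mem_sphere_zero_iff_norm] at h2
      have k1 : ‖x‖ < 1 := by linarith
      have k3 := h.im_nonneg h1 k1
      have k6 : x.re ^ 2 + x.im ^ 2 ≤ 1 := by rw [← norm_sq_eq, h2]; norm_num
      have k8 : 0 ≤ (n:ℝ) ^ 2 * δ := by positivity
      rcases k3.eq_or_lt with hi | hi
      · have k2 := h.upper_linear hδ hδ1 h1 (by rw [h2]; norm_num)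
        rw [← hi] at k2
        have k5 := (abs_le.1 (hPim (2 * x) (by rw [h2x, h2]; norm_num))).1
        rw [him2, ← hi] at k5
        simp only [mul_zero, abs_zero, neg_zero] at k5
        simp only [hb, zero_add]
        nlinarith
      · have k2 := happ (2 * x) (by rw [h2x, h2]; norm_num) (by rw [him2]; linarith)
          (by rw [mul_div_cancel_left₀ _ (by norm_num : (2:ℂ) ≠ 0)]; exact h1)
        rw [mul_div_cancel_left₀ _ (by norm_num : (2:ℂ) ≠ 0)] at k2
        simp only [hb, zero_add, hP] at k2 ⊢
        nlinarith
  · intro x hx _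
    have hx2 : ‖x‖ < 1/2 := by simpa using hx.2
    obtain ⟨p, q, s, j, hs⟩ := h.small x hx.1 (by linarith)
    obtain ⟨p', q', hp', hq', j'⟩ := hPjet (0 + 2 * x) (by simp; linarith)
    have jb : Jet (fun x : ℂ => e + (1 + 4 * (n:ℝ) ^ 2) * δ + κ * (1 - (x.re ^ 2 + x.im ^ 2))) x
        (-2 * κ * x) 0 (-2 * κ) := by
      apply Jet.of_exact
      intro k; simp only [lin, qf, Complex.add_re, Complex.add_im]; simp; ring
    refine ⟨p, q, _, _, s, _, j, j'.comp_affine.add jb, ?_⟩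
    intro hp hs'
    rw [add_zero, mul_zero, zero_add] at hs'
    have c2 : ‖(2:ℂ)‖ = 2 := by simp
    have n1 : ‖p‖ ≤ 4 * (n:ℝ) ^ 2 + κ := by
      rw [hp]
      refine (norm_add_le _ _).trans ?_
      rw [norm_mul, norm_mul, norm_mul, RCLike.norm_conj, Complex.norm_real, Real.norm_eq_abs, abs_of_pos hκ,
        norm_neg, c2]
      nlinarith
    have n2 : ‖q‖ ≤ ‖q - 2 ^ 2 * q'‖ + 8 * (n:ℝ) ^ 3 := by
      have := norm_add_le (q - 2 ^ 2 * q') (2 ^ 2 * q')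
      rw [sub_add_cancel, norm_mul, norm_pow, c2] at this
      linarith
    have n3 := norm_nonneg (q - 2 ^ 2 * q')
    have n5 : |s| = - s := abs_of_neg (by linarith)
    have n6 : |s| ≤ δ * (8 * (n:ℝ) ^ 3 + 4 * (n:ℝ) ^ 2 + 2 * κ + 1 + |s|) := hs.trans (mul_le_mul_of_nonneg_left (by linarith) hδ.le)
    nlinarith [abs_nonneg s]

end Normalized

/-- Improvement of flatness: an almost harmonic function, almost vanishing on an almost flat
boundary, is close to `a y + b · 2 x y` up to a cubic error. -/
theorem improvement (η : ℝ) (hη : 0 < η) : ∃ δ : ℝ, 0 < δ ∧ δ ≤ 1/100 ∧ ∀ (U : Set ℂ) (E : ℂ → ℝ),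
    Normalized δ U E → ∃ a b : ℝ, |a| ≤ 8 ∧ |b| ≤ 8 ∧ ∀ z ∈ closure U, ‖z‖ ≤ 1/4 →
      |E z - a * z.im - b * (z ^ 2).im| ≤ 32 * ‖z‖ ^ 3 + η := by
  -- the Fejér error is `2000 √θ + 54 δ + 8 / (n θ²)`
  obtain ⟨θ, hθ, hθ1⟩ : ∃ θ : ℝ, 0 < θ ∧ 2000 * √θ ≤ η / 8 := by
    refine ⟨(η / 16000) ^ 2, by positivity, ?_⟩
    rw [Real.sqrt_sq (by positivity)]; linarith
  obtain ⟨n, hn3, hn⟩ : ∃ n : ℕ, 3 ≤ n ∧ 8 / ((n:ℝ) * θ ^ 2) ≤ η / 8 := by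
    obtain ⟨m, hm⟩ := exists_nat_gt (64 / (η * θ ^ 2))
    refine ⟨m + 3, by omega, ?_⟩
    have : 64 < m * (η * θ ^ 2) := by rwa [div_lt_iff₀ (by positivity)] at hm
    rw [div_le_iff₀ (by positivity)]
    push_cast
    have h2 : 0 < η * θ ^ 2 := by positivity
    nlinarith
  set κ := η / 8 with hκ
  have hκ0 : 0 < κ := by positivity
  set M := 8 * (n:ℝ) ^ 3 + 4 * (n:ℝ) ^ 2 + 2 * κ + 1 with hM
  have hM0 : 0 < M := by positivity
  obtain ⟨δ, hδ, d1, d2, d3, d4⟩ : ∃ δ : ℝ, 0 < δ ∧ δ ≤ 1/100 ∧ δ * M < κ ∧ 54 * δ ≤ η / 8 ∧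
      (1 + 4 * (n:ℝ) ^ 2) * δ ≤ η / 8 := by
    refine ⟨min (1/100) (min (κ / (2 * M)) (min (η / 8 / 54) (η / 8 / (1 + 4 * (n:ℝ) ^ 2)))), by positivity,
      min_le_left _ _, ?_, ?_, ?_⟩
    · have : min (1/100) (min (κ / (2 * M)) (min (η / 8 / 54) (η / 8 / (1 + 4 * (n:ℝ) ^ 2)))) ≤ κ / (2 * M) :=
        (min_le_right _ _).trans (min_le_left _ _)
      rw [le_div_iff₀ (by positivity)] at this
      linarith
    · have : min (1/100) (min (κ / (2 * M)) (min (η / 8 / 54) (η / 8 / (1 + 4 * (n:ℝ) ^ 2)))) ≤ η / 8 / 54 :=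
        (min_le_right _ _).trans ((min_le_right _ _).trans (min_le_left _ _))
      linarith
    · have : min (1/100) (min (κ / (2 * M)) (min (η / 8 / 54) (η / 8 / (1 + 4 * (n:ℝ) ^ 2))))
          ≤ η / 8 / (1 + 4 * (n:ℝ) ^ 2) :=
        (min_le_right _ _).trans ((min_le_right _ _).trans (min_le_right _ _))
      rw [le_div_iff₀ (by positivity)] at this
      linarith
  refine ⟨δ, hδ, d1, ?_⟩
  intro U E h
  set f : ℂ → ℝ := fun ζ => Normalized.half U E ζ - Normalized.half U E (starRingEnd ℂ ζ) with hf
  have hhz : ∀ ζ : ℂ, ζ.im ≤ 0 → Normalized.half U E ζ = 0 := by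
    intro ζ hζ
    unfold Normalized.half
    rw [if_neg]; rintro ⟨h1, _⟩; linarith
  obtain ⟨β, hβ, happ⟩ := fejer_approx (n := n) (by omega) (f := f) (K := 2000) (c := 54 * δ) (θ := θ)
    (by norm_num) (by positivity) hθ (by
      intro x
      rcases le_total x.im 0 with hx | hx
      · simp only [hf, hhz x hx, zero_sub, abs_neg]; exact h.half_le _
      · have : Normalized.half U E (starRingEnd ℂ x) = 0 := hhz _ (by simpa using hx)
        simp only [hf, this, sub_zero]; exact h.half_le _)
    (by intro x; simp only [hf, Complex.conj_conj]; ring)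
    (by
      intro x y hx hy
      have a1 := h.half_holder hδ d1 hx hy
      have a2 := h.half_holder hδ d1 hy hx
      have hx' : ‖starRingEnd ℂ x‖ = 1 := by simpa using hx
      have hy' : ‖starRingEnd ℂ y‖ = 1 := by simpa using hy
      have a3 := h.half_holder hδ d1 hx' hy'
      have a4 := h.half_holder hδ d1 hy' hx'
      rw [norm_sub_rev] at a2 a4
      have e : ‖starRingEnd ℂ x - starRingEnd ℂ y‖ = ‖x - y‖ := by
        rw [← map_sub, RCLike.norm_conj]
      rw [e] at a3 a4
      simp only [hf]
      rw [abs_le]; constructor <;> linarith)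
  set e := 2000 * √θ + 54 * δ + 8 / ((n:ℝ) * θ ^ 2) with he
  have he0 : 0 ≤ e := by positivity
  have hfE : ∀ ζ : ℂ, ‖ζ‖ = 1 → 0 < ζ.im → ζ / 2 ∈ closure U → f ζ = E (ζ / 2) := by
    intro ζ h1 h2 h3
    simp only [hf]
    rw [hhz (starRingEnd ℂ ζ) (by simpa using h2.le), sub_zero, Normalized.half, if_pos ⟨h2, h3, h1⟩]
  have hcl : ∀ z ∈ closure U, ‖z‖ < 1/2 →
      |E z - ∑ k ∈ Finset.range n, β k * ((2 * z) ^ k).im| ≤ 5 / 8 * η := by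
    intro z hz hz1
    have b1 := h.upper_compare hδ d1 hκ0 he0 d2 hβ (fun ζ h1 h2 h3 => by
      have := (abs_le.1 (happ ζ h1)).1
      rw [hfE ζ h1 h2 h3] at this
      linarith) hz hz1
    have b2 := h.neg.upper_compare hδ d1 hκ0 he0 d2 (β := fun k => - β k) (by simpa using hβ)
      (fun ζ h1 h2 h3 => by
      have := (abs_le.1 (happ ζ h1)).2
      rw [hfE ζ h1 h2 h3] at this
      simp only [neg_mul, Finset.sum_neg_distrib]
      linarith) hz hz1
    simp only [neg_mul, Finset.sum_neg_distrib] at b2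
    rw [abs_le]; constructor <;> linarith
  refine ⟨2 * β 1, 4 * β 2, ?_, ?_, ?_⟩
  · rw [abs_mul, abs_two]; linarith [hβ 1]
  · rw [abs_mul, abs_of_pos (by norm_num : (0:ℝ) < 4)]; linarith [hβ 2]
  · intro z hz hz1
    have b1 := hcl z hz (by linarith)
    obtain ⟨m, rfl⟩ : ∃ m, n = m + 3 := ⟨n - 3, by omega⟩
    have e1 : ∑ k ∈ Finset.range (m + 3), β k * ((2 * z) ^ k).im
        = 2 * β 1 * z.im + 4 * β 2 * (z ^ 2).im + ∑ k ∈ Finset.range m, β (k + 3) * ((2 * z) ^ (k + 3)).im := by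
      rw [Finset.sum_range_succ', Finset.sum_range_succ', Finset.sum_range_succ']
      simp [sq]; ring
    have e2 : |∑ k ∈ Finset.range m, β (k + 3) * ((2 * z) ^ (k + 3)).im| ≤ 32 * ‖z‖ ^ 3 := by
      refine (Finset.abs_sum_le_sum_abs _ _).trans ?_
      have : ∀ k ∈ Finset.range m, |β (k + 3) * ((2 * z) ^ (k + 3)).im| ≤ 16 * ‖z‖ ^ 3 * (1/2) ^ k := by
        intro k _
        rw [abs_mul]
        have c1 : |((2 * z) ^ (k + 3)).im| ≤ (2 * ‖z‖) ^ (k + 3) := by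
          refine (Complex.abs_im_le_norm _).trans ?_
          rw [norm_pow, norm_mul]; simp
        have c2 : (2 * ‖z‖) ^ k ≤ (1/2) ^ k := by gcongr; linarith
        calc |β (k + 3)| * |((2 * z) ^ (k + 3)).im| ≤ 2 * (2 * ‖z‖) ^ (k + 3) :=
              mul_le_mul (hβ _) c1 (abs_nonneg _) (by norm_num)
          _ = 16 * ‖z‖ ^ 3 * (2 * ‖z‖) ^ k := by ring
          _ ≤ _ := by gcongr
      refine (Finset.sum_le_sum this).trans ?_
      rw [← Finset.mul_sum]
      have := sum_geometric_two_le m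
      nlinarith [pow_nonneg (norm_nonneg z) 3]
    rw [e1] at b1
    have b2 := abs_le.1 b1
    have b3 := abs_le.1 e2
    rw [abs_le]; constructor <;> linarith

/-! ### A priori bounds and closeness to the torsion function -/

/-- The constant mean curvature equation for `w = u / H` in terms of gradient `p` and Hessian
`qf s q`: `Δw + H² D²w[ip, ip] = 2 (1 + H² |p|²)^{3/2}`.  For `H = 0` it is `Δw = 2`. -/
def Eqn (H : ℝ) (p q : ℂ) (s : ℝ) : Prop :=
  2 * s + H ^ 2 * qf s q (Complex.I * p) = 2 * √(1 + H ^ 2 * ‖p‖ ^ 2) ^ 3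

/-- The rescaled Dirichlet problem: `w` is continuous up to the boundary, vanishes there, and solves
`Eqn H` in the sense of pointwise second order expansions. -/
structure SolC (H : ℝ) (Ω : Set ℂ) (w : ℂ → ℝ) : Prop where
  cont : ContinuousOn w (closure Ω)
  zero : ∀ z ∈ frontier Ω, w z = 0
  eqn : ∀ z ∈ Ω, ∃ p q s, Jet w z p q s ∧ Eqn H p q s

/-- A bounded open set inside the disc of radius `D` with a supporting line at each boundary
point. -/
structure Geo (Ω : Set ℂ) (D : ℝ) : Prop where
  isOpen : IsOpen Ω
  one_le : 1 ≤ D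
  bound : ∀ z ∈ closure Ω, ‖z‖ ≤ D
  supp : ∀ ξ ∈ frontier Ω, ∃ n : ℂ, ‖n‖ = 1 ∧ ∀ z ∈ Ω, 0 ≤ lin n (z - ξ)

theorem Geo.isBounded {Ω : Set ℂ} {D : ℝ} (g : Geo Ω D) : Bornology.IsBounded Ω :=
  (Metric.isBounded_closedBall (x := (0:ℂ)) (r := D)).subset fun z hz => by
    simpa using g.bound z (subset_closure hz)

theorem Geo.compact {Ω : Set ℂ} {D : ℝ} (g : Geo Ω D) : IsCompact (closure Ω) :=
  Metric.isCompact_of_isClosed_isBounded isClosed_closure g.isBounded.closure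

theorem qf_mono {s s' : ℝ} {q q' : ℂ} (h : s + ‖q - q'‖ ≤ s') (μ : ℂ) : qf s q μ ≤ qf s' q' μ := by
  have h1 := qf_le (s - s') (q - q') μ
  have e : qf (s - s') (q - q') μ = qf s q μ - qf s' q' μ := by simp [qf]; ring
  rw [e] at h1
  nlinarith [sq_nonneg ‖μ‖]

theorem qf_smul (s : ℝ) (q μ : ℂ) (c : ℝ) : qf s q (c * μ) = c ^ 2 * qf s q μ := by
  simp [qf]; ring

theorem qf_trace (s : ℝ) (q : ℂ) : qf s q 1 + qf s q Complex.I = 2 * s := by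
  simp [qf]; ring

theorem one_le_cube {t : ℝ} (ht : 0 ≤ t) : 1 ≤ √(1 + t) ^ 3 :=
  one_le_pow₀ (Real.one_le_sqrt.2 (by linarith))

theorem cube_le {t : ℝ} (ht : 0 ≤ t) (ht1 : t ≤ 1) : √(1 + t) ^ 3 ≤ 1 + 2 * t := by
  set a := √(1 + t) with ha
  have h1 : a ^ 2 = 1 + t := Real.sq_sqrt (by linarith)
  have h2 : 1 ≤ a := Real.one_le_sqrt.2 (by linarith)
  have h3 : t = a ^ 2 - 1 := by linarith
  rw [h3]
  nlinarith [mul_nonneg (sub_nonneg.2 h2) (by nlinarith : 0 ≤ 1 + a - a^2)]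

theorem cube_lip {t₁ t₂ : ℝ} (h1 : 0 ≤ t₁) (h2 : 0 ≤ t₂) (h3 : t₂ ≤ 1/2) {c : ℝ} (hc : 0 ≤ c)
    (h : t₂ - c ≤ t₁) : √(1 + t₂) ^ 3 - 2 * c ≤ √(1 + t₁) ^ 3 := by
  rcases le_total t₂ t₁ with h' | h'
  · have : √(1 + t₂) ^ 3 ≤ √(1 + t₁) ^ 3 := by gcongr
    linarith
  · set a := √(1 + t₁) with ha
    set b := √(1 + t₂) with hb
    have e1 : a ^ 2 = 1 + t₁ := Real.sq_sqrt (by linarith)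
    have e2 : b ^ 2 = 1 + t₂ := Real.sq_sqrt (by linarith)
    have a1 : 1 ≤ a := Real.one_le_sqrt.2 (by linarith)
    have ab : a ≤ b := Real.sqrt_le_sqrt (by linarith)
    have b1 : b ≤ 5/4 := by nlinarith
    have hc' : b ^ 2 - a ^ 2 ≤ c := by linarith
    have : b ^ 3 - a ^ 3 ≤ 2 * (b ^ 2 - a ^ 2) := by
      have : 0 ≤ (b - a) * (2 * (a + b) - (b ^ 2 + a * b + a ^ 2)) := by
        apply mul_nonneg (by linarith)
        nlinarith
      nlinarith
    linarith

theorem T2.le_of_lip {φ : ℝ → ℝ} {a b c : ℝ} (h : T2 φ a b)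
    (hu : ∀ᶠ t in 𝓝 (0:ℝ), φ t ≤ φ 0 + c * |t|) : a ≤ c := by
  by_contra hc
  push Not at hc
  have h1 : ∀ᶠ t in 𝓝 (0:ℝ), ‖φ t - φ 0 - a * t - b / 2 * t ^ 2‖ ≤ 1 * ‖t ^ 2‖ := h.def one_pos
  obtain ⟨r, hr, hb⟩ := Metric.eventually_nhds_iff.1 (h1.and hu)
  set M := |b / 2| + 1 with hM
  have hM0 : 0 < M := by positivity
  set τ := min (r/2) ((a - c) / (2 * M)) with hτ
  have hac : 0 < a - c := by linarith
  have hτ0 : 0 < τ := by positivity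
  have h3 : τ < r := lt_of_le_of_lt (min_le_left _ _) (by linarith)
  have h2 : τ * (2 * M) ≤ a - c := by
    have := min_le_right (r/2) ((a - c) / (2 * M))
    rwa [← hτ, le_div_iff₀ (by positivity)] at this
  obtain ⟨k1, k2⟩ := hb (y := τ) (by simpa [Real.dist_eq, abs_of_pos hτ0] using h3)
  rw [Real.norm_eq_abs, Real.norm_eq_abs, abs_of_nonneg (sq_nonneg τ)] at k1
  rw [abs_of_pos hτ0] at k2
  have k4 := neg_le_of_abs_le k1
  have h4 : -|b / 2| ≤ b / 2 := neg_abs_le _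
  nlinarith [mul_pos hτ0 hac, sq_nonneg τ]

section
variable {H D : ℝ} {Ω : Set ℂ} {w v : ℂ → ℝ}

/-- The maximum principle. -/
theorem SolC.nonpos (g : Geo Ω D) (h : SolC H Ω w) : ∀ z ∈ closure Ω, w z ≤ 0 := by
  apply comparison (b := fun _ => 0) g.isOpen g.isBounded h.cont continuousOn_const
    (fun z hz => (h.zero z hz).le)
  intro z hz _
  obtain ⟨p, q, s, j, he⟩ := h.eqn z hz
  refine ⟨p, q, 0, 0, s, 0, j, Jet.const 0 z, ?_⟩
  rintro rfl hs
  simp only [Eqn, mul_zero, norm_zero] at he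
  have : qf s q 0 = 0 := by simp [qf]
  rw [this] at he
  norm_num at he
  rw [he] at hs
  linarith [norm_nonneg (q - 0)]

theorem lin_sq (n h : ℂ) (hn : ‖n‖ = 1) : (lin n h) ^ 2 = qf (1/2) (starRingEnd ℂ n ^ 2 / 2) h := by
  have h1 : n.re ^ 2 + n.im ^ 2 = 1 := by rw [← norm_sq_eq, hn]; norm_num
  have e1 : (starRingEnd ℂ n ^ 2 / 2).re = (n.re ^ 2 - n.im ^ 2) / 2 := by
    rw [show (2:ℂ) = ((2:ℝ):ℂ) by norm_num, Complex.div_ofReal_re]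
    norm_num; simp [sq]
  have e2 : (starRingEnd ℂ n ^ 2 / 2).im = - n.re * n.im := by
    rw [show (2:ℂ) = ((2:ℝ):ℂ) by norm_num, Complex.div_ofReal_im]
    norm_num; simp [sq]; ring
  simp only [qf, e1, e2, lin]
  linear_combination (1/2 * (h.re^2+h.im^2)) * h1

/-- Boundary Lipschitz bound from the one-dimensional barrier on a slab. -/
theorem SolC.boundary_lip (g : Geo Ω D) (hH : 0 ≤ H) (hHD : H * D ≤ 1/100) (h : SolC H Ω w) {ξ : ℂ}
    (hξ : ξ ∈ frontier Ω) : ∀ z ∈ closure Ω, - w z ≤ 4 * D * ‖z - ξ‖ := by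
  have hD := g.one_le
  obtain ⟨n, hn, hsup⟩ := g.supp ξ hξ
  have hsup' : ∀ z ∈ closure Ω, 0 ≤ lin n (z - ξ) := by
    intro z hz
    have hc : IsClosed {z : ℂ | 0 ≤ lin n (z - ξ)} := by
      apply isClosed_le continuous_const
      unfold lin; fun_prop
    exact closure_minimal hsup hc hz
  have hlin : ∀ z ∈ closure Ω, lin n (z - ξ) ≤ 2 * D := by
    intro z hz
    have h1 := (abs_le.1 (lin_le n (z - ξ))).2
    have h2 := norm_sub_le z ξ
    have h3 := g.bound z hz
    have h4 := g.bound ξ hξ.1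
    rw [hn] at h1; linarith
  have hcmp := comparison (w := fun z => - w z)
    (b := fun z => 2 * (2 * D * lin n (z - ξ) - lin n (z - ξ) ^ 2))
    g.isOpen g.isBounded h.cont.neg (by
      apply Continuous.continuousOn; unfold lin; fun_prop) ?_ ?_
  · intro z hz
    have h1 := hcmp z hz
    have h2 := (abs_le.1 (lin_le n (z - ξ))).2
    rw [hn] at h2
    nlinarith [sq_nonneg (lin n (z - ξ))]
  · intro z hz
    have h1 := hsup' z hz.1
    have h2 := hlin z hz.1
    simp only [h.zero z hz]
    nlinarith
  · intro z hz _
    obtain ⟨p, q, s, j, he⟩ := h.eqn z hz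
    have hz' := subset_closure hz
    set y := lin n (z - ξ) with hy
    refine ⟨-p, -q, ((4 * D - 4 * y : ℝ) : ℂ) * n, -2 * starRingEnd ℂ n ^ 2, -s, -2, j.neg, ?_, ?_⟩
    · apply Jet.of_exact
      intro k
      have e1 : lin n (z + k - ξ) = y + lin n k := by rw [hy]; simp [lin]; ring
      have e2 := lin_sq n k hn
      have e3 : qf (-2) (-2 * starRingEnd ℂ n ^ 2) k = -4 * qf (1/2) (starRingEnd ℂ n ^ 2 / 2) k := by
        rw [qf_eq, qf_eq]
        have : -2 * starRingEnd ℂ n ^ 2 * k ^ 2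
          = ((-4 : ℝ) : ℂ) * (starRingEnd ℂ n ^ 2 / 2 * k ^ 2) := by push_cast; ring
        rw [this, Complex.re_ofReal_mul]; ring
      have e4 : lin (((4 * D - 4 * y : ℝ) : ℂ) * n) k = (4 * D - 4 * y) * lin n k := by
        simp only [lin, Complex.re_ofReal_mul, Complex.im_ofReal_mul]; ring
      rw [e1, e3, ← e2, e4]; ring
    · intro hp hs
      have y0 := hsup' z hz'
      have y1 := hlin z hz'
      have m := qf_mono hs (Complex.I * p)
      have hp' : p = ((4 * y - 4 * D : ℝ) : ℂ) * n := by
        rw [← neg_neg p, hp]; push_cast; ring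
      have e0 : lin n (Complex.I * p) = 0 := by
        rw [hp']; simp only [lin, Complex.mul_re, Complex.mul_im, Complex.I_re, Complex.I_im,
          Complex.ofReal_re, Complex.ofReal_im]; ring
      have e3 : qf (-2) (-2 * starRingEnd ℂ n ^ 2) (Complex.I * p) = 0 := by
        have : qf (-2) (-2 * starRingEnd ℂ n ^ 2) (Complex.I * p)
          = -4 * qf (1/2) (starRingEnd ℂ n ^ 2 / 2) (Complex.I * p) := by
          rw [qf_eq, qf_eq]
          have : -2 * starRingEnd ℂ n ^ 2 * (Complex.I * p) ^ 2
            = ((-4 : ℝ) : ℂ) * (starRingEnd ℂ n ^ 2 / 2 * (Complex.I * p) ^ 2) := by push_cast; ring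
          rw [this, Complex.re_ofReal_mul]; ring
        rw [this, ← lin_sq n _ hn, e0]; ring
      have e4 : qf (-s) (-q) (Complex.I * p) = - qf s q (Complex.I * p) := by simp [qf]; ring
      rw [e3, e4] at m
      have hpn : ‖p‖ ≤ 4 * D := by
        rw [hp', norm_mul, hn, Complex.norm_real, Real.norm_eq_abs, mul_one, abs_le]
        constructor <;> linarith
      have ht : H ^ 2 * ‖p‖ ^ 2 ≤ 1/4 := by
        have : H * ‖p‖ ≤ 4 * (H * D) := by nlinarith
        have h0 : 0 ≤ H * ‖p‖ := by positivity
        nlinarith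
      have hc := cube_le (by positivity : 0 ≤ H ^ 2 * ‖p‖ ^ 2) (by linarith)
      unfold Eqn at he
      have hs2 : 2 ≤ s := by linarith [norm_nonneg (-q - -2 * starRingEnd ℂ n ^ 2)]
      nlinarith [sq_nonneg H, mul_nonneg (sq_nonneg H) (by linarith : 0 ≤ qf s q (Complex.I * p))]

/-- Quadratic upper bound along a line for the smoothed norm `√(|z|² + τ²)`, the test function in the
proof of the Lipschitz bound. -/
theorem sqrt_smooth_le (z ζ : ℂ) {τ : ℝ} (hτ : 0 < τ) (t : ℝ) :
    √(‖z + t * ζ‖ ^ 2 + τ ^ 2) ≤ √(‖z‖ ^ 2 + τ ^ 2) + lin z ζ / √(‖z‖ ^ 2 + τ ^ 2) * t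
      + (‖ζ‖ ^ 2 / √(‖z‖ ^ 2 + τ ^ 2)) / 2 * t ^ 2 := by
  set W := √(‖z‖ ^ 2 + τ ^ 2) with hW
  have hW0 : 0 < W := Real.sqrt_pos.2 (by positivity)
  have hW2 : W ^ 2 = ‖z‖ ^ 2 + τ ^ 2 := Real.sq_sqrt (by positivity)
  set X := √(‖z + t * ζ‖ ^ 2 + τ ^ 2) with hX
  have hX2 : X ^ 2 = ‖z + t * ζ‖ ^ 2 + τ ^ 2 := Real.sq_sqrt (by positivity)
  have e : X ^ 2 = W ^ 2 + 2 * t * lin z ζ + t ^ 2 * ‖ζ‖ ^ 2 := by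
    rw [hX2, hW2]; simp only [norm_sq_eq, lin]; simp; ring
  have key : X ≤ W + (X ^ 2 - W ^ 2) / (2 * W) := by
    rw [← sub_le_iff_le_add', le_div_iff₀ (by positivity)]
    nlinarith [sq_nonneg (X - W)]
  refine key.trans (le_of_eq ?_)
  rw [e]; field_simp; ring

set_option maxHeartbeats 1000000 in
/-- Global Lipschitz bound, by doubling the variables; the term `ε |x|²` makes the second order
conditions at an interior maximum strict. -/
theorem SolC.lip (g : Geo Ω D) (hH : 0 ≤ H) (hHD : H * D ≤ 1/100) (h : SolC H Ω w) :
    ∀ x ∈ closure Ω, ∀ y ∈ closure Ω, w x - w y ≤ 4 * D * ‖x - y‖ := by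
  intro x₀ hx₀ y₀ hy₀
  by_contra hcon
  push Not at hcon
  have hD := g.one_le
  set L := 4 * D with hL
  have hL0 : 0 < L := by positivity
  set θ := w x₀ - w y₀ - L * ‖x₀ - y₀‖ with hθ
  have hθ0 : 0 < θ := by linarith
  set τ := θ / (4 * L) with hτ
  have hτ0 : 0 < τ := by positivity
  have hτL : L * τ = θ / 4 := by rw [hτ]; field_simp
  set ε := min (τ / L) (θ / (4 * D ^ 2)) with hε
  have hε0 : 0 < ε := by positivity
  have hε1 : ε * L ≤ τ := by
    have := min_le_left (τ / L) (θ / (4 * D ^ 2))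
    rwa [← hε, le_div_iff₀ hL0] at this
  have hε2 : ε * D ^ 2 ≤ θ / 4 := by
    have := min_le_right (τ / L) (θ / (4 * D ^ 2))
    rw [← hε, le_div_iff₀ (by positivity)] at this
    linarith
  obtain ⟨⟨x, y⟩, ⟨hx, hy⟩, hpos, hmax⟩ := exists_max_interior (g.compact.prod g.compact)
    (φ := fun P : ℂ × ℂ => w P.1 - w P.2 - L * √(‖P.1 - P.2‖ ^ 2 + τ ^ 2) + ε * ‖P.1‖ ^ 2)
    (x₁ := (x₀, y₀)) (c := θ / 2) (by
      apply ContinuousOn.add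
      · apply ContinuousOn.sub
        · exact (h.cont.comp continuousOn_fst fun P hP => hP.1).sub
            (h.cont.comp continuousOn_snd fun P hP => hP.2)
        · apply Continuous.continuousOn; fun_prop
      · apply Continuous.continuousOn; fun_prop)
    ⟨hx₀, hy₀⟩ (by
      have : √(‖x₀ - y₀‖ ^ 2 + τ ^ 2) ≤ ‖x₀ - y₀‖ + τ := by
        apply Real.sqrt_le_iff.2
        have := norm_nonneg (x₀ - y₀)
        constructor <;> nlinarith
      have h2 : 0 ≤ ε * ‖x₀‖ ^ 2 := by positivity
      simp only
      nlinarith)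
  simp only at hpos hx hy
  set z := x - y with hz
  set W := √(‖z‖ ^ 2 + τ ^ 2) with hW
  have hWz : ‖z‖ ≤ W := Real.le_sqrt_of_sq_le (by nlinarith)
  have hWτ : τ ≤ W := Real.le_sqrt_of_sq_le (by nlinarith [sq_nonneg ‖z‖])
  have hW0 : 0 < W := by linarith
  have hxD := g.bound x hx
  have hxε : ε * ‖x‖ ^ 2 ≤ θ / 4 := by
    have : ‖x‖ ^ 2 ≤ D ^ 2 := by gcongr
    nlinarith
  have hxΩ : x ∈ Ω := by
    by_contra hn
    have hf : x ∈ frontier Ω := ⟨hx, fun h' => hn (interior_subset h')⟩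
    have h1 := h.boundary_lip g hH hHD hf y hy
    rw [norm_sub_rev] at h1
    rw [h.zero x hf] at hpos
    nlinarith
  have hyΩ : y ∈ Ω := by
    by_contra hn
    have hf : y ∈ frontier Ω := ⟨hy, fun h' => hn (interior_subset h')⟩
    have h1 := h.nonpos g x hx
    rw [h.zero y hf] at hpos
    nlinarith
  obtain ⟨p, q, s, j, he⟩ := h.eqn x hxΩ
  obtain ⟨p', q', s', j', he'⟩ := h.eqn y hyΩ
  have gen : ∀ μ ν : ℂ, lin p μ - lin p' ν
        = L * (lin z (μ - ν) / W) - 2 * ε * lin x μ ∧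
      qf s q μ - qf s' q' ν ≤ L * (‖μ - ν‖ ^ 2 / W) - 2 * ε * ‖μ‖ ^ 2 := by
    intro μ ν
    have hT2 : T2 (fun t => w (x + t * μ) - w (y + t * ν)) (lin p μ - lin p' ν)
      (qf s q μ - qf s' q' ν) := by
      have := (j.line μ).add ((j'.line ν).const_mul (-1))
      simpa [sub_eq_add_neg] using this
    apply hT2.le_of_upper (C := 0)
    have ht : Tendsto (fun t : ℝ => (x + (t:ℂ) * μ, y + (t:ℂ) * ν)) (𝓝 0) (𝓝 (x, y)) := by
      have : Continuous (fun t : ℝ => (x + (t:ℂ) * μ, y + (t:ℂ) * ν)) := by fun_prop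
      simpa using this.tendsto 0
    filter_upwards [ht.eventually (prod_mem_nhds (g.isOpen.mem_nhds hxΩ) (g.isOpen.mem_nhds hyΩ))]
      with t hm
    have hmm := hmax _ ⟨subset_closure hm.1, subset_closure hm.2⟩
    have e1 : x + t * μ - (y + t * ν) = z + t * (μ - ν) := by rw [hz]; ring
    have e2 : ‖x + t * μ‖ ^ 2 = ‖x‖ ^ 2 + 2 * lin x μ * t + ‖μ‖ ^ 2 * t ^ 2 := by
      simp only [norm_sq_eq, lin]; simp; ring
    simp only [e1, e2] at hmm
    have h3 := mul_le_mul_of_nonneg_left (sqrt_smooth_le z (μ - ν) hτ0 t) hL0.le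
    simp only [Complex.ofReal_zero, zero_mul, add_zero]
    linarith
  have hp' : p' = ((L / W : ℝ) : ℂ) * z := by
    have h1 := (gen 0 1).1
    have h2 := (gen 0 Complex.I).1
    simp [lin] at h1 h2
    apply Complex.ext
    · have e : L / W * z.re = -(L * (-z.re / W)) := by ring
      simp; linarith
    · have e : L / W * z.im = -(L * (-z.im / W)) := by ring
      simp; linarith
  have hp : p = p' - ((2 * ε : ℝ) : ℂ) * x := by
    have h1 := (gen 1 1).1
    have h2 := (gen Complex.I Complex.I).1
    simp [lin] at h1 h2
    apply Complex.ext
    · simp; linarith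
    · simp; linarith
  have hp'n : ‖p'‖ ≤ L := by
    rw [hp', norm_mul, Complex.norm_real, Real.norm_eq_abs, abs_of_pos (by positivity), div_mul_eq_mul_div,
      div_le_iff₀ hW0]
    nlinarith
  have hpn : ‖p'‖ ^ 2 - 4 * ε * L * D ≤ ‖p‖ ^ 2 := by
    have e : ‖p‖ ^ 2 = ‖p'‖ ^ 2 - 4 * ε * lin p' x + 4 * ε ^ 2 * ‖x‖ ^ 2 := by
      rw [hp]; simp only [norm_sq_eq, lin]; simp; ring
    have h1 := (abs_le.1 (lin_le p' x)).2
    have h2 : ‖p'‖ * ‖x‖ ≤ L * D := mul_le_mul hp'n hxD (norm_nonneg _) hL0.le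
    rw [e]
    nlinarith [mul_nonneg (sq_nonneg ε) (sq_nonneg ‖x‖)]
  have g1 := (gen 1 1).2
  have g2 := (gen Complex.I Complex.I).2
  have g3 := (gen ((H:ℂ) * (Complex.I * p)) ((H:ℂ) * (Complex.I * p'))).2
  have e3 : (H:ℂ) * (Complex.I * p) - (H:ℂ) * (Complex.I * p') = ((- 2 * ε * H : ℝ) : ℂ) * (Complex.I * x) := by
    rw [hp]; push_cast; ring
  have e4 : ‖((-2*ε*H:ℝ):ℂ) * (Complex.I * x)‖^2 = (-2*ε*H)^2*‖x‖^2 := by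
    rw [norm_mul, mul_pow, Complex.norm_real, Real.norm_eq_abs, sq_abs]; simp
  rw [e3, qf_smul, qf_smul, e4] at g3
  simp only [sub_self, norm_zero, norm_one, Complex.norm_I] at g1 g2
  have hHD0 : 0 ≤ H * D := by positivity
  have hHD2 : H ^ 2 * D ^ 2 ≤ 1 / 10000 := by
    have := mul_le_mul hHD hHD hHD0 (by norm_num)
    linarith
  have hlast : L * ((-2 * ε * H) ^ 2 * ‖x‖ ^ 2 / W) ≤ ε := by
    rw [mul_div_assoc', div_le_iff₀ hW0]
    have a1 : ‖x‖ ^ 2 ≤ D ^ 2 := by gcongr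
    have a2 : H ^ 2 * ‖x‖ ^ 2 ≤ 1/10000 := (mul_le_mul_of_nonneg_left a1 (sq_nonneg H)).trans hHD2
    have a3 : L * ((-2 * ε * H) ^ 2 * ‖x‖ ^ 2) = 4 * (ε * L) * ε * (H ^ 2 * ‖x‖ ^ 2) := by ring
    rw [a3]
    have a4 : 4 * (ε * L) * ε * (H ^ 2 * ‖x‖ ^ 2) ≤ 4 * (ε * L) * ε * (1/10000) := by gcongr
    nlinarith
  have hn0 : 0 ≤ 2 * ε * (‖(H:ℂ) * (Complex.I * p)‖ ^ 2) := by positivity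
  have hcl := cube_lip (t₁ := H ^ 2 * ‖p‖ ^ 2) (t₂ := H ^ 2 * ‖p'‖ ^ 2) (by positivity) (by positivity)
    (by
      have : ‖p'‖ ^ 2 ≤ L ^ 2 := by gcongr
      have : H ^ 2 * ‖p'‖ ^ 2 ≤ H ^ 2 * L ^ 2 := by gcongr
      have e : H ^ 2 * L ^ 2 = 16 * (H ^ 2 * D ^ 2) := by rw [hL]; ring
      linarith)
    (c := H ^ 2 * (4 * ε * L * D)) (by positivity) (by
      have := mul_le_mul_of_nonneg_left hpn (sq_nonneg H)
      linarith)
  have hcs : H ^ 2 * (4 * ε * L * D) ≤ ε / 100 := by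
    have : H ^ 2 * (4 * ε * L * D) = 16 * ε * (H ^ 2 * D ^ 2) := by rw [hL]; ring
    have h5 := mul_le_mul_of_nonneg_left hHD2 (by positivity : 0 ≤ 16 * ε)
    rw [this]; linarith
  unfold Eqn at he he'
  have t1 := qf_trace s q
  have t2 := qf_trace s' q'
  norm_num at g1 g2
  linarith

theorem SolC.grad_le (g : Geo Ω D) (hH : 0 ≤ H) (hHD : H * D ≤ 1/100) (h : SolC H Ω w) {z p q : ℂ} {s : ℝ}
    (hz : z ∈ Ω) (j : Jet w z p q s) : ‖p‖ ≤ 4 * D := by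
  apply norm_le_of_lin
  intro μ
  apply (j.line μ).le_of_lip
  have ht : Tendsto (fun t : ℝ => z + (t:ℂ) * μ) (𝓝 0) (𝓝 z) := by
    have : Continuous (fun t : ℝ => z + (t:ℂ) * μ) := by fun_prop
    simpa using this.tendsto 0
  filter_upwards [ht.eventually (g.isOpen.mem_nhds hz)] with t hm
  have := h.lip g hH hHD _ (subset_closure hm) _ (subset_closure hz)
  rw [add_sub_cancel_left, norm_mul, Complex.norm_real, Real.norm_eq_abs] at this
  simp only [Complex.ofReal_zero, zero_mul, add_zero]
  linarith

/-- One-sided comparison of two functions with the same boundary values: it suffices that the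
quadratic correction `κ (D² - |z|²)` rules out contact. -/
theorem close_aux (g : Geo Ω D) {w v : ℂ → ℝ} {κ : ℝ} (hκ : 0 ≤ κ)
    (hw : ContinuousOn w (closure Ω)) (hv : ContinuousOn v (closure Ω))
    (hw0 : ∀ z ∈ frontier Ω, w z = 0) (hv0 : ∀ z ∈ frontier Ω, v z = 0)
    (heqn : ∀ z ∈ Ω, ∃ p q p' q' s s', Jet w z p q s ∧ Jet v z p' q' s' ∧
      (s + ‖q - q'‖ ≤ s' - 2 * κ → False)) : ∀ z ∈ closure Ω, w z ≤ v z + κ * D ^ 2 := by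
  have hcmp := comparison (w := w) (b := fun z => v z + κ * (D ^ 2 - (z.re ^ 2 + z.im ^ 2)))
    g.isOpen g.isBounded hw (hv.add (by apply Continuous.continuousOn; fun_prop)) ?_ ?_
  · intro z hz
    refine (hcmp z hz).trans ?_
    have : 0 ≤ z.re ^ 2 + z.im ^ 2 := by positivity
    nlinarith
  · intro z hz
    rw [hw0 z hz, hv0 z hz, ← norm_sq_eq]
    have h1 := g.bound z hz.1
    have : ‖z‖ ^ 2 ≤ D ^ 2 := by gcongr
    nlinarith
  · intro z hz _
    obtain ⟨p, q, p', q', s, s', j, j', hF⟩ := heqn z hz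
    have jb : Jet (fun x : ℂ => κ * (D ^ 2 - (x.re ^ 2 + x.im ^ 2))) z (-2 * κ * z) 0 (-2 * κ) := by
      apply Jet.of_exact
      intro k; simp only [lin, qf, Complex.add_re, Complex.add_im]; simp; ring
    refine ⟨p, q, _, _, s, _, j, j'.add jb, ?_⟩
    intro _ hs
    apply hF
    rw [add_zero] at hs; linarith

theorem small_t (hD : 1 ≤ D) (hH : 0 ≤ H) (hHD : H * D ≤ 1/100) {p : ℂ} (hp : ‖p‖ ≤ 4 * D) :
    H ^ 2 * ‖p‖ ^ 2 ≤ 16 * (H ^ 2 * D ^ 2) ∧ 16 * (H ^ 2 * D ^ 2) ≤ 1/100 := by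
  have h0 : 0 ≤ H * D := by positivity
  have : ‖p‖ ^ 2 ≤ (4 * D) ^ 2 := by gcongr
  constructor <;> nlinarith [sq_nonneg H]

/-- `w` is `O(H²)`-close to the torsion function when the latter is convex. -/
theorem SolC.close_of_convex_v (g : Geo Ω D) (hH : 0 < H) (hHD : H * D ≤ 1/100) (h : SolC H Ω w)
    (hv : SolC 0 Ω v) (hvc : ∀ z ∈ Ω, ∀ p q s, Jet v z p q s → ‖q‖ ≤ s) :
    ∀ z ∈ closure Ω, |w z - v z| ≤ 32 * H ^ 2 * D ^ 4 := by
  have hD := g.one_le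
  set κ := 32 * (H ^ 2 * D ^ 2) with hκ
  have hκ0 : 0 < κ := by positivity
  have hs1 : ∀ z ∈ Ω, ∃ p q, Jet v z p q 1 ∧ ‖q‖ ≤ 1 := by
    intro z hz
    obtain ⟨p, q, s, j, he⟩ := hv.eqn z hz
    have : s = 1 := by simp [Eqn] at he; exact he
    subst this
    exact ⟨p, q, j, hvc z hz _ _ _ j⟩
  have c1 := close_aux g hκ0.le h.cont hv.cont h.zero hv.zero (by
    intro z hz
    obtain ⟨p, q, s, j, he⟩ := h.eqn z hz
    obtain ⟨p', q', j', hq'⟩ := hs1 z hz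
    refine ⟨p, q, p', q', s, 1, j, j', fun hs => ?_⟩
    have hp := h.grad_le g hH.le hHD hz j
    have ht := small_t hD hH.le hHD hp
    have m := (qf_mono hs (Complex.I * p)).trans (qf_le _ _ _)
    have e : ‖Complex.I * p‖ = ‖p‖ := by simp
    rw [e] at m
    have hc := one_le_cube (by positivity : 0 ≤ H ^ 2 * ‖p‖ ^ 2)
    have n0 := norm_nonneg (q - q')
    have m2 : H ^ 2 * qf s q (Complex.I * p) ≤ H ^ 2 * (2 * ‖p‖ ^ 2) := by
      apply mul_le_mul_of_nonneg_left _ (sq_nonneg H)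
      refine m.trans ?_
      nlinarith [sq_nonneg ‖p‖]
    unfold Eqn at he
    linarith)
  have c2 := close_aux g hκ0.le hv.cont h.cont hv.zero h.zero (by
    intro z hz
    obtain ⟨p, q, s, j, he⟩ := h.eqn z hz
    obtain ⟨p', q', j', hq'⟩ := hs1 z hz
    refine ⟨p', q', p, q, 1, s, j', j, fun hs => ?_⟩
    have hp := h.grad_le g hH.le hHD hz j
    have ht := small_t hD hH.le hHD hp
    have hs' : 1 + 2 * κ + ‖q' - q‖ ≤ s := by linarith
    have m := (le_qf _ _ _).trans (qf_mono hs' (Complex.I * p))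
    have hc := cube_le (by positivity : 0 ≤ H ^ 2 * ‖p‖ ^ 2) (by linarith)
    have n0 := norm_nonneg (q' - q)
    have m2 : 0 ≤ H ^ 2 * qf s q (Complex.I * p) := by
      apply mul_nonneg (sq_nonneg H)
      refine le_trans ?_ m
      apply mul_nonneg _ (sq_nonneg _)
      linarith
    unfold Eqn at he
    linarith)
  intro z hz
  have h1 := c1 z hz
  have h2 := c2 z hz
  have e : κ * D ^ 2 = 32 * H ^ 2 * D ^ 4 := by rw [hκ]; ring
  rw [abs_le]; constructor <;> linarith

/-- `w` is `O(H²)`-close to the torsion function when `w` is convex. -/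
theorem SolC.close_of_convex_w (g : Geo Ω D) (hH : 0 < H) (hHD : H * D ≤ 1/100) (h : SolC H Ω w)
    (hv : SolC 0 Ω v) (hwc : ∀ z ∈ Ω, ∀ p q s, Jet w z p q s → ‖q‖ ≤ s) :
    ∀ z ∈ closure Ω, |w z - v z| ≤ 32 * H ^ 2 * D ^ 4 := by
  have hD := g.one_le
  set κ := 32 * (H ^ 2 * D ^ 2) with hκ
  have hκ0 : 0 < κ := by positivity
  have hs1 : ∀ z ∈ Ω, ∃ p q, Jet v z p q 1 := by
    intro z hz
    obtain ⟨p, q, s, j, he⟩ := hv.eqn z hz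
    have : s = 1 := by simp [Eqn] at he; exact he
    subst this
    exact ⟨p, q, j⟩
  have hb : ∀ z ∈ Ω, ∃ p q s, Jet w z p q s ∧ 1 ≤ s ∧ s ≤ 1 + κ := by
    intro z hz
    obtain ⟨p, q, s, j, he⟩ := h.eqn z hz
    have hq := hwc z hz _ _ _ j
    have hp := h.grad_le g hH.le hHD hz j
    have ht := small_t hD hH.le hHD hp
    have e : ‖Complex.I * p‖ = ‖p‖ := by simp
    have m1 := le_qf s q (Complex.I * p)
    have m2 := qf_le s q (Complex.I * p)
    rw [e] at m1 m2
    set t := H ^ 2 * ‖p‖ ^ 2 with htdef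
    have ht0 : 0 ≤ t := by positivity
    have hc := cube_le ht0 (by linarith)
    have n0 := norm_nonneg q
    have k1 : 0 ≤ H ^ 2 * qf s q (Complex.I * p) :=
      mul_nonneg (sq_nonneg H) (le_trans (by nlinarith [sq_nonneg ‖p‖]) m1)
    have k2 : H ^ 2 * qf s q (Complex.I * p) ≤ 2 * s * t := by
      have : H ^ 2 * qf s q (Complex.I * p) ≤ H ^ 2 * (2 * s * ‖p‖ ^ 2) := by
        apply mul_le_mul_of_nonneg_left _ (sq_nonneg H)
        nlinarith [sq_nonneg ‖p‖]
      rw [htdef]; linarith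
    unfold Eqn at he
    refine ⟨p, q, s, j, ?_, by linarith⟩
    have h1 : 1 + t ≤ √(1 + t) ^ 3 := by
      have a1 : 1 ≤ √(1 + t) := Real.one_le_sqrt.2 (by linarith)
      have a2 : √(1 + t) ^ 2 = 1 + t := Real.sq_sqrt (by linarith)
      calc 1 + t = √(1 + t) ^ 2 := a2.symm
        _ ≤ _ := pow_le_pow_right₀ a1 (by norm_num)
    nlinarith
  have c1 := close_aux g hκ0.le h.cont hv.cont h.zero hv.zero (by
    intro z hz
    obtain ⟨p, q, s, j, b1, b2⟩ := hb z hz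
    obtain ⟨p', q', j'⟩ := hs1 z hz
    exact ⟨p, q, p', q', s, 1, j, j', fun hs => by linarith [norm_nonneg (q - q')]⟩)
  have c2 := close_aux g hκ0.le hv.cont h.cont hv.zero h.zero (by
    intro z hz
    obtain ⟨p, q, s, j, b1, b2⟩ := hb z hz
    obtain ⟨p', q', j'⟩ := hs1 z hz
    exact ⟨p', q', p, q, 1, s, j', j, fun hs => by linarith [norm_nonneg (q' - q)]⟩)
  intro z hz
  have h1 := c1 z hz
  have h2 := c2 z hz
  have e : κ * D ^ 2 = 32 * H ^ 2 * D ^ 4 := by rw [hκ]; ring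
  rw [abs_le]; constructor <;> linarith

end

/-! ### The quadratic model at a boundary point -/

theorem cube_lip_abs {t₁ t₂ : ℝ} (h1 : 0 ≤ t₁) (h2 : 0 ≤ t₂) (h3 : t₁ ≤ 1/2) (h4 : t₂ ≤ 1/2) :
    |√(1 + t₁) ^ 3 - √(1 + t₂) ^ 3| ≤ 2 * |t₁ - t₂| := by
  have a1 := cube_lip h1 h2 h4 (abs_nonneg (t₁ - t₂)) (by linarith [neg_abs_le (t₁ - t₂)])
  have a2 := cube_lip h2 h1 h3 (abs_nonneg (t₁ - t₂)) (by linarith [le_abs_self (t₁ - t₂)])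
  rw [abs_le]; constructor <;> linarith

theorem qf_sub_le (s : ℝ) (q u v : ℂ) :
    |qf s q u - qf s q v| ≤ (|s| + ‖q‖) * (‖u‖ + ‖v‖) * ‖u - v‖ := by
  have e : qf s q u - qf s q v = s * lin (u + v) (u - v) + (q * (u + v) * (u - v)).re := by
    simp [qf, lin]; ring
  rw [e]
  have h1 : |s * lin (u + v) (u - v)| ≤ |s| * (‖u + v‖ * ‖u - v‖) := by
    rw [abs_mul]; gcongr; exact lin_le _ _
  have h2 : |(q * (u + v) * (u - v)).re| ≤ ‖q‖ * (‖u + v‖ * ‖u - v‖) := by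
    refine (Complex.abs_re_le_norm _).trans ?_
    rw [norm_mul, norm_mul, mul_assoc]
  have h3 := norm_add_le u v
  calc _ ≤ |s * lin (u + v) (u - v)| + |(q * (u + v) * (u - v)).re| := abs_add_le _ _
    _ ≤ (|s| + ‖q‖) * (‖u + v‖ * ‖u - v‖) := by linarith
    _ ≤ (|s| + ‖q‖) * ((‖u‖ + ‖v‖) * ‖u - v‖) := by gcongr
    _ = _ := by ring

/-- Two jets satisfying the equation with gradients `p`, `p₀`: the traces differ by little, because
every deviation of the equation from `Δ = 2` carries a factor `H²`. -/
theorem eqn_diff {H K s s₀ : ℝ} {p q p₀ q₀ : ℂ} (hH : 0 ≤ H) (hK : 1 ≤ K) (hHK : H * K ≤ 1/10)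
    (h : Eqn H p q s) (h₀ : Eqn H p₀ q₀ s₀) (hp : ‖p‖ ≤ K) (hp₀ : ‖p₀‖ ≤ K)
    (hq₀ : |s₀| + ‖q₀‖ ≤ K) :
    |s - s₀| ≤ H ^ 2 * K ^ 2 * (‖q - q₀‖ + 10 * ‖p - p₀‖) := by
  unfold Eqn at h h₀
  set dp := ‖p - p₀‖ with hdp
  have hdp0 : 0 ≤ dp := norm_nonneg _
  have hHK2 : H ^ 2 * K ^ 2 ≤ 1/100 := by
    have h0 : 0 ≤ H * K := by positivity
    nlinarith
  have hpk : ‖p‖ ^ 2 ≤ K ^ 2 := by gcongr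
  have hpk₀ : ‖p₀‖ ^ 2 ≤ K ^ 2 := by gcongr
  have t1 : H ^ 2 * ‖p‖ ^ 2 ≤ 1/2 := by nlinarith [sq_nonneg H]
  have t2 : H ^ 2 * ‖p₀‖ ^ 2 ≤ 1/2 := by nlinarith [sq_nonneg H]
  have c1 := cube_lip_abs (by positivity) (by positivity) t1 t2
  have c2 : |‖p‖ - ‖p₀‖| ≤ dp := abs_norm_sub_norm_le p p₀
  have c3 : |H ^ 2 * ‖p‖ ^ 2 - H ^ 2 * ‖p₀‖ ^ 2| ≤ 2 * H ^ 2 * K * dp := by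
    have : H ^ 2 * ‖p‖ ^ 2 - H ^ 2 * ‖p₀‖ ^ 2 = H ^ 2 * (‖p‖ + ‖p₀‖) * (‖p‖ - ‖p₀‖) := by ring
    rw [this, abs_mul, abs_of_nonneg (by positivity)]
    calc _ ≤ H ^ 2 * (K + K) * dp := by gcongr
      _ = _ := by ring
  have c4 : 2 * H ^ 2 * K * dp ≤ 2 * H ^ 2 * K ^ 2 * dp := by
    have : K ≤ K ^ 2 := by nlinarith
    gcongr
  have d1 := qf_sub_le s₀ q₀ (Complex.I * p) (Complex.I * p₀)
  rw [← mul_sub, norm_mul, norm_mul, norm_mul, Complex.norm_I, one_mul, one_mul, one_mul, ← hdp] at d1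
  have d2 : (|s₀| + ‖q₀‖) * (‖p‖ + ‖p₀‖) * dp ≤ K * (K + K) * dp := by gcongr
  have d3 := qf_abs_le (s - s₀) (q - q₀) (Complex.I * p)
  rw [norm_mul, Complex.norm_I, one_mul] at d3
  have d4 : (|s - s₀| + ‖q - q₀‖) * ‖p‖ ^ 2 ≤ (|s - s₀| + ‖q - q₀‖) * K ^ 2 := by gcongr
  have e1 : qf (s - s₀) (q - q₀) (Complex.I * p) =
      qf s q (Complex.I * p) - qf s₀ q₀ (Complex.I * p) := by simp [qf]; ring
  have e2 : 2 * (s - s₀) = - (H ^ 2 * qf (s - s₀) (q - q₀) (Complex.I * p))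
      - H ^ 2 * (qf s₀ q₀ (Complex.I * p) - qf s₀ q₀ (Complex.I * p₀))
      + 2 * (√(1 + H ^ 2 * ‖p‖ ^ 2) ^ 3 - √(1 + H ^ 2 * ‖p₀‖ ^ 2) ^ 3) := by
    rw [e1]; linarith
  have f1 : |H ^ 2 * qf (s - s₀) (q - q₀) (Complex.I * p)| ≤
      H ^ 2 * ((|s - s₀| + ‖q - q₀‖) * K ^ 2) := by
    rw [abs_mul, abs_of_nonneg (sq_nonneg H)]; gcongr; exact d3.trans d4
  have f2 : |H ^ 2 * (qf s₀ q₀ (Complex.I * p) - qf s₀ q₀ (Complex.I * p₀))| ≤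
      H ^ 2 * (K * (K + K) * dp) := by
    rw [abs_mul, abs_of_nonneg (sq_nonneg H)]; gcongr; exact d1.trans d2
  have f3 : |2 * (s - s₀)| = 2 * |s - s₀| := by rw [abs_mul]; norm_num
  have f4 : 2 * |s - s₀| ≤ H ^ 2 * ((|s - s₀| + ‖q - q₀‖) * K ^ 2) + H ^ 2 * (K * (K + K) * dp)
      + 2 * (2 * (2 * H ^ 2 * K ^ 2 * dp)) := by
    have c5 := c1.trans (mul_le_mul_of_nonneg_left (c3.trans c4) zero_le_two)
    rw [← f3, e2]
    rw [abs_le] at f1 f2 c5 ⊢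
    constructor <;> linarith [f1.1, f1.2, f2.1, f2.2, c5.1, c5.2]
  have f5 : H ^ 2 * K ^ 2 * |s - s₀| ≤ 1/100 * |s - s₀| := by gcongr
  have f6 : 0 ≤ H ^ 2 * K ^ 2 * ‖q - q₀‖ := by positivity
  have f7 : 0 ≤ |s - s₀| := abs_nonneg _
  nlinarith

/-- The coefficient of `y²` making the quadratic model compatible with the equation at the origin. -/
def Nf (H s₀ : ℝ) (q₀ : ℂ) (a : ℝ) : ℝ :=
  √(1 + H ^ 2 * a ^ 2) ^ 3 - a * s₀ - H ^ 2 * a ^ 3 * (s₀ + q₀.re) / 2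

/-- The quadratic model at a boundary point: `a` times the defining polynomial
`y + qf s₀ q₀ / 2` of the boundary, plus `(N(a) y + b x) y`. -/
def mdl (H s₀ : ℝ) (q₀ : ℂ) (a b : ℝ) (z : ℂ) : ℝ :=
  a * (z.im + qf s₀ q₀ z / 2) + (Nf H s₀ q₀ a * z.im + b * z.re) * z.im

/-- Half the Laplacian of the model. -/
def mS (H s₀ : ℝ) (q₀ : ℂ) (a : ℝ) : ℝ := a * s₀ + Nf H s₀ q₀ a

/-- The trace-free part of the Hessian of the model. -/
def mQ (H s₀ : ℝ) (q₀ : ℂ) (a b : ℝ) : ℂ := a * q₀ - (Nf H s₀ q₀ a : ℝ) - (b : ℂ) * Complex.I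

theorem mdl_eq (H s₀ : ℝ) (q₀ : ℂ) (a b : ℝ) (z : ℂ) : mdl H s₀ q₀ a b z =
    lin (a * Complex.I) z + qf (mS H s₀ q₀ a) (mQ H s₀ q₀ a b) z / 2 := by
  simp [mdl, mS, mQ, lin, qf]; ring

theorem quad_jet (p q : ℂ) (s : ℝ) (x : ℂ) :
    Jet (fun z => lin p z + qf s q z / 2) x (p + (s * x + starRingEnd ℂ (q * x))) q s := by
  apply Jet.of_exact
  intro k
  simp [lin, qf]; ring

/-- The model satisfies the equation at the origin. -/
theorem Nf_eqn (H s₀ : ℝ) (q₀ : ℂ) (a b : ℝ) :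
    Eqn H (a * Complex.I) (mQ H s₀ q₀ a b) (mS H s₀ q₀ a) := by
  unfold Eqn
  have e : ‖(a:ℂ) * Complex.I‖ ^ 2 = a ^ 2 := by simp
  rw [e]
  have e2 : Complex.I * ((a:ℂ) * Complex.I) = ((-a : ℝ) : ℂ) := by
    push_cast; linear_combination (a:ℂ) * Complex.I_sq
  rw [e2]
  have e3 : qf (mS H s₀ q₀ a) (mQ H s₀ q₀ a b) ((-a : ℝ) : ℂ) = a ^ 3 * (s₀ + q₀.re) := by
    simp [qf, mS, mQ]; ring
  rw [e3]
  simp only [mS, Nf]; ring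

theorem Nf_lip {H s₀ G A : ℝ} {q₀ : ℂ} {a a' : ℝ} (hG : 1 ≤ G) (hs : |s₀| ≤ G) (hq : ‖q₀‖ ≤ G)
    (hH : 0 ≤ H) (hH1 : H ≤ 1) (hA : H * A ≤ 1/2) (ha : |a| ≤ A) (ha' : |a'| ≤ A) :
    |Nf H s₀ q₀ a - Nf H s₀ q₀ a'| ≤ 4 * G * |a - a'| := by
  have hA0 : 0 ≤ A := (abs_nonneg _).trans ha
  have hHA0 : 0 ≤ H * A := by positivity
  have hHA : H ^ 2 * A ^ 2 ≤ 1/4 := by nlinarith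
  have hsq : a ^ 2 ≤ A ^ 2 := sq_le_sq' (by linarith [neg_abs_le a]) (by linarith [le_abs_self a])
  have hsq' : a' ^ 2 ≤ A ^ 2 := sq_le_sq' (by linarith [neg_abs_le a']) (by linarith [le_abs_self a'])
  have t1 : H ^ 2 * a ^ 2 ≤ 1/2 := by nlinarith [sq_nonneg H]
  have t2 : H ^ 2 * a' ^ 2 ≤ 1/2 := by nlinarith [sq_nonneg H]
  have c1 := cube_lip_abs (by positivity) (by positivity) t1 t2
  set d := |a - a'| with hd
  have hd0 : 0 ≤ d := abs_nonneg _
  have c2 : |H ^ 2 * a ^ 2 - H ^ 2 * a' ^ 2| ≤ d := by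
    have : H ^ 2 * a ^ 2 - H ^ 2 * a' ^ 2 = H ^ 2 * (a + a') * (a - a') := by ring
    rw [this, abs_mul, abs_mul, abs_of_nonneg (sq_nonneg H)]
    have h1 : |a + a'| ≤ 2 * A := (abs_add_le _ _).trans (by linarith)
    calc _ ≤ H ^ 2 * (2 * A) * d := by gcongr
      _ = (2 * (H * A)) * H * d := by ring
      _ ≤ (2 * (1/2)) * 1 * d := by gcongr
      _ = d := by ring
  have hsq0 : |s₀ + q₀.re| ≤ 2 * G :=
    (abs_add_le _ _).trans (by linarith [Complex.abs_re_le_norm q₀])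
  have c3 : |H ^ 2 * (s₀ + q₀.re) / 2 * (a ^ 3 - a' ^ 3)| ≤ G * d := by
    have : H ^ 2 * (s₀ + q₀.re) / 2 * (a ^ 3 - a' ^ 3) =
      (s₀ + q₀.re) / 2 * (H ^ 2 * (a ^ 2 + a * a' + a' ^ 2)) * (a - a') := by ring
    rw [this, abs_mul, abs_mul]
    have h0 : 0 ≤ a ^ 2 + a * a' + a' ^ 2 := by nlinarith [sq_nonneg (a + a')]
    have h1 : a ^ 2 + a * a' + a' ^ 2 ≤ 3 * A ^ 2 := by nlinarith [sq_nonneg (a - a')]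
    have h2 : |H ^ 2 * (a ^ 2 + a * a' + a' ^ 2)| ≤ 1 := by
      rw [abs_of_nonneg (by positivity)]; nlinarith [sq_nonneg H]
    have h3 : |(s₀ + q₀.re) / 2| ≤ G := by
      rw [abs_div]; norm_num; linarith
    calc _ ≤ G * 1 * d := by gcongr
      _ = _ := by ring
  have c4 : |(a - a') * s₀| ≤ d * G := by rw [abs_mul]; gcongr
  have e : Nf H s₀ q₀ a - Nf H s₀ q₀ a' = (√(1 + H ^ 2 * a ^ 2) ^ 3 - √(1 + H ^ 2 * a' ^ 2) ^ 3)
      - (a - a') * s₀ - H ^ 2 * (s₀ + q₀.re) / 2 * (a ^ 3 - a' ^ 3) := by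
    simp only [Nf]; ring
  have c5 := c1.trans (mul_le_mul_of_nonneg_left c2 zero_le_two)
  rw [e]
  rw [abs_le] at c3 c4 c5 ⊢
  have : d ≤ G * d := by nlinarith
  constructor <;> linarith [c5.1, c5.2, c3.1, c3.2, c4.1, c4.2]

theorem Nf_le {H s₀ G A : ℝ} {q₀ : ℂ} {a : ℝ} (hG : 1 ≤ G) (hs : |s₀| ≤ G) (hq : ‖q₀‖ ≤ G)
    (hH : 0 ≤ H) (hH1 : H ≤ 1) (hA : H * A ≤ 1/2) (ha : |a| ≤ A) :
    |Nf H s₀ q₀ a| ≤ 1 + 4 * G * A := by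
  have h1 := Nf_lip hG hs hq hH hH1 hA ha (a' := 0) (by simpa using (abs_nonneg _).trans ha)
  have e : Nf H s₀ q₀ 0 = 1 := by simp [Nf]
  rw [e, sub_zero] at h1
  have h2 : 4 * G * |a| ≤ 4 * G * A := by gcongr
  rw [abs_le] at h1 ⊢
  constructor <;> linarith [h1.1, h1.2]

/-! ### The boundary iteration -/

theorem model_coef {G L r₀ H s₀ a b : ℝ} {q₀ : ℂ} (hG : 1 ≤ G) (hL : 1 ≤ L) (hr₀ : 0 < r₀)
    (hr₁ : r₀ ≤ 1) (hH : 0 ≤ H) (hH1 : H ≤ 1) (hHL : H * (16 * L) ≤ 1/2)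
    (hs : |s₀| ≤ G) (hq : ‖q₀‖ ≤ G) (ha : |a| ≤ 16 * L) (hb : |b| ≤ 32 * L / r₀) :
    |mS H s₀ q₀ a| + ‖mQ H s₀ q₀ a b‖ ≤ 400 * G * L / r₀ := by
  have hN := Nf_le hG hs hq hH hH1 hHL ha
  have hGL : 1 ≤ G * L := by nlinarith
  have h1 : |mS H s₀ q₀ a| ≤ 16 * L * G + (1 + 4 * G * (16 * L)) := by
    unfold mS
    refine (abs_add_le _ _).trans (add_le_add ?_ hN)
    rw [abs_mul]; gcongr
  have h2 : ‖mQ H s₀ q₀ a b‖ ≤ 16 * L * G + (1 + 4 * G * (16 * L)) + 32 * L / r₀ := by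
    unfold mQ
    refine (norm_sub_le _ _).trans (add_le_add ((norm_sub_le _ _).trans (add_le_add ?_ ?_)) ?_)
    · rw [norm_mul, Complex.norm_real, Real.norm_eq_abs]; gcongr
    · rw [Complex.norm_real, Real.norm_eq_abs]; exact hN
    · rw [norm_mul, Complex.norm_real, Real.norm_eq_abs, Complex.norm_I, mul_one]; exact hb
  have h3 : G * L ≤ G * L / r₀ := by
    rw [le_div_iff₀ hr₀]; nlinarith
  have h4 : L / r₀ ≤ G * L / r₀ := by gcongr; nlinarith
  have e1 : 400 * G * L / r₀ = 400 * (G * L / r₀) := by ring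
  have e2 : 32 * L / r₀ = 32 * (L / r₀) := by ring
  rw [e1]; rw [e2] at h2
  linarith

/-- The model is small where the boundary is close to its quadratic approximation. -/
theorem model_bdry {G L r₀ H s₀ a b r t δ : ℝ} {q₀ ξ : ℂ} (hG : 1 ≤ G) (hL : 1 ≤ L) (hr₀ : 0 < r₀)
    (hr₁ : r₀ ≤ 1) (hH : 0 ≤ H) (hH1 : H ≤ 1) (hHL : H * (16 * L) ≤ 1/2)
    (hs : |s₀| ≤ G) (hq : ‖q₀‖ ≤ G) (ha : |a| ≤ 16 * L) (hb : |b| ≤ 32 * L / r₀)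
    (hc : 1000 * G ^ 3 * r₀ ≤ δ) (hr : 0 < r) (hrt : r ≤ r₀ * t) (ht : 0 < t) (ht1 : t ≤ 1)
    (hξ : ‖ξ‖ ≤ r) (hg : |ξ.im + qf s₀ q₀ ξ / 2| ≤ G * r ^ 2 * t) :
    |mdl H s₀ q₀ a b ξ| ≤ δ * (L * r ^ 2 * t / r₀) := by
  have hN := Nf_le hG hs hq hH hH1 hHL ha
  have hGL : 1 ≤ G * L := by nlinarith
  have hξ2 : ‖ξ‖ ^ 2 ≤ r ^ 2 := by gcongr
  have hy : |ξ.im| ≤ 2 * G * r ^ 2 := by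
    have h1 := qf_abs_le s₀ q₀ ξ
    have h2 : (|s₀| + ‖q₀‖) * ‖ξ‖ ^ 2 ≤ (G + G) * r ^ 2 := by gcongr
    have h3 : G * r ^ 2 * t ≤ G * r ^ 2 * 1 := by gcongr
    rw [abs_le] at *
    constructor <;> linarith [h1.1, h1.2, hg.1, hg.2]
  have hx : |ξ.re| ≤ r := (Complex.abs_re_le_norm ξ).trans hξ
  have m1 : |a * (ξ.im + qf s₀ q₀ ξ / 2)| ≤ 16 * L * (G * r ^ 2 * t) := by
    rw [abs_mul]; gcongr
  have m2 : |(Nf H s₀ q₀ a * ξ.im + b * ξ.re) * ξ.im| ≤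
      ((1 + 4 * G * (16 * L)) * (2 * G * r ^ 2) + 32 * L / r₀ * r) * (2 * G * r ^ 2) := by
    rw [abs_mul]
    gcongr
    refine (abs_add_le _ _).trans ?_
    rw [abs_mul, abs_mul]; gcongr
  have m3 : |mdl H s₀ q₀ a b ξ| ≤ _ := (abs_add_le _ _).trans (add_le_add m1 m2)
  refine m3.trans ?_
  have hG2 : 1 ≤ G ^ 2 := one_le_pow₀ hG
  have hG3 : G ≤ G ^ 3 := by nlinarith
  set X := L * r ^ 2 * t / r₀ with hX
  have hX0 : 0 < X := by positivity
  have n1 : 16 * L * (G * r ^ 2 * t) ≤ 16 * (G ^ 3 * r₀) * X := by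
    have : 16 * L * (G * r ^ 2 * t) = 16 * (G * r₀) * X := by rw [hX]; field_simp
    rw [this]; gcongr
  have hr2 : r ^ 2 ≤ r₀ ^ 2 * t := by
    calc r ^ 2 ≤ (r₀ * t) ^ 2 := by gcongr
      _ = r₀ ^ 2 * t * t := by ring
      _ ≤ r₀ ^ 2 * t * 1 := by gcongr
      _ = _ := by ring
  have n2 : (1 + 4 * G * (16 * L)) * (2 * G * r ^ 2) * (2 * G * r ^ 2) ≤ 260 * (G ^ 3 * r₀) * X := by
    calc _ ≤ (G * L + 4 * G * (16 * L)) * (2 * G * r ^ 2) * (2 * G * (r₀ ^ 2 * t)) := by gcongr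
      _ = 260 * (G ^ 3 * r₀) * (r₀ ^ 2) * X := by rw [hX]; field_simp; ring
      _ ≤ 260 * (G ^ 3 * r₀) * 1 * X := by gcongr; nlinarith
      _ = _ := by ring
  have n3 : 32 * L / r₀ * r * (2 * G * r ^ 2) ≤ 64 * (G ^ 3 * r₀) * X := by
    calc _ ≤ 32 * L / r₀ * (r₀ * t) * (2 * G ^ 3 * r ^ 2) := by gcongr
      _ = 64 * (G ^ 3 * r₀) * X := by rw [hX]; field_simp; ring
  have n4 : 1000 * G ^ 3 * r₀ * X ≤ δ * X := by gcongr
  have n5 : 0 ≤ G ^ 3 * r₀ * X := by positivity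
  nlinarith

/-- The data at one scale of the boundary iteration, at the boundary point `0`. -/
structure Stage (G L δ r₀ H : ℝ) (Ω : Set ℂ) (w : ℂ → ℝ) (s₀ : ℝ) (q₀ : ℂ) : Prop where
  hG : 1 ≤ G
  hL : 1 ≤ L
  hδ : 0 < δ
  hδ1 : δ ≤ 1/100
  hr₀ : 0 < r₀
  hr₁ : r₀ ≤ 1
  hc : 1000 * G ^ 3 * r₀ ≤ δ
  hH : 0 ≤ H
  hHK : 10 * H * (400 * G * L / r₀) ^ 3 ≤ δ
  isOpen : IsOpen Ω
  up : ∀ z ∈ Ω, 0 < z.im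
  full : ∀ z : ℂ, ‖z‖ < r₀ → G * ‖z‖ ^ 2 < z.im → z ∈ Ω
  hs : |s₀| ≤ G
  hq : ‖q₀‖ ≤ G
  cont : ContinuousOn w (closure Ω)
  zero : ∀ z ∈ frontier Ω, w z = 0
  eqn : ∀ z ∈ Ω, ∃ p q s, Jet w z p q s ∧ Eqn H p q s ∧ ‖p‖ ≤ L

namespace Stage
variable {G L δ r₀ H : ℝ} {Ω : Set ℂ} {w : ℂ → ℝ} {s₀ : ℝ} {q₀ : ℂ}

theorem one_le_K (S : Stage G L δ r₀ H Ω w s₀ q₀) : 1 ≤ 400 * G * L / r₀ ∧ L ≤ 400 * G * L / r₀ ∧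
    16 * L ≤ 400 * G * L / r₀ := by
  have h1 := S.hG; have h2 := S.hL; have h3 := S.hr₀; have h4 := S.hr₁
  have hGL : L ≤ G * L := by nlinarith
  refine ⟨?_, ?_, ?_⟩ <;> rw [le_div_iff₀ h3] <;> nlinarith

theorem smallH (S : Stage G L δ r₀ H Ω w s₀ q₀) : H ≤ 1 ∧ H * (400 * G * L / r₀) ≤ 1/10 ∧
    H * (16 * L) ≤ 1/2 ∧ 10 * H ^ 2 * (400 * G * L / r₀) ^ 2 ≤ δ ∧ 10 * H ^ 2 * (400 * G * L / r₀) ^ 3 ≤ δ := by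
  obtain ⟨k1, k2, k3⟩ := S.one_le_K
  have hH := S.hH
  have hδ := S.hδ1
  have hc := S.hHK
  set K := 400 * G * L / r₀
  have k4 : K ≤ K ^ 3 := le_self_pow₀ k1 (by norm_num)
  have k5 : K ^ 2 ≤ K ^ 3 := pow_le_pow_right₀ k1 (by norm_num)
  have a1 : H * K ≤ H * K ^ 3 := by gcongr
  have a0 : H * 1 ≤ H * K := by gcongr
  have a2 : H * (16 * L) ≤ H * K := by gcongr
  have hH1 : H ≤ 1 := by linarith
  have a3 : H ^ 2 ≤ H := by nlinarith
  have a4 : H ^ 2 * K ^ 2 ≤ H ^ 2 * K ^ 3 := by gcongr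
  have a5 : H ^ 2 * K ^ 3 ≤ H * K ^ 3 := by gcongr
  refine ⟨hH1, by linarith, by linarith, by linarith, by linarith⟩

set_option maxHeartbeats 1000000 in
/-- The rescaled difference between the solution and the model is in normalised position. -/
theorem normalized (S : Stage G L δ r₀ H Ω w s₀ q₀) {a b r t ε : ℝ}
    (hr : 0 < r) (hrt : r ≤ r₀ * t) (ht : 0 < t) (ht1 : t ≤ 1)
    (hbd : ∀ ξ ∈ frontier Ω, ‖ξ‖ ≤ r → |ξ.im + qf s₀ q₀ ξ / 2| ≤ G * r ^ 2 * t)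
    (ha : |a| ≤ 16 * L) (hb : |b| ≤ 32 * L / r₀) (hε : ε = L * r ^ 2 * t / r₀)
    (happ : ∀ z ∈ closure Ω, ‖z‖ ≤ r → |w z - mdl H s₀ q₀ a b z| ≤ ε) :
    Normalized δ ((fun z : ℂ => (r:ℂ) * z) ⁻¹' Ω)
      (fun z => ε⁻¹ * (w ((r:ℂ) * z) - mdl H s₀ q₀ a b ((r:ℂ) * z))) ∧
    closure ((fun z : ℂ => (r:ℂ) * z) ⁻¹' Ω) = (fun z : ℂ => (r:ℂ) * z) ⁻¹' closure Ω := by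
  obtain ⟨k1, k2, k3⟩ := S.one_le_K
  obtain ⟨hH1, hHK, hHL, hHK2, hHK3⟩ := S.smallH
  have hG := S.hG
  have hL := S.hL
  have hr₀ := S.hr₀
  have hδ := S.hδ
  have hε0 : 0 < ε := by rw [hε]; positivity
  have hcoef := model_coef hG hL hr₀ S.hr₁ S.hH hH1 hHL S.hs S.hq ha hb
  set K := 400 * G * L / r₀ with hK
  have hrr : r ≤ r₀ := hrt.trans (by nlinarith)
  have hrC : (r:ℂ) ≠ 0 := by exact_mod_cast hr.ne'
  let φ := Homeomorph.mulLeft₀ (r:ℂ) hrC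
  have hcl : closure ((fun z : ℂ => (r:ℂ) * z) ⁻¹' Ω) = (fun z : ℂ => (r:ℂ) * z) ⁻¹' closure Ω :=
    (φ.preimage_closure Ω).symm
  have hfr : frontier ((fun z : ℂ => (r:ℂ) * z) ⁻¹' Ω) = (fun z : ℂ => (r:ℂ) * z) ⁻¹' frontier Ω :=
    (φ.preimage_frontier Ω).symm
  have hn : ∀ z : ℂ, ‖(r:ℂ) * z‖ = r * ‖z‖ := fun z => by
    rw [norm_mul, Complex.norm_real, Real.norm_eq_abs, abs_of_pos hr]
  have him : ∀ z : ℂ, ((r:ℂ) * z).im = r * z.im := fun z => by simp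
  have hmc : Continuous (mdl H s₀ q₀ a b) := by unfold mdl qf; fun_prop
  refine ⟨⟨S.isOpen.preimage (by fun_prop), ?_, ?_, ?_, ?_, ?_, ?_⟩, hcl⟩
  · intro z hz _
    have := S.up _ hz
    rw [him] at this
    exact pos_of_mul_pos_right this hr.le
  · intro z hz hzi
    apply S.full
    · rw [hn]; nlinarith
    · rw [hn, him]
      have h1 : G * (r * ‖z‖) ^ 2 ≤ G * (r * 1) ^ 2 := by gcongr
      have h2 : G * r ≤ δ := by
        have : G ≤ G ^ 3 := le_self_pow₀ hG (by norm_num)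
        calc G * r ≤ G ^ 3 * r₀ := by gcongr
          _ ≤ 1000 * G ^ 3 * r₀ := by nlinarith [show 0 ≤ G ^ 3 * r₀ by positivity]
          _ ≤ δ := S.hc
      have h3 : G * r * r ≤ δ * r := by gcongr
      have h4 : δ * r < z.im * r := by gcongr
      nlinarith
  · apply ContinuousOn.mul continuousOn_const
    apply ContinuousOn.sub
    · apply S.cont.comp (by fun_prop)
      intro z hz
      have := hz.1
      rwa [hcl] at this
    · exact (hmc.comp (by fun_prop)).continuousOn
  · intro z hz hz1
    rw [hcl] at hz
    have := happ _ hz (by rw [hn]; exact mul_le_of_le_one_right hr.le hz1)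
    rw [abs_mul, abs_of_pos (inv_pos.2 hε0), inv_mul_le_iff₀ hε0]
    linarith
  · intro z hz hz1
    rw [hfr] at hz
    have hz' : ‖(r:ℂ) * z‖ ≤ r := by rw [hn]; exact mul_le_of_le_one_right hr.le hz1.le
    have := model_bdry hG hL hr₀ S.hr₁ S.hH hH1 hHL S.hs S.hq ha hb S.hc hr hrt ht ht1 hz' (hbd _ hz hz')
    rw [abs_mul, abs_of_pos (inv_pos.2 hε0), inv_mul_le_iff₀ hε0, S.zero _ hz, zero_sub, abs_neg, hε]
    linarith
  · intro z hz hz1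
    obtain ⟨p, q, s, j, he, hp⟩ := S.eqn _ hz
    have jm := quad_jet (a * Complex.I) (mQ H s₀ q₀ a b) (mS H s₀ q₀ a) ((r:ℂ) * z)
    have hfun : (fun z => lin (a * Complex.I) z + qf (mS H s₀ q₀ a) (mQ H s₀ q₀ a b) z / 2) =
        mdl H s₀ q₀ a b := by funext z; rw [mdl_eq]
    rw [hfun] at jm
    have jd := j.sub jm
    set pm := (a * Complex.I + ((mS H s₀ q₀ a : ℝ) * ((r:ℂ) * z) + starRingEnd ℂ (mQ H s₀ q₀ a b * ((r:ℂ) * z)))) with hpm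
    have jE := (Jet.comp_affine (x₀ := 0) (c := (r:ℂ)) (ζ := z) (by simpa using jd)).const_mul ε⁻¹
    simp only [zero_add] at jE
    refine ⟨_, _, _, jE, ?_⟩
    have hβ : 0 < ε⁻¹ * r ^ 2 := by positivity
    have hd := eqn_diff S.hH k1 hHK he (Nf_eqn H s₀ q₀ a b) (hp.trans k2)
      (by rw [norm_mul, Complex.norm_real, Real.norm_eq_abs, Complex.norm_I, mul_one]; exact ha.trans k3) hcoef
    have hpp : ‖p - a * Complex.I‖ ≤ ‖p - pm‖ + K * r := by
      have e : p - a * Complex.I = (p - pm) + ((mS H s₀ q₀ a : ℝ) * ((r:ℂ) * z) + starRingEnd ℂ (mQ H s₀ q₀ a b * ((r:ℂ) * z))) := by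
        rw [hpm]; ring
      rw [e]
      refine (norm_add_le _ _).trans ?_
      gcongr
      refine (norm_add_le _ _).trans ?_
      rw [RCLike.norm_conj, norm_mul, norm_mul (mQ H s₀ q₀ a b), hn, Complex.norm_real, Real.norm_eq_abs, ← add_mul]
      gcongr
      exact mul_le_of_le_one_right hr.le hz1.le
    rw [abs_mul, abs_mul, abs_of_pos (inv_pos.2 hε0), abs_of_nonneg (sq_nonneg _), Complex.norm_real,
      Real.norm_eq_abs, abs_of_pos hr, norm_mul, norm_mul, norm_mul, norm_mul, norm_pow, RCLike.norm_conj, Complex.norm_real,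
      Complex.norm_real, Real.norm_eq_abs, Real.norm_eq_abs, abs_of_pos hr, abs_of_pos (inv_pos.2 hε0)]
    set dq := ‖q - mQ H s₀ q₀ a b‖ with hdq
    set dp := ‖p - pm‖ with hdp
    have hdq0 : 0 ≤ dq := norm_nonneg _
    have hdp0 : 0 ≤ dp := norm_nonneg _
    have hβr : ε⁻¹ * r ^ 2 * r ≤ 1 := by
      have e : ε⁻¹ * r ^ 2 * r = r₀ * r / (L * t) := by rw [hε]; field_simp
      rw [e, div_le_one (by positivity)]
      have := S.hr₁
      calc r₀ * r ≤ 1 * (r₀ * t) := by gcongr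
        _ = r₀ * t := one_mul _
        _ ≤ L * t := by gcongr; linarith
    have hβp : ε⁻¹ * r ^ 2 * dp ≤ ε⁻¹ * (r * dp) := by
      have : r ^ 2 ≤ r := by rw [sq]; exact mul_le_of_le_one_left hr.le (hrr.trans S.hr₁)
      calc ε⁻¹ * r ^ 2 * dp ≤ ε⁻¹ * r * dp := by gcongr
        _ = _ := by ring
    calc ε⁻¹ * (r ^ 2 * |s - mS H s₀ q₀ a|)
        ≤ ε⁻¹ * (r ^ 2 * (H ^ 2 * K ^ 2 * (dq + 10 * (dp + K * r)))) := by gcongr; exact hd.trans (by gcongr)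
      _ = H ^ 2 * K ^ 2 * (ε⁻¹ * r ^ 2 * dq) + 10 * H ^ 2 * K ^ 2 * (ε⁻¹ * r ^ 2 * dp)
          + 10 * H ^ 2 * K ^ 3 * (ε⁻¹ * r ^ 2 * r) := by ring
      _ ≤ δ * (ε⁻¹ * r ^ 2 * dq) + δ * (ε⁻¹ * (r * dp)) + δ * 1 := by
          gcongr
          linarith [show 0 ≤ H ^ 2 * K ^ 2 by positivity]
      _ = _ := by ring

end Stage

namespace Stage
variable {G L δ r₀ H : ℝ} {Ω : Set ℂ} {w : ℂ → ℝ} {s₀ : ℝ} {q₀ : ℂ}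

/-- Passing from radius `r` to `ρ r`: the improvement theorem corrects the model so that the error
gains an extra factor `1/2` over the quadratic rate. -/
theorem step (S : Stage G L δ r₀ H Ω w s₀ q₀) {ρ : ℝ} (hρ : 0 < ρ) (hρ1 : ρ ≤ 1/256)
    (himp : ∀ (U : Set ℂ) (E : ℂ → ℝ), Normalized δ U E → ∃ a b : ℝ, |a| ≤ 8 ∧ |b| ≤ 8 ∧
      ∀ z ∈ closure U, ‖z‖ ≤ 1/4 → |E z - a * z.im - b * (z ^ 2).im| ≤ 32 * ‖z‖ ^ 3 + ρ ^ 2 / 8)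
    {a b r t : ℝ}
    (hr : 0 < r) (hrt : r ≤ r₀ * t) (ht : 0 < t) (ht1 : t ≤ 1)
    (hbd : ∀ ξ ∈ frontier Ω, ‖ξ‖ ≤ r → |ξ.im + qf s₀ q₀ ξ / 2| ≤ G * r ^ 2 * t)
    (ha : |a| ≤ 16 * L) (hb : |b| ≤ 32 * L / r₀)
    (happ : ∀ z ∈ closure Ω, ‖z‖ ≤ r → |w z - mdl H s₀ q₀ a b z| ≤ L * r ^ 2 * t / r₀) :
    ∃ a' b' : ℝ, |a' - a| ≤ 8 * L * r * t / r₀ ∧ |b' - b| ≤ 16 * L * t / r₀ ∧ (|a'| ≤ 16 * L →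
      ∀ z ∈ closure Ω, ‖z‖ ≤ ρ * r → |w z - mdl H s₀ q₀ a' b' z| ≤ L * (ρ * r) ^ 2 * (t / 2) / r₀) := by
  obtain ⟨hH1, hHK, hHL, hHK2, hHK3⟩ := S.smallH
  have hG := S.hG
  have hL := S.hL
  have hr₀ := S.hr₀
  set ε := L * r ^ 2 * t / r₀ with hε
  have hε0 : 0 < ε := by positivity
  obtain ⟨hnorm, hcl⟩ := S.normalized hr hrt ht ht1 hbd ha hb hε happ
  obtain ⟨A, B, hA, hB, hAB⟩ := himp _ _ hnorm
  have hrr : r ≤ r₀ := hrt.trans (mul_le_of_le_one_right hr₀.le ht1)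
  have hda : |ε / r * A| ≤ 8 * L * r * t / r₀ := by
    rw [abs_mul, abs_of_pos (by positivity)]
    calc ε / r * |A| ≤ ε / r * 8 := by gcongr
      _ = _ := by rw [hε]; field_simp
  refine ⟨a + ε / r * A, b + 2 * ε / r ^ 2 * B, ?_, ?_, ?_⟩
  · rwa [add_sub_cancel_left]
  · rw [add_sub_cancel_left, abs_mul, abs_of_pos (by positivity)]
    calc 2 * ε / r ^ 2 * |B| ≤ 2 * ε / r ^ 2 * 8 := by gcongr
      _ = _ := by rw [hε]; field_simp; ring
  · intro ha' z hz hzr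
    have hrC : (r:ℂ) ≠ 0 := by exact_mod_cast hr.ne'
    obtain ⟨ζ, rfl⟩ : ∃ ζ : ℂ, z = r * ζ := ⟨z / r, by field_simp⟩
    have hζ : ‖ζ‖ ≤ ρ := by
      rw [norm_mul, Complex.norm_real, Real.norm_eq_abs, abs_of_pos hr, mul_comm ρ r] at hzr
      exact le_of_mul_le_mul_left hzr hr
    have hE := hAB ζ (by rw [hcl]; exact hz) (by linarith)
    have hN := Nf_lip hG S.hs S.hq S.hH hH1 hHL ha' ha
    rw [add_sub_cancel_left] at hN
    have hζ3 : 32 * ‖ζ‖ ^ 3 ≤ ρ ^ 2 / 8 := by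
      have : ‖ζ‖ ^ 3 ≤ ρ ^ 3 := by gcongr
      have : ρ ^ 3 ≤ ρ ^ 2 * (1/256) := by rw [pow_succ]; gcongr
      linarith
    have hζ2 : ‖ζ‖ ^ 2 ≤ ρ ^ 2 := by gcongr
    have hE' : |w (r * ζ) - mdl H s₀ q₀ a b (r * ζ) - ε * (A * ζ.im + B * (ζ ^ 2).im)| ≤ ε * (ρ ^ 2 / 4) := by
      have e : w (r * ζ) - mdl H s₀ q₀ a b (r * ζ) - ε * (A * ζ.im + B * (ζ ^ 2).im) =
        ε * (ε⁻¹ * (w (r * ζ) - mdl H s₀ q₀ a b (r * ζ)) - A * ζ.im - B * (ζ ^ 2).im) := by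
        field_simp; ring
      rw [e, abs_mul, abs_of_pos hε0]
      gcongr; linarith
    set dN := Nf H s₀ q₀ (a + ε / r * A) - Nf H s₀ q₀ a with hdN
    have hdiff : mdl H s₀ q₀ (a + ε / r * A) (b + 2 * ε / r ^ 2 * B) (r * ζ) - mdl H s₀ q₀ a b (r * ζ)
        - ε * (A * ζ.im + B * (ζ ^ 2).im) = ε / r * A * (r ^ 2 * (qf s₀ q₀ ζ / 2)) + dN * (r ^ 2 * ζ.im ^ 2) := by
      have e1 : Nf H s₀ q₀ (a + ε / r * A) = Nf H s₀ q₀ a + dN := by rw [hdN]; ring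
      unfold mdl
      rw [e1, qf_smul]
      simp [sq]
      field_simp
      ring
    have hq2 : |qf s₀ q₀ ζ / 2| ≤ G * ρ ^ 2 := by
      have h1 := qf_abs_le s₀ q₀ ζ
      have h2 : (|s₀| + ‖q₀‖) * ‖ζ‖ ^ 2 ≤ (G + G) * ρ ^ 2 := by
        have := S.hs; have := S.hq
        gcongr
      rw [abs_div, abs_two]; linarith
    have hi2 : ζ.im ^ 2 ≤ ρ ^ 2 := by
      rw [← sq_abs]
      have := (Complex.abs_im_le_norm ζ).trans hζ
      gcongr
    have hd2 : |ε / r * A * (r ^ 2 * (qf s₀ q₀ ζ / 2)) + dN * (r ^ 2 * ζ.im ^ 2)| ≤ ε * (ρ ^ 2 / 4) := by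
      have b1 : |ε / r * A * (r ^ 2 * (qf s₀ q₀ ζ / 2))| ≤ (8 * L * r * t / r₀) * (r ^ 2 * (G * ρ ^ 2)) := by
        rw [abs_mul, abs_mul (r ^ 2), abs_of_nonneg (sq_nonneg r)]
        gcongr
      have b2 : |dN * (r ^ 2 * ζ.im ^ 2)| ≤ (4 * G * (8 * L * r * t / r₀)) * (r ^ 2 * ρ ^ 2) := by
        rw [abs_mul, abs_of_nonneg (by positivity : 0 ≤ r ^ 2 * ζ.im ^ 2)]
        have : |dN| ≤ 4 * G * (8 * L * r * t / r₀) := hN.trans (by gcongr)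
        gcongr
      refine (abs_add_le _ _).trans ((add_le_add b1 b2).trans ?_)
      have e : (8 * L * r * t / r₀) * (r ^ 2 * (G * ρ ^ 2)) + (4 * G * (8 * L * r * t / r₀)) * (r ^ 2 * ρ ^ 2)
        = ε * ((40 * (G * r)) * ρ ^ 2) := by rw [hε]; ring
      rw [e]
      have hGr : 1000 * (G * r) ≤ 1/100 := by
        have : G ≤ G ^ 3 := le_self_pow₀ hG (by norm_num)
        calc 1000 * (G * r) ≤ 1000 * (G ^ 3 * r₀) := by gcongr
          _ = 1000 * G ^ 3 * r₀ := by ring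
          _ ≤ 1/100 := S.hc.trans S.hδ1
      have : 40 * (G * r) * ρ ^ 2 ≤ 1/4 * ρ ^ 2 := by gcongr; linarith
      gcongr; linarith
    rw [← hdiff] at hd2
    have e5 : L * (ρ * r) ^ 2 * (t / 2) / r₀ = ε * (ρ ^ 2 / 4) + ε * (ρ ^ 2 / 4) := by rw [hε]; ring
    rw [e5]
    rw [abs_le] at hE' hd2 ⊢
    constructor <;> linarith [hE'.1, hE'.2, hd2.1, hd2.2]

set_option maxHeartbeats 1000000 in
/-- Second order expansion of `w` at the boundary point `0`, with a rate and constants depending only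
on the geometric data. -/
theorem expansion (S : Stage G L δ r₀ H Ω w s₀ q₀) {ρ : ℝ} (hρ : 0 < ρ) (hρ1 : ρ ≤ 1/256)
    (himp : ∀ (U : Set ℂ) (E : ℂ → ℝ), Normalized δ U E → ∃ a b : ℝ, |a| ≤ 8 ∧ |b| ≤ 8 ∧
      ∀ z ∈ closure U, ‖z‖ ≤ 1/4 → |E z - a * z.im - b * (z ^ 2).im| ≤ 32 * ‖z‖ ^ 3 + ρ ^ 2 / 8)
    (hw : ∀ z ∈ closure Ω, |w z| ≤ (L - 1) * ‖z‖)
    (hbd : ∀ k : ℕ, ∀ ξ ∈ frontier Ω, ‖ξ‖ ≤ ρ ^ k * r₀ →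
      |ξ.im + qf s₀ q₀ ξ / 2| ≤ G * (ρ ^ k * r₀) ^ 2 * (1/2) ^ k) :
    ∃ p q s, |s| + ‖q‖ ≤ 400 * G * L / r₀ ∧ ∀ k : ℕ, ∀ z ∈ closure Ω, ‖z‖ ≤ ρ ^ k * r₀ →
      |w z - (lin p z + qf s q z / 2)| ≤ 200 * G * L / r₀ * (ρ ^ k * r₀) ^ 2 * (1/2) ^ k := by
  obtain ⟨hH1, hHK, hHL, hHK2, hHK3⟩ := S.smallH
  have hG := S.hG
  have hL := S.hL
  have hr₀ := S.hr₀
  -- At scale `ρ ^ k * r₀` the error is quadratic with an additional factor `2 ^ (-k)`; the bounds on the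
  -- coefficients form geometric series.
  let Inv : ℕ → ℝ × ℝ → Prop := fun k P => |P.1| ≤ 16 * L * (1 - (1/2) ^ k) ∧
    |P.2| ≤ 32 * L / r₀ * (1 - (1/2) ^ k) ∧
    ∀ z ∈ closure Ω, ‖z‖ ≤ ρ ^ k * r₀ → |w z - mdl H s₀ q₀ P.1 P.2 z| ≤ L * (ρ ^ k * r₀) ^ 2 * (1/2) ^ k / r₀
  have hpow : ∀ k : ℕ, (0:ℝ) < (1/2) ^ k ∧ ((1/2:ℝ)) ^ k ≤ 1 := fun k =>
    ⟨by positivity, pow_le_one₀ (by norm_num) (by norm_num)⟩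
  have hρk : ∀ k : ℕ, ρ ^ k ≤ (1/2) ^ k := fun k => by gcongr; linarith
  have base_case : Inv 0 (0, 0) := by
    refine ⟨by simp, by simp, ?_⟩
    intro z hz hzr
    simp only [pow_zero, one_mul] at hzr
    have h1 := hw z hz
    have h2 : mdl H s₀ q₀ 0 0 z = z.im ^ 2 := by simp [mdl, Nf]; ring
    have h3 : z.im ^ 2 ≤ r₀ := by
      have h4 := (Complex.abs_im_le_norm z).trans hzr
      have h5 : |z.im| ^ 2 ≤ r₀ ^ 2 := by gcongr
      rw [sq_abs] at h5
      nlinarith [S.hr₁]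
    have h6 : (L - 1) * ‖z‖ ≤ (L - 1) * r₀ := mul_le_mul_of_nonneg_left hzr (by linarith)
    have h7 : L * (ρ ^ 0 * r₀) ^ 2 * (1/2) ^ 0 / r₀ = L * r₀ := by field_simp
    simp only
    rw [h2, h7]
    rw [abs_le] at h1 ⊢
    constructor <;> nlinarith [h1.1, h1.2, sq_nonneg z.im]
  have next : ∀ k P, Inv k P → ∃ P' : ℝ × ℝ, Inv (k+1) P' ∧ |P'.1 - P.1| ≤ 8 * L * (ρ / 2) ^ k ∧
      |P'.2 - P.2| ≤ 16 * L / r₀ * (1/2) ^ k := by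
    rintro k ⟨a, b⟩ ⟨ha, hb, happ⟩
    obtain ⟨t0, t1⟩ := hpow k
    simp only at ha hb happ
    obtain ⟨a', b', h1, h2, h3⟩ := S.step hρ hρ1 himp (a := a) (b := b) (r := ρ ^ k * r₀) (t := (1/2) ^ k)
      (by positivity) (by rw [mul_comm]; gcongr; linarith) t0 t1 (hbd k)
      (ha.trans (by nlinarith)) (hb.trans (by
        have : 0 ≤ 32 * L / r₀ := by positivity
        nlinarith)) happ
    have e1 : 8 * L * (ρ ^ k * r₀) * (1/2) ^ k / r₀ = 8 * L * (ρ / 2) ^ k := by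
      rw [div_pow, div_pow, one_pow]; field_simp
    have e2 : 16 * L * (1/2) ^ k / r₀ = 16 * L / r₀ * (1/2) ^ k := by ring
    rw [e1] at h1
    rw [e2] at h2
    have hρ2 : (ρ / 2) ^ k ≤ (1/2) ^ k := by gcongr; linarith
    have h4 : |a'| ≤ 16 * L * (1 - (1/2) ^ (k+1)) := by
      have h5 : |a'| ≤ |a' - a| + |a| := by simpa using abs_add_le (a' - a) a
      have h6 : 8 * L * (ρ / 2) ^ k ≤ 8 * L * (1/2) ^ k := by gcongr
      rw [pow_succ]; linarith
    have h5 : |b'| ≤ 32 * L / r₀ * (1 - (1/2) ^ (k+1)) := by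
      have h5 : |b'| ≤ |b' - b| + |b| := by simpa using abs_add_le (b' - b) b
      have e3 : 32 * L / r₀ = 2 * (16 * L / r₀) := by ring
      rw [e3] at hb ⊢
      rw [pow_succ]; linarith
    refine ⟨(a', b'), ⟨h4, h5, ?_⟩, h1, h2⟩
    intro z hz hzr
    have h6 := h3 (h4.trans (by nlinarith [hpow (k+1)])) z hz (hzr.trans (le_of_eq (by ring)))
    refine h6.trans (le_of_eq ?_)
    rw [pow_succ, pow_succ]; ring
  choose nx hnx1 hnx2 hnx3 using next
  let sq : (k : ℕ) → {P : ℝ × ℝ // Inv k P} := fun k =>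
    Nat.rec (motive := fun k => {P : ℝ × ℝ // Inv k P}) ⟨(0,0), base_case⟩ (fun k P => ⟨nx k P.1 P.2, hnx1 k P.1 P.2⟩) k
  have hs1 : ∀ k, |(sq (k+1)).1.1 - (sq k).1.1| ≤ 8 * L * (ρ / 2) ^ k := fun k => hnx2 k _ (sq k).2
  have hs2 : ∀ k, |(sq (k+1)).1.2 - (sq k).1.2| ≤ 16 * L / r₀ * (1/2) ^ k := fun k => hnx3 k _ (sq k).2
  have hd1 : ∀ k, dist ((sq k).1.1) ((sq (k+1)).1.1) ≤ 8 * L * (ρ / 2) ^ k := fun k => by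
    rw [dist_comm, Real.dist_eq]; exact hs1 k
  have hd2 : ∀ k, dist ((sq k).1.2) ((sq (k+1)).1.2) ≤ 16 * L / r₀ * (1/2) ^ k := fun k => by
    rw [dist_comm, Real.dist_eq]; exact hs2 k
  have hlt1 : ρ / 2 < 1 := by linarith
  have hlt2 : (1/2:ℝ) < 1 := by norm_num
  obtain ⟨a, ha⟩ := cauchySeq_tendsto_of_complete (cauchySeq_of_le_geometric _ _ hlt1 hd1)
  obtain ⟨b, hb⟩ := cauchySeq_tendsto_of_complete (cauchySeq_of_le_geometric _ _ hlt2 hd2)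
  have hak : ∀ k, |(sq k).1.1| ≤ 16 * L := fun k => (sq k).2.1.trans (by nlinarith [hpow k])
  have hbk : ∀ k, |(sq k).1.2| ≤ 32 * L / r₀ := fun k => (sq k).2.2.1.trans (by
    have : 0 ≤ 32 * L / r₀ := by positivity
    nlinarith [hpow k])
  have haL : |a| ≤ 16 * L := le_of_tendsto ha.abs (Eventually.of_forall hak)
  have hbL : |b| ≤ 32 * L / r₀ := le_of_tendsto hb.abs (Eventually.of_forall hbk)
  refine ⟨a * Complex.I, mQ H s₀ q₀ a b, mS H s₀ q₀ a,
    model_coef hG hL hr₀ S.hr₁ S.hH hH1 hHL S.hs S.hq haL hbL, ?_⟩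
  intro k z hz hzr
  rw [← mdl_eq]
  have g1 := dist_le_of_le_geometric_of_tendsto _ _ hlt1 hd1 ha k
  have g2 := dist_le_of_le_geometric_of_tendsto _ _ hlt2 hd2 hb k
  have g3 := (sq k).2.2.2 z hz hzr
  rw [Real.dist_eq] at g1 g2
  set ak := (sq k).1.1
  set bk := (sq k).1.2
  set r := ρ ^ k * r₀ with hr
  set t := ((1/2:ℝ)) ^ k with ht
  obtain ⟨t0, t1⟩ := hpow k
  rw [← ht] at t0 t1
  have hrpos : 0 < r := by positivity
  have hrr : r ≤ r₀ := by
    rw [hr]; exact mul_le_of_le_one_left hr₀.le (pow_le_one₀ hρ.le (by linarith))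
  have g1' : |ak - a| ≤ 16 * L / r₀ * r * t := by
    refine g1.trans ?_
    rw [div_le_iff₀ (by linarith)]
    have e : 8 * L * (ρ / 2) ^ k = 8 * L / r₀ * r * t := by
      rw [hr, ht, div_pow, div_pow, one_pow]; field_simp
    rw [e]
    have : 0 ≤ 8 * L / r₀ * r * t := by positivity
    have e2 : 16 * L / r₀ * r * t = 2 * (8 * L / r₀ * r * t) := by ring
    have h5 := mul_le_of_le_one_right this (by linarith : ρ ≤ 1)
    rw [e2]; linarith
  have g2' : |bk - b| ≤ 32 * L / r₀ * t := by
    refine g2.trans (le_of_eq ?_)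
    ring
  have hN := Nf_lip hG S.hs S.hq S.hH hH1 hHL (hak k) haL
  have hN' : |Nf H s₀ q₀ ak - Nf H s₀ q₀ a| ≤ 4 * G * (16 * L / r₀ * r * t) := hN.trans (by gcongr)
  have hx := (Complex.abs_re_le_norm z).trans hzr
  have hy := (Complex.abs_im_le_norm z).trans hzr
  have hqz : |qf s₀ q₀ z| ≤ (G + G) * r ^ 2 := by
    have := S.hs; have := S.hq
    exact (qf_abs_le s₀ q₀ z).trans (by gcongr)
  have hGr : G * r ≤ 1 := by
    have : G ≤ G ^ 3 := le_self_pow₀ hG (by norm_num)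
    have : G * r ≤ G ^ 3 * r₀ := by gcongr
    have := S.hc; have := S.hδ1
    linarith
  have f1 : |(ak - a) * (z.im + qf s₀ q₀ z / 2)| ≤ 16 * L / r₀ * r * t * (2 * r) := by
    rw [abs_mul]
    gcongr
    refine (abs_add_le _ _).trans ?_
    rw [abs_div, abs_two]
    have : G * r * r ≤ 1 * r := by gcongr
    linarith
  have f2 : |(Nf H s₀ q₀ ak - Nf H s₀ q₀ a) * z.im * z.im| ≤ 4 * G * (16 * L / r₀ * r * t) * r * r := by
    rw [abs_mul, abs_mul]; gcongr
  have f3 : |(bk - b) * z.re * z.im| ≤ 32 * L / r₀ * t * r * r := by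
    rw [abs_mul, abs_mul]; gcongr
  have e : mdl H s₀ q₀ ak bk z - mdl H s₀ q₀ a b z = (ak - a) * (z.im + qf s₀ q₀ z / 2)
      + (Nf H s₀ q₀ ak - Nf H s₀ q₀ a) * z.im * z.im + (bk - b) * z.re * z.im := by
    simp only [mdl]; ring
  have X0 : 0 ≤ L / r₀ * r ^ 2 * t := by positivity
  have e1 : 200 * G * L / r₀ * r ^ 2 * t = 200 * (G * (L / r₀ * r ^ 2 * t)) := by ring
  have e2 : 16 * L / r₀ * r * t * (2 * r) = 32 * (L / r₀ * r ^ 2 * t) := by ring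
  have e3 : 4 * G * (16 * L / r₀ * r * t) * r * r = 64 * (G * r) * (L / r₀ * r ^ 2 * t) := by ring
  have e4 : 32 * L / r₀ * t * r * r = 32 * (L / r₀ * r ^ 2 * t) := by ring
  have e5 : L * r ^ 2 * t / r₀ = L / r₀ * r ^ 2 * t := by ring
  rw [e2] at f1; rw [e3] at f2; rw [e4] at f3; rw [e5] at g3; rw [e1]
  have f2' := f2.trans (mul_le_mul_of_nonneg_right (mul_le_mul_of_nonneg_left hGr (by norm_num)) X0)
  have hXG : L / r₀ * r ^ 2 * t ≤ G * (L / r₀ * r ^ 2 * t) := le_mul_of_one_le_left X0 hG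
  rw [abs_le] at f1 f2' f3 g3 ⊢
  constructor <;> linarith [f1.1, f1.2, f2'.1, f2'.2, f3.1, f3.2, g3.1, g3.2]

end Stage

/-! ### Midpoint convexity from a boundary point -/

/-- If a solution `w` has a second order expansion at the boundary point `0` with a rate, and is
close to a function `v` that is strongly midpoint convex from `0`, then `w` is strongly midpoint
convex from `0`. Closeness to `v` at one fixed scale `r` makes the quadratic part of the expansion
positive definite, and the expansion propagates this to all smaller scales. -/
theorem bdry_pos {Ω : Set ℂ} {w v : ℂ → ℝ} {G K M c ρ r₀ τ r s : ℝ} {k₁ : ℕ} {p q : ℂ}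
    (hG : 1 ≤ G) (hK : |s| + ‖q‖ ≤ K) (hM : 0 ≤ M) (hc : 0 < c) (hρ : 0 < ρ) (hρ1 : ρ ≤ 1/2)
    (hr₀ : 0 < r₀) (hr : r = ρ ^ k₁ * r₀) (hk : 96 * M * (1/2) ^ k₁ ≤ c * ρ ^ 2)
    (hκ : 4 * G * r ≤ 1) (hKr : 48 * K * G * r ≤ c) (hτ : 48 * τ ≤ c * ρ ^ 2 * r ^ 2)
    (full : ∀ z : ℂ, ‖z‖ ≤ r → G * ‖z‖ ^ 2 < z.im → z ∈ Ω)
    (half : ∀ z ∈ closure Ω, z / 2 ∈ closure Ω) (h0 : w 0 = 0)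
    (hexp : ∀ k : ℕ, ∀ z ∈ closure Ω, ‖z‖ ≤ ρ ^ k * r₀ →
      |w z - (lin p z + qf s q z / 2)| ≤ M * (ρ ^ k * r₀) ^ 2 * (1/2) ^ k)
    (hv : ∀ z ∈ closure Ω, v (z / 2) - v z / 2 ≤ - (c / 8) * ‖z‖ ^ 2)
    (hwv : ∀ z ∈ closure Ω, |w z - v z| ≤ τ) :
    ∀ z ∈ closure Ω, w (z / 2) - w z / 2 ≤ - (c / 64) * ‖z‖ ^ 2 := by
  have hr0 : 0 < r := by rw [hr]; positivity
  have hK0 : 0 ≤ K := le_trans (by positivity) hK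
  have hlin : ∀ z : ℂ, lin p (z / 2) = lin p z / 2 := by
    intro z; have : z / 2 = ((1/2 : ℝ) : ℂ) * z := by push_cast; ring
    rw [this]; simp only [lin, Complex.re_ofReal_mul, Complex.im_ofReal_mul]; ring
  have hqf : ∀ z : ℂ, qf s q (z / 2) = qf s q z / 4 := by
    intro z; have : z / 2 = ((1/2 : ℝ) : ℂ) * z := by push_cast; ring
    rw [this, qf_smul]; ring
  have hn2 : ∀ z : ℂ, ‖z / 2‖ ≤ ‖z‖ := by
    intro z; rw [norm_div]; simp only [Complex.norm_ofNat]; linarith [norm_nonneg z]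
  have hA : ∀ z ∈ closure Ω, ρ * r ≤ ‖z‖ → ‖z‖ ≤ r → c / 2 * ‖z‖ ^ 2 ≤ qf s q z := by
    intro z hz h1 h2
    have e1 := abs_le.1 (hexp k₁ z hz (hr ▸ h2))
    have e2 := abs_le.1 (hexp k₁ (z/2) (half z hz) (hr ▸ (hn2 z).trans h2))
    rw [← hr, hlin, hqf] at e2
    rw [← hr] at e1
    have e3 := abs_le.1 (hwv z hz)
    have e4 := abs_le.1 (hwv _ (half z hz))
    have e5 := hv z hz
    have e6 : (ρ * r) ^ 2 ≤ ‖z‖ ^ 2 := by gcongr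
    have e7 : 96 * M * (1/2) ^ k₁ * r ^ 2 ≤ c * ρ ^ 2 * r ^ 2 := by gcongr
    have e8 : c * (ρ * r) ^ 2 ≤ c * ‖z‖ ^ 2 := by gcongr
    have e9 : c * (ρ * r) ^ 2 = c * ρ ^ 2 * r ^ 2 := by ring
    have e10 : M * r ^ 2 * (1/2) ^ k₁ = (96 * M * (1/2) ^ k₁ * r ^ 2) / 96 := by ring
    rw [e10] at e1 e2
    have : 0 ≤ c * ‖z‖ ^ 2 := by positivity
    linarith [e1.1, e1.2, e2.1, e2.2, e3.1, e3.2, e4.1, e4.2]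
  have hup : ∀ e : ℂ, ‖e‖ = 1 → 0 ≤ e.im → c / 4 ≤ qf s q e := by
    intro e he him
    set f : ℂ := e + ((4 * G * r : ℝ) : ℂ) * Complex.I with hf
    have hfre : f.re = e.re := by simp [hf]
    have hfim : f.im = e.im + 4 * G * r := by simp [hf]
    have hfe : ‖f - e‖ = 4 * G * r := by
      rw [hf, add_sub_cancel_left, norm_mul, Complex.norm_I, mul_one, Complex.norm_real,
        Real.norm_eq_abs, abs_of_pos (by positivity)]
    have hf2 : ‖f‖ ≤ 2 := by
      have := norm_le_norm_add_norm_sub' f e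
      linarith
    have hf1 : 1 ≤ ‖f‖ ^ 2 := by
      have h1 := norm_sq_eq e
      rw [norm_sq_eq, hfre, hfim]
      rw [he] at h1
      have : 0 ≤ e.im * (4 * G * r) := by positivity
      linarith [sq_nonneg (4 * G * r), add_sq e.im (4 * G * r)]
    have hf1' : 1 ≤ ‖f‖ := by
      by_contra h; push Not at h
      have := norm_nonneg f
      nlinarith
    set z : ℂ := ((r / 2 : ℝ) : ℂ) * f with hz
    have hzn : ‖z‖ = r / 2 * ‖f‖ := by
      rw [hz, norm_mul, Complex.norm_real, Real.norm_eq_abs, abs_of_pos (by positivity)]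
    have hzr : ‖z‖ ≤ r := by rw [hzn]; nlinarith
    have hzim : z.im = r / 2 * (e.im + 4 * G * r) := by
      rw [hz, Complex.im_ofReal_mul, hfim]
    have hzΩ : z ∈ closure Ω := by
      apply subset_closure
      apply full z hzr
      have : ‖z‖ ^ 2 ≤ r ^ 2 := by gcongr
      have h2 : G * ‖z‖ ^ 2 ≤ G * r ^ 2 := by gcongr
      have h3 : 0 < G * r ^ 2 := by positivity
      have h4 : 0 ≤ r / 2 * e.im := by positivity
      rw [hzim]; linarith
    have h1 := hA z hzΩ (by rw [hzn]; nlinarith) hzr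
    rw [hzn, hz, qf_smul, mul_pow] at h1
    have h2 : c / 2 * ‖f‖ ^ 2 ≤ qf s q f := by
      have : 0 < (r/2)^2 := by positivity
      nlinarith
    have h3 := (abs_le.1 (qf_sub_le s q f e)).2
    rw [hfe, he] at h3
    have h4 : (|s| + ‖q‖) * (‖f‖ + 1) * (4 * G * r) ≤ K * 3 * (4 * G * r) := by
      gcongr
      linarith
    have h5 : c / 2 * 1 ≤ c / 2 * ‖f‖ ^ 2 := by gcongr
    linarith
  have hpos : ∀ h : ℂ, c / 4 * ‖h‖ ^ 2 ≤ qf s q h := by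
    intro h
    rcases eq_or_ne h 0 with rfl | hh
    · simp [qf]
    have hn : 0 < ‖h‖ := norm_pos_iff.2 hh
    have key : c / 4 ≤ qf s q (((‖h‖⁻¹ : ℝ) : ℂ) * h) := by
      have hu : ‖((‖h‖⁻¹ : ℝ) : ℂ) * h‖ = 1 := by
        rw [norm_mul, Complex.norm_real, Real.norm_eq_abs, abs_of_pos (by positivity)]
        field_simp
      rcases le_total 0 (((‖h‖⁻¹ : ℝ) : ℂ) * h).im with hi | hi
      · exact hup _ hu hi
      · have := hup (-(((‖h‖⁻¹ : ℝ) : ℂ) * h)) (by rw [norm_neg, hu]) (by simpa using hi)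
        have e : qf s q (-(((‖h‖⁻¹ : ℝ) : ℂ) * h)) = qf s q (((‖h‖⁻¹ : ℝ) : ℂ) * h) := by
          simp only [qf, Complex.neg_re, Complex.neg_im]; ring
        rwa [e] at this
    rw [qf_smul] at key
    have : ‖h‖ ^ 2 * (c / 4) ≤ ‖h‖ ^ 2 * (‖h‖⁻¹ ^ 2 * qf s q h) := by gcongr
    have e : ‖h‖ ^ 2 * (‖h‖⁻¹ ^ 2 * qf s q h) = qf s q h := by field_simp
    linarith
  intro z hz
  rcases eq_or_ne z 0 with rfl | hz0
  · simp [h0]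
  have hzn : 0 < ‖z‖ := norm_pos_iff.2 hz0
  rcases le_or_gt ‖z‖ r with hzr | hzr
  · have hle : ‖z‖ / r₀ ≤ ρ ^ k₁ := by rw [div_le_iff₀ hr₀]; rwa [hr] at hzr
    obtain ⟨j, hj1, hj2⟩ := exists_nat_pow_near_of_lt_one (x := ‖z‖ / r₀) (y := ρ) (by positivity)
      (hle.trans (pow_le_one₀ hρ.le (by linarith))) hρ (by linarith)
    have hkj : k₁ ≤ j := by
      by_contra hlt; push Not at hlt
      have : ρ ^ k₁ ≤ ρ ^ (j + 1) := pow_le_pow_of_le_one hρ.le (by linarith) hlt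
      linarith
    have hzj : ‖z‖ ≤ ρ ^ j * r₀ := by rwa [div_le_iff₀ hr₀] at hj2
    have hzj' : ρ * (ρ ^ j * r₀) ≤ ‖z‖ := by
      rw [lt_div_iff₀ hr₀, pow_succ] at hj1; linarith
    have e1 := abs_le.1 (hexp j z hz hzj)
    have e2 := abs_le.1 (hexp j (z/2) (half z hz) ((hn2 z).trans hzj))
    rw [hlin, hqf] at e2
    have e3 : (1/2 : ℝ) ^ j ≤ (1/2) ^ k₁ := pow_le_pow_of_le_one (by norm_num) (by norm_num) hkj
    have e4 : ρ ^ 2 * (M * (ρ ^ j * r₀) ^ 2 * (1/2) ^ j) ≤ ρ ^ 2 * (c / 96 * ‖z‖ ^ 2) := by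
      have f1 : (ρ * (ρ ^ j * r₀)) ^ 2 ≤ ‖z‖ ^ 2 := by gcongr
      have f2 : M * (1/2) ^ j * (ρ * (ρ ^ j * r₀)) ^ 2 ≤ M * (1/2) ^ k₁ * ‖z‖ ^ 2 := by gcongr
      have f3 : 96 * M * (1/2) ^ k₁ * ‖z‖ ^ 2 ≤ c * ρ ^ 2 * ‖z‖ ^ 2 := by gcongr
      linarith
    have e5 := le_of_mul_le_mul_left e4 (by positivity)
    have := hpos z
    linarith [e1.1, e1.2, e2.1, e2.2]
  · have e3 := abs_le.1 (hwv z hz)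
    have e4 := abs_le.1 (hwv _ (half z hz))
    have e5 := hv z hz
    have e6 : c * ρ ^ 2 * r ^ 2 ≤ c * 1 ^ 2 * ‖z‖ ^ 2 := by
      gcongr; linarith
    have : 0 ≤ c * ‖z‖ ^ 2 := by positivity
    linarith [e3.1, e3.2, e4.1, e4.2]

/-! ### The concavity maximum principle -/

theorem cube_taylor {a b : ℝ} (ha : 1 ≤ a) (hb : 1 ≤ b) :
    a ^ 3 ≤ b ^ 3 + 3 / 2 * b * (a ^ 2 - b ^ 2) + 3 / 8 * (a ^ 2 - b ^ 2) ^ 2 := by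
  have key : 0 ≤ 3 / 8 * (a + b) ^ 2 - (a + b / 2) := by nlinarith [mul_nonneg (sub_nonneg.2 ha) (sub_nonneg.2 hb)]
  have := mul_nonneg (sq_nonneg (a - b)) key
  nlinarith [this]

theorem cube_taylor_sqrt {t t₀ : ℝ} (ht : 0 ≤ t) (ht₀ : 0 ≤ t₀) :
    √(1 + t) ^ 3 ≤ √(1 + t₀) ^ 3 + 3 / 2 * √(1 + t₀) * (t - t₀) + 3 / 8 * (t - t₀) ^ 2 := by
  have h := cube_taylor (a := √(1 + t)) (b := √(1 + t₀)) (Real.one_le_sqrt.2 (by linarith))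
    (Real.one_le_sqrt.2 (by linarith))
  rw [Real.sq_sqrt (by linarith), Real.sq_sqrt (by linarith)] at h
  have e : 1 + t - (1 + t₀) = t - t₀ := by ring
  rwa [e] at h

theorem norm_sq_add_lin (a b : ℂ) : ‖a + b‖ ^ 2 = ‖a‖ ^ 2 + 2 * lin a b + ‖b‖ ^ 2 := by
  simp only [norm_sq_eq, lin, Complex.add_re, Complex.add_im]; ring

/-- The Hessian at the midpoint is bounded at a maximum of the two-point function: it is dominated
by the average of the Hessians at the end points, which is nonnegative with trace controlled by the
equation. -/
theorem mid_hess_le {D H s₀ s₁ s₂ : ℝ} {p₀ p₁ p₂ q₀ q₁ q₂ P : ℂ} (hD : 1 ≤ D) (hH : 0 ≤ H)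
    (hHD : H * D ≤ 1/100) (hp₀ : ‖p₀‖ ≤ 4 * D) (hp₁ : ‖p₁‖ ≤ 4 * D) (hp₂ : ‖p₂‖ ≤ 4 * D)
    (hP : ‖P‖ ≤ 4 * D) (e₀ : Eqn H p₀ q₀ s₀) (e₁ : Eqn H p₁ q₁ s₁) (e₂ : Eqn H p₂ q₂ s₂)
    (h1 : ∀ μ, qf s₀ q₀ μ ≤ (qf s₁ q₁ μ + qf s₂ q₂ μ) / 2)
    (h2 : ∀ μ, 0 ≤ (qf s₁ q₁ μ + qf s₂ q₂ μ) / 2)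
    (h3 : H ^ 2 * (qf s₀ q₀ (Complex.I * P) - (qf s₁ q₁ (Complex.I * p₁) +
      qf s₂ q₂ (Complex.I * p₂)) / 2) ≤ 0) : |s₀| + ‖q₀‖ ≤ 3 := by
  have avg : ∀ μ, (qf s₁ q₁ μ + qf s₂ q₂ μ) / 2 =
      qf ((s₁ + s₂) / 2) (((1/2 : ℝ) : ℂ) * (q₁ + q₂)) μ := by
    intro μ; simp only [qf, Complex.re_ofReal_mul, Complex.im_ofReal_mul, Complex.add_re,
      Complex.add_im]; ring
  have a1 := le_eig (s := (s₁ + s₂) / 2) (c := 0) (q := ((1/2 : ℝ) : ℂ) * (q₁ + q₂))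
    (fun μ => by rw [← avg]; simpa using h2 μ)
  have a2 : s₀ + ‖q₀‖ ≤ s₁ + s₂ := by
    apply eig_le
    intro μ
    refine (h1 μ).trans ?_
    rw [avg]
    refine (qf_le _ _ _).trans (mul_le_mul_of_nonneg_right ?_ (sq_nonneg _))
    linarith
  obtain ⟨t0, tt⟩ := small_t hD hH hHD hp₀
  obtain ⟨t1, -⟩ := small_t hD hH hHD hp₁
  obtain ⟨t2, -⟩ := small_t hD hH hHD hp₂
  obtain ⟨t3, -⟩ := small_t hD hH hHD hP
  have b0 := one_le_cube (t := H ^ 2 * ‖p₀‖ ^ 2) (by positivity)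
  have b1 := cube_le (t := H ^ 2 * ‖p₁‖ ^ 2) (by positivity) (by linarith)
  have b2 := cube_le (t := H ^ 2 * ‖p₂‖ ^ 2) (by positivity) (by linarith)
  have bnd : ∀ p : ℂ, H ^ 2 * ‖p‖ ^ 2 ≤ 1/100 →
      |H ^ 2 * qf s₀ q₀ (Complex.I * p)| ≤ (|s₀| + ‖q₀‖) * (1/100) := by
    intro p hp
    rw [abs_mul, abs_of_nonneg (sq_nonneg H)]
    have := qf_abs_le s₀ q₀ (Complex.I * p)
    rw [norm_mul, Complex.norm_I, one_mul] at this
    calc H ^ 2 * |qf s₀ q₀ (Complex.I * p)| ≤ H ^ 2 * ((|s₀| + ‖q₀‖) * ‖p‖ ^ 2) := by gcongr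
      _ = (|s₀| + ‖q₀‖) * (H ^ 2 * ‖p‖ ^ 2) := by ring
      _ ≤ _ := by gcongr
  have c0 := abs_le.1 (bnd p₀ (by linarith))
  have c1 := abs_le.1 (bnd P (by linarith))
  unfold Eqn at e₀ e₁ e₂
  have hq := norm_nonneg q₀
  rcases abs_cases s₀ with ⟨h, _⟩ | ⟨h, _⟩ <;> rw [h] at c0 c1 ⊢ <;>
    linarith [c0.1, c0.2, c1.1, c1.2]

set_option maxHeartbeats 1000000 in
/-- The first and second order conditions at an interior maximum of the two-point function are
incompatible with the equation. -/
theorem two_point_alg {D H c k s₀ s₁ s₂ : ℝ} {p₀ p₁ p₂ q₀ q₁ q₂ z m : ℂ} (hD : 1 ≤ D) (hH : 0 ≤ H)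
    (hHD : H * D ≤ 1/100) (hp₀ : ‖p₀‖ ≤ 4 * D) (hp₁ : ‖p₁‖ ≤ 4 * D) (hp₂ : ‖p₂‖ ≤ 4 * D)
    (hm : ‖m‖ ≤ D) (hz : ‖z‖ ≤ 2 * D) (hz0 : z ≠ 0) (hc : 0 < c) (hcD : c * (2 * D ^ 2) ≤ 1)
    (hk : 1 ≤ k) (hk2 : k ≤ 2 * D ^ 2)
    (f1 : p₁ = p₀ + ((2 * c * ‖z‖ ^ 2 : ℝ) : ℂ) * m + ((4 * c * k : ℝ) : ℂ) * z)
    (f2 : p₂ = p₀ + ((2 * c * ‖z‖ ^ 2 : ℝ) : ℂ) * m - ((4 * c * k : ℝ) : ℂ) * z)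
    (e₀ : Eqn H p₀ q₀ s₀) (e₁ : Eqn H p₁ q₁ s₁) (e₂ : Eqn H p₂ q₂ s₂)
    (h2 : ∀ μ ζ : ℂ, qf s₀ q₀ μ - qf s₁ q₁ (μ + ζ / 2) / 2 - qf s₂ q₂ (μ - ζ / 2) / 2 +
      2 * c * (k * ‖ζ‖ ^ 2 + 4 * lin z ζ * lin m μ + ‖z‖ ^ 2 * ‖μ‖ ^ 2) ≤ 0) : False := by
  have hzn : 0 < ‖z‖ := norm_pos_iff.2 hz0
  set N := c * ‖z‖ ^ 2 with hN
  have hN0 : 0 < N := by positivity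
  set d : ℂ := ((2 * c * ‖z‖ ^ 2 : ℝ) : ℂ) * m with hd
  set g : ℂ := ((4 * c * k : ℝ) : ℂ) * z with hg
  set P : ℂ := p₀ + d with hPdef
  have hdn : ‖d‖ ≤ 2 * N * D := by
    rw [hd, norm_mul, Complex.norm_real, Real.norm_eq_abs, abs_of_pos (by positivity)]
    have : 2 * c * ‖z‖ ^ 2 * ‖m‖ ≤ 2 * c * ‖z‖ ^ 2 * D := by gcongr
    rw [hN]; linarith
  have hgn : ‖g‖ = 4 * c * k * ‖z‖ := by
    rw [hg, norm_mul, Complex.norm_real, Real.norm_eq_abs, abs_of_pos (by positivity)]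
  have hP : ‖P‖ ≤ 4 * D := by
    have e : P = ((1/2 : ℝ) : ℂ) * (p₁ + p₂) := by rw [f1, f2]; push_cast; ring
    rw [e, norm_mul, Complex.norm_real]
    norm_num
    linarith [norm_add_le p₁ p₂]
  have i1 : 2 * s₀ - s₁ - s₂ + 4 * N ≤ 0 := by
    have a := h2 1 0
    have b := h2 Complex.I 0
    simp only [zero_div, add_zero, sub_zero, norm_zero, norm_one, Complex.norm_I] at a b
    have l0 : lin z 0 = 0 := by simp [lin]
    rw [l0] at a b
    have t0 := qf_trace s₀ q₀
    have t1 := qf_trace s₁ q₁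
    have t2 := qf_trace s₂ q₂
    rw [hN]; linarith
  have i2 : H ^ 2 * (qf s₀ q₀ (Complex.I * P) - (qf s₁ q₁ (Complex.I * p₁) +
      qf s₂ q₂ (Complex.I * p₂)) / 2) ≤ 0 := by
    have a := h2 ((H : ℂ) * (Complex.I * P)) ((2 * H : ℝ) * (Complex.I * g))
    have r1 : (H : ℂ) * (Complex.I * P) + ((2 * H : ℝ) * (Complex.I * g)) / 2 =
        (H : ℂ) * (Complex.I * p₁) := by rw [f1]; push_cast; ring
    have r2 : (H : ℂ) * (Complex.I * P) - ((2 * H : ℝ) * (Complex.I * g)) / 2 =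
        (H : ℂ) * (Complex.I * p₂) := by rw [f2]; push_cast; ring
    have l0 : lin z ((2 * H : ℝ) * (Complex.I * g)) = 0 := by
      simp only [lin, hg, Complex.mul_re, Complex.mul_im, Complex.I_re, Complex.I_im,
        Complex.ofReal_re, Complex.ofReal_im]; ring
    rw [r1, r2, l0, qf_smul, qf_smul, qf_smul] at a
    have : 0 ≤ 2 * c * (k * ‖((2 * H : ℝ) : ℂ) * (Complex.I * g)‖ ^ 2 +
      4 * 0 * lin m (H * (Complex.I * P)) + ‖z‖ ^ 2 * ‖(H : ℂ) * (Complex.I * P)‖ ^ 2) := by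
      rw [mul_zero, zero_mul, add_zero]
      have : 0 ≤ k := by linarith
      positivity
    linarith
  have hX : |s₀| + ‖q₀‖ ≤ 3 := by
    refine mid_hess_le hD hH hHD hp₀ hp₁ hp₂ hP e₀ e₁ e₂ ?_ ?_ i2
    · intro μ
      have a := h2 μ 0
      have l0 : lin z 0 = 0 := by simp [lin]
      simp only [zero_div, add_zero, sub_zero, norm_zero, l0] at a
      have : 0 ≤ 2 * c * (k * 0 ^ 2 + 4 * 0 * lin m μ + ‖z‖ ^ 2 * ‖μ‖ ^ 2) := by
        rw [mul_zero, zero_mul, add_zero]; positivity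
      linarith
    · intro μ
      have a := h2 0 (2 * μ)
      have l0 : lin m 0 = 0 := by simp [lin]
      have r1 : (0:ℂ) + 2 * μ / 2 = μ := by ring
      have r2 : (0:ℂ) - 2 * μ / 2 = -μ := by ring
      have r3 : qf s₂ q₂ (-μ) = qf s₂ q₂ μ := by
        simp only [qf, Complex.neg_re, Complex.neg_im]; ring
      have r4 : qf s₀ q₀ 0 = 0 := by simp [qf]
      rw [r1, r2, r3, r4, l0, norm_zero] at a
      have : 0 ≤ 2 * c * (k * ‖2 * μ‖ ^ 2 + 4 * lin z (2 * μ) * 0 + ‖z‖ ^ 2 * 0 ^ 2) := by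
        have : 0 ≤ k := by linarith
        rw [mul_zero, add_zero]; positivity
      linarith
  obtain ⟨t0, tt⟩ := small_t hD hH hHD hp₀
  set T := H ^ 2 * D ^ 2 with hT
  have hT0 : 0 ≤ T := by positivity
  have hTs : T ≤ 1/10000 := by
    have : (H * D) ^ 2 ≤ (1/100) ^ 2 := by gcongr
    rw [hT, ← mul_pow]; linarith
  -- the gradient terms at the midpoint
  have j1 : H ^ 2 * |qf s₀ q₀ (Complex.I * P) - qf s₀ q₀ (Complex.I * p₀)| ≤ 48 * T * N := by
    have a := qf_sub_le s₀ q₀ (Complex.I * P) (Complex.I * p₀)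
    rw [← mul_sub, norm_mul, norm_mul, norm_mul, Complex.norm_I, one_mul, one_mul, one_mul] at a
    have e : P - p₀ = d := by rw [hPdef]; ring
    rw [e] at a
    have b : (|s₀| + ‖q₀‖) * (‖P‖ + ‖p₀‖) * ‖d‖ ≤ 3 * (4 * D + 4 * D) * (2 * N * D) := by gcongr
    calc _ ≤ H ^ 2 * (3 * (4 * D + 4 * D) * (2 * N * D)) := by gcongr; linarith
      _ = _ := by rw [hT]; ring
  -- second order Taylor estimate for the right hand sides
  set t₀ := H ^ 2 * ‖p₀‖ ^ 2
  set t₁ := H ^ 2 * ‖p₁‖ ^ 2 with ht₁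
  set t₂ := H ^ 2 * ‖p₂‖ ^ 2 with ht₂
  have k1 := cube_taylor_sqrt (t := t₁) (t₀ := t₀) (by positivity) (by positivity)
  have k2 := cube_taylor_sqrt (t := t₂) (t₀ := t₀) (by positivity) (by positivity)
  have hgg : ‖g‖ ^ 2 ≤ 32 * D ^ 2 * N := by
    rw [hgn]
    have a : c * k ≤ 1 := le_trans (by gcongr) hcD
    have a' : c * k * (c * k) ≤ 1 * (c * (2 * D ^ 2)) := by gcongr
    calc (4 * c * k * ‖z‖) ^ 2 = 16 * ‖z‖ ^ 2 * (c * k * (c * k)) := by ring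
      _ ≤ 16 * ‖z‖ ^ 2 * (1 * (c * (2 * D ^ 2))) := by gcongr
      _ = _ := by rw [hN]; ring
  have hND : N ≤ 2 := by
    have : ‖z‖ ^ 2 ≤ (2 * D) ^ 2 := by gcongr
    have : c * ‖z‖ ^ 2 ≤ c * (2 * D) ^ 2 := by gcongr
    rw [hN]; linarith
  have hdd : ‖d‖ ^ 2 ≤ 8 * D ^ 2 * N := by
    have a : ‖d‖ ^ 2 ≤ (2 * N * D) ^ 2 := by gcongr
    have b : N * N ≤ 2 * N := by gcongr
    have b' : 4 * D ^ 2 * (N * N) ≤ 4 * D ^ 2 * (2 * N) := by gcongr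
    linarith [a, b']
  have hdl : ∀ x : ℂ, ‖x‖ ≤ 4 * D → |lin x d| ≤ 8 * D ^ 2 * N := by
    intro x hx
    have := lin_le x d
    have b : ‖x‖ * ‖d‖ ≤ (4 * D) * (2 * N * D) := by gcongr
    linarith
  have hsum : t₁ + t₂ - 2 * t₀ ≤ 112 * T * N := by
    have e1 := norm_sq_add_lin P g
    have e2 := norm_sq_add_lin P (-g)
    have e3 := norm_sq_add_lin p₀ d
    have l : lin P (-g) = - lin P g := by simp [lin]; ring
    rw [l, norm_neg, ← sub_eq_add_neg, ← f2] at e2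
    rw [← f1] at e1
    rw [← hPdef] at e3
    have := (abs_le.1 (hdl p₀ hp₀)).2
    have : ‖p₁‖ ^ 2 + ‖p₂‖ ^ 2 - 2 * ‖p₀‖ ^ 2 ≤ 112 * D ^ 2 * N := by linarith
    calc t₁ + t₂ - 2 * t₀ = H ^ 2 * (‖p₁‖ ^ 2 + ‖p₂‖ ^ 2 - 2 * ‖p₀‖ ^ 2) := by
          simp only [ht₁, ht₂, t₀]; ring
      _ ≤ H ^ 2 * (112 * D ^ 2 * N) := by gcongr
      _ = _ := by rw [hT]; ring
  have hsq : ∀ x e : ℂ, ‖x‖ ≤ 4 * D → ‖e‖ ^ 2 ≤ 80 * D ^ 2 * N → x = p₀ + e →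
      (H ^ 2 * ‖x‖ ^ 2 - t₀) ^ 2 ≤ 5120 * T ^ 2 * N := by
    intro x e hx he hxe
    have a : |‖x‖ - ‖p₀‖| ≤ ‖e‖ := by
      have := abs_norm_sub_norm_le x p₀
      rwa [hxe, add_sub_cancel_left, ← hxe] at this
    have a2 : (‖x‖ - ‖p₀‖) ^ 2 ≤ ‖e‖ ^ 2 := by rw [← sq_abs]; gcongr
    have b : (‖x‖ + ‖p₀‖) ^ 2 ≤ (4 * D + 4 * D) ^ 2 := by gcongr
    calc (H ^ 2 * ‖x‖ ^ 2 - t₀) ^ 2 = H ^ 4 * ((‖x‖ + ‖p₀‖) ^ 2 * (‖x‖ - ‖p₀‖) ^ 2) := by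
          simp only [t₀]; ring
      _ ≤ H ^ 4 * ((4 * D + 4 * D) ^ 2 * (80 * D ^ 2 * N)) := by
          gcongr; linarith
      _ = _ := by rw [hT]; ring
  have hde : ∀ e : ℂ, ‖e‖ = ‖g‖ → ‖d + e‖ ^ 2 ≤ 80 * D ^ 2 * N := by
    intro e he
    have a : ‖d + e‖ ^ 2 ≤ (‖d‖ + ‖e‖) ^ 2 := by gcongr; exact norm_add_le d e
    rw [he] at a
    linarith [sq_nonneg (‖d‖ - ‖g‖), add_sq ‖d‖ ‖g‖, sub_sq ‖d‖ ‖g‖]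
  have q1 := hsq p₁ (d + g) hp₁ (hde g rfl) (by rw [f1, hPdef]; ring)
  have q2 := hsq p₂ (d + -g) hp₂ (hde (-g) (norm_neg g)) (by rw [f2, hPdef]; ring)
  have hW : √(1 + t₀) ≤ 2 := by
    rw [Real.sqrt_le_left (by norm_num)]; linarith
  have hW0 : 0 ≤ √(1 + t₀) := Real.sqrt_nonneg _
  have w1 : √(1 + t₀) * (t₁ + t₂ - 2 * t₀) ≤ 2 * (112 * T * N) := by
    calc _ ≤ √(1 + t₀) * (112 * T * N) := by gcongr
      _ ≤ _ := by gcongr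
  have hTN : T * N ≤ 1/10000 * N := by gcongr
  have hTN2 : T ^ 2 * N ≤ 1/10000 * N := by
    have : T * (T * N) ≤ 1 * (1/10000 * N) := by gcongr; linarith
    linarith [this]
  unfold Eqn at e₀ e₁ e₂
  have j1' : H ^ 2 * (qf s₀ q₀ (Complex.I * p₀) - qf s₀ q₀ (Complex.I * P)) ≤ 48 * T * N := by
    refine le_trans ?_ j1
    gcongr
    rw [abs_sub_comm]; exact le_abs_self _
  linarith

theorem T2.of_quartic (c a b e f : ℝ) :
    T2 (fun t => c + a * t + b / 2 * t ^ 2 + e * t ^ 3 + f * t ^ 4) a b := by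
  unfold T2
  have h3 : (fun t : ℝ => t ^ 3) =o[𝓝 0] (fun t => t ^ 2) := isLittleO_pow_pow (by norm_num)
  have h4 : (fun t : ℝ => t ^ 4) =o[𝓝 0] (fun t => t ^ 2) := isLittleO_pow_pow (by norm_num)
  refine ((h3.const_mul_left e).add (h4.const_mul_left f)).congr_left ?_
  intro t; ring

theorem T2.congr {φ ψ : ℝ → ℝ} {a b : ℝ} (h : T2 φ a b) (e : ∀ t, φ t = ψ t) : T2 ψ a b := by
  rwa [funext e] at h

theorem tendsto_line (z μ : ℂ) : Tendsto (fun t : ℝ => z + (t:ℂ) * μ) (𝓝 0) (𝓝 z) := by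
  have : Continuous (fun t : ℝ => z + (t:ℂ) * μ) := by fun_prop
  simpa using this.tendsto 0

theorem mid_mem {S : Set ℂ} (hS : Convex ℝ S) {x y : ℂ} (hx : x ∈ S) (hy : y ∈ S) :
    (x + y) / 2 ∈ S := by
  have := hS hx hy (a := 1/2) (b := 1/2) (by norm_num) (by norm_num) (by norm_num)
  convert this using 1
  simp only [Complex.real_smul]; push_cast; ring

set_option maxHeartbeats 1000000 in
/-- Concavity maximum principle with a quadratic gain: if strong midpoint convexity of a solution
holds for pairs with one point on the boundary, it holds for all pairs. -/
theorem two_point {Ω : Set ℂ} {D H c : ℝ} {w : ℂ → ℝ} (g : Geo Ω D) (hconv : Convex ℝ Ω)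
    (hH : 0 ≤ H) (hHD : H * D ≤ 1/100) (h : SolC H Ω w) (hc : 0 < c) (hcD : c * (2 * D ^ 2) ≤ 1)
    (hb : ∀ x ∈ frontier Ω, ∀ y ∈ closure Ω,
      w ((x + y) / 2) - w y / 2 + 2 * D ^ 2 * c * ‖x - y‖ ^ 2 ≤ 0) :
    ∀ x ∈ closure Ω, ∀ y ∈ closure Ω, w ((x + y) / 2) - (w x + w y) / 2 +
      c * (‖x - y‖ ^ 2 * (1 + ‖(x + y) / 2‖ ^ 2)) ≤ 0 := by
  by_contra hcon
  push Not at hcon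
  obtain ⟨x₁, hx₁, y₁, hy₁, hlt⟩ := hcon
  have hcl := hconv.closure
  have hk2 : ∀ m ∈ closure Ω, 1 + ‖m‖ ^ 2 ≤ 2 * D ^ 2 := by
    intro m hm
    have h1 : ‖m‖ ^ 2 ≤ D ^ 2 := by gcongr; exact g.bound m hm
    have h2 : (1:ℝ) ^ 2 ≤ D ^ 2 := by gcongr; exact g.one_le
    linarith
  let φ : ℂ × ℂ → ℝ := fun X => w ((X.1 + X.2) / 2) - (w X.1 + w X.2) / 2 +
      c * (‖X.1 - X.2‖ ^ 2 * (1 + ‖(X.1 + X.2) / 2‖ ^ 2))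
  have hφ : ContinuousOn φ (closure Ω ×ˢ closure Ω) := by
    refine ((h.cont.comp (by fun_prop) ?_).sub (ContinuousOn.div_const
      ((h.cont.comp (by fun_prop) ?_).add (h.cont.comp (by fun_prop) ?_)) 2)).add (by fun_prop)
    · intro X hX; exact mid_mem hcl hX.1 hX.2
    · intro X hX; exact hX.1
    · intro X hX; exact hX.2
  obtain ⟨⟨x, y⟩, ⟨hx, hy⟩, hpos, hmax⟩ := exists_max_interior (g.compact.prod g.compact) hφ
    (x₁ := (x₁, y₁)) ⟨hx₁, hy₁⟩ (c := 0) hlt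
  simp only at hx hy
  have hmcl := mid_mem hcl hx hy
  have hxΩ : x ∈ Ω := by
    by_contra hn
    have hxf : x ∈ frontier Ω := ⟨hx, fun h => hn (interior_subset h)⟩
    have a := hb x hxf y hy
    simp only [φ, h.zero x hxf] at hpos
    have := hk2 _ hmcl
    have : c * (‖x - y‖ ^ 2 * (1 + ‖(x + y) / 2‖ ^ 2)) ≤ c * (‖x - y‖ ^ 2 * (2 * D ^ 2)) := by gcongr
    linarith
  have hyΩ : y ∈ Ω := by
    by_contra hn
    have hyf : y ∈ frontier Ω := ⟨hy, fun h => hn (interior_subset h)⟩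
    have a := hb y hyf x hx
    simp only [φ, h.zero y hyf] at hpos
    have := hk2 _ hmcl
    have : c * (‖x - y‖ ^ 2 * (1 + ‖(x + y) / 2‖ ^ 2)) ≤ c * (‖x - y‖ ^ 2 * (2 * D ^ 2)) := by gcongr
    rw [add_comm y x, norm_sub_rev y x] at a
    linarith
  have hmΩ := mid_mem hconv hxΩ hyΩ
  set m := (x + y) / 2 with hm
  set z := x - y with hz
  have hz0 : z ≠ 0 := by
    intro h0
    have hxy : x = y := by rw [← sub_eq_zero]; exact h0
    have : m = x := by rw [hm, hxy]; ring
    simp only [φ] at hpos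
    rw [← hm, ← hz, this, h0, hxy] at hpos
    simp at hpos
  obtain ⟨p₁, q₁, s₁, j₁, e₁⟩ := h.eqn x hxΩ
  obtain ⟨p₂, q₂, s₂, j₂, e₂⟩ := h.eqn y hyΩ
  obtain ⟨p₀, q₀, s₀, j₀, e₀⟩ := h.eqn m hmΩ
  have key : ∀ μ ζ : ℂ, lin p₀ μ - lin p₁ (μ + ζ / 2) / 2 - lin p₂ (μ - ζ / 2) / 2 +
        c * (2 * (1 + ‖m‖ ^ 2) * lin z ζ + 2 * ‖z‖ ^ 2 * lin m μ) = 0 ∧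
      qf s₀ q₀ μ - qf s₁ q₁ (μ + ζ / 2) / 2 - qf s₂ q₂ (μ - ζ / 2) / 2 +
      2 * c * ((1 + ‖m‖ ^ 2) * ‖ζ‖ ^ 2 + 4 * lin z ζ * lin m μ + ‖z‖ ^ 2 * ‖μ‖ ^ 2) ≤ 0 := by
    intro μ ζ
    have T := (((j₀.line μ).add ((j₁.line (μ + ζ / 2)).const_mul (-1/2))).add
      ((j₂.line (μ - ζ / 2)).const_mul (-1/2))).add
      (T2.of_quartic (c * (‖z‖ ^ 2 * (1 + ‖m‖ ^ 2)))
        (c * (2 * (1 + ‖m‖ ^ 2) * lin z ζ + 2 * ‖z‖ ^ 2 * lin m μ))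
        (2 * c * ((1 + ‖m‖ ^ 2) * ‖ζ‖ ^ 2 + 4 * lin z ζ * lin m μ + ‖z‖ ^ 2 * ‖μ‖ ^ 2))
        (c * (2 * lin z ζ * ‖μ‖ ^ 2 + 2 * lin m μ * ‖ζ‖ ^ 2)) (c * (‖ζ‖ ^ 2 * ‖μ‖ ^ 2)))
    have T' := T.congr (ψ := fun t => φ (x + t * (μ + ζ / 2), y + t * (μ - ζ / 2))) (by
      intro t
      simp only [φ]
      have r1 : (x + t * (μ + ζ / 2) + (y + t * (μ - ζ / 2))) / 2 = m + t * μ := by rw [hm]; ring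
      have r2 : (x + t * (μ + ζ / 2) - (y + t * (μ - ζ / 2))) = z + t * ζ := by rw [hz]; ring
      rw [r1, r2, norm_sq_add_lin, norm_sq_add_lin]
      have l : ∀ a b : ℂ, lin a (t * b) = t * lin a b := by
        intro a b; simp only [lin, Complex.re_ofReal_mul, Complex.im_ofReal_mul]; ring
      have n : ∀ b : ℂ, ‖(t : ℂ) * b‖ ^ 2 = t ^ 2 * ‖b‖ ^ 2 := by
        intro b; rw [norm_mul, mul_pow, Complex.norm_real, Real.norm_eq_abs, sq_abs]
      rw [l, l, n, n]; ring)
    obtain ⟨a1, a2⟩ := T'.le_of_upper (A := 0) (B := 0) (C := 0) (by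
      filter_upwards [(tendsto_line x (μ + ζ / 2)).eventually (g.isOpen.mem_nhds hxΩ),
        (tendsto_line y (μ - ζ / 2)).eventually (g.isOpen.mem_nhds hyΩ)] with t h1 h2
      have := hmax _ (mk_mem_prod (subset_closure h1) (subset_closure h2))
      simpa using this)
    constructor <;> linarith
  have hfirst := fun μ ζ => (key μ ζ).1
  refine two_point_alg (c := c) (k := 1 + ‖m‖ ^ 2) (z := z) (m := m) g.one_le hH hHD
    (h.grad_le g hH hHD hmΩ j₀) (h.grad_le g hH hHD hxΩ j₁) (h.grad_le g hH hHD hyΩ j₂)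
    (g.bound m hmcl) ?_ hz0 hc hcD (by linarith [sq_nonneg ‖m‖]) (hk2 m hmcl) ?_ ?_ e₀ e₁ e₂
    (fun μ ζ => (key μ ζ).2)
  · have := norm_sub_le x y
    linarith [g.bound x hx, g.bound y hy]
  all_goals
    have a1 := hfirst 1 0
    have a2 := hfirst Complex.I 0
    have a3 := hfirst 0 1
    have a4 := hfirst 0 Complex.I
    simp [lin] at a1 a2 a3 a4
    generalize ‖z‖ ^ 2 = n at *
    generalize ‖m‖ ^ 2 = k at *
    apply Complex.ext
    · simp only [Complex.add_re, Complex.sub_re, Complex.re_ofReal_mul]; linarith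
    · simp only [Complex.add_im, Complex.sub_im, Complex.im_ofReal_mul]; linarith

/-- Strong midpoint convexity bounds the Hessian from below. -/
theorem two_point_hess {Ω : Set ℂ} {c : ℝ} {w : ℂ → ℝ} (hΩ : IsOpen Ω) (hc : 0 < c)
    (hZ : ∀ x ∈ closure Ω, ∀ y ∈ closure Ω, w ((x + y) / 2) - (w x + w y) / 2 +
      c * (‖x - y‖ ^ 2 * (1 + ‖(x + y) / 2‖ ^ 2)) ≤ 0) {z p q : ℂ} {s : ℝ} (hz : z ∈ Ω)
    (j : Jet w z p q s) {h : ℂ} (hh : h ≠ 0) : 0 < qf s q h := by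
  have T := ((j.line h).const_mul (-1/2)).add ((j.line (-h)).const_mul (-1/2))
  obtain ⟨-, a⟩ := T.le_of_upper (A := 0) (B := -8 * c * ‖h‖ ^ 2) (C := 0) (by
    filter_upwards [(tendsto_line z h).eventually (hΩ.mem_nhds hz),
        (tendsto_line z (-h)).eventually (hΩ.mem_nhds hz)] with t h1 h2
    have a := hZ _ (subset_closure h1) _ (subset_closure h2)
    have r1 : (z + t * h + (z + t * -h)) / 2 = z := by ring
    have r2 : (z + t * h - (z + t * -h)) = ((2 * t : ℝ) : ℂ) * h := by push_cast; ring
    rw [r1, r2, norm_mul, Complex.norm_real, Real.norm_eq_abs, mul_pow, sq_abs] at a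
    have : 0 ≤ c * ((2 * t) ^ 2 * ‖h‖ ^ 2 * ‖z‖ ^ 2) := by positivity
    simp only [Complex.ofReal_zero, zero_mul, add_zero]
    linarith)
  have e : qf s q (-h) = qf s q h := by simp only [qf, Complex.neg_re, Complex.neg_im]; ring
  rw [e] at a
  have : 0 < c * ‖h‖ ^ 2 := by have := norm_pos_iff.2 hh; positivity
  linarith

/-! ### Strong midpoint convexity -/

/-- A pointwise lower bound on the Hessian integrates to strong midpoint convexity. -/
theorem strong_convex {Ω : Set ℂ} {c : ℝ} {v : ℂ → ℝ} (hconv : Convex ℝ Ω)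
    (hv : ContinuousOn v (closure Ω))
    (hj : ∀ z ∈ Ω, ∃ p q s, Jet v z p q s ∧ c < s - ‖q‖) :
    ∀ x ∈ closure Ω, ∀ y ∈ closure Ω,
      v ((x + y) / 2) - (v x + v y) / 2 + c / 8 * ‖x - y‖ ^ 2 ≤ 0 := by
  have inner : ∀ x ∈ Ω, ∀ y ∈ Ω,
      v ((x + y) / 2) - (v x + v y) / 2 + c / 8 * ‖x - y‖ ^ 2 ≤ 0 := by
    intro x hx y hy
    by_contra hcon
    push Not at hcon
    set d : ℂ := (x - y) / 2 with hd
    set m : ℂ := (x + y) / 2 with hm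
    have hdn : ‖x - y‖ ^ 2 = 4 * ‖d‖ ^ 2 := by
      rw [hd, norm_div, Complex.norm_ofNat]; ring
    have hd0 : d ≠ 0 := by
      intro h0
      have hxy : x - y = 0 := by
        have : x - y = 2 * d := by rw [hd]; ring
        rw [this, h0, mul_zero]
      have e1 : m = y := by rw [hm, sub_eq_zero.1 hxy]; ring
      rw [hxy, e1, sub_eq_zero.1 hxy] at hcon
      simp at hcon
    have hdp : 0 < ‖d‖ ^ 2 := by have := norm_pos_iff.2 hd0; positivity
    have hmem : ∀ t ∈ Icc (-1:ℝ) 1, m + t * d ∈ Ω := by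
      intro t ht
      have := hconv hx hy (a := (1 + t) / 2) (b := (1 - t) / 2) (by linarith [ht.1])
        (by linarith [ht.2]) (by ring)
      convert this using 1
      simp only [Complex.real_smul, hm, hd]; push_cast; ring
    set a := (v x - v y) / 2 with ha
    let χ : ℝ → ℝ := fun t => v (m + t * d) + (-(c / 2 * ‖d‖ ^ 2 * t ^ 2) - a * t)
    have hχ : ContinuousOn χ (Icc (-1) 1) := by
      refine ContinuousOn.add (hv.comp (by fun_prop) fun t ht => subset_closure (hmem t ht)) (by fun_prop)
    have hx' : m + ((1:ℝ):ℂ) * d = x := by rw [hm, hd]; push_cast; ring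
    have hy' : m + ((-1:ℝ):ℂ) * d = y := by rw [hm, hd]; push_cast; ring
    obtain ⟨t, ht, hpos, hmax⟩ := exists_max_interior isCompact_Icc hχ (x₁ := 0) (by simp)
      (c := (v x + v y) / 2 - c / 2 * ‖d‖ ^ 2) (by
        simp only [χ, Complex.ofReal_zero, zero_mul, add_zero]
        rw [hdn] at hcon
        linarith)
    have h1 : t ≠ 1 := by
      rintro rfl
      simp only [χ] at hpos
      rw [hx'] at hpos; linarith
    have h2 : t ≠ -1 := by
      rintro rfl
      simp only [χ] at hpos
      rw [hy'] at hpos; linarith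
    have htI : t ∈ Ioo (-1:ℝ) 1 := ⟨lt_of_le_of_ne ht.1 (Ne.symm h2), lt_of_le_of_ne ht.2 h1⟩
    obtain ⟨p, q, s, j, hs⟩ := hj _ (hmem t ht)
    have T := ((j.line d).add (T2.of_quartic (-(c / 2 * ‖d‖ ^ 2 * t ^ 2) - a * t)
      (-(c * ‖d‖ ^ 2 * t) - a) (-(c * ‖d‖ ^ 2)) 0 0)).congr (ψ := fun τ => χ (t + τ)) (by
        intro τ; simp only [χ]; push_cast
        rw [show m + t * d + τ * d = m + (t + τ) * d by ring]; ring)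
    obtain ⟨-, b⟩ := T.le_of_upper (A := 0) (B := 0) (C := 0) (by
      have ht' : Tendsto (fun τ : ℝ => t + τ) (𝓝 0) (𝓝 t) := by
        have : Continuous (fun τ : ℝ => t + τ) := by fun_prop
        simpa using this.tendsto 0
      filter_upwards [ht'.eventually (Icc_mem_nhds htI.1 htI.2)] with τ hτ
      have := hmax _ hτ
      simpa using this)
    have := le_qf s q d
    have : c * ‖d‖ ^ 2 < (s - ‖q‖) * ‖d‖ ^ 2 := by gcongr
    linarith
  intro x hx y hy
  have hcl := hconv.closure
  have hcont : ContinuousOn (fun X : ℂ × ℂ => v ((X.1 + X.2) / 2) - (v X.1 + v X.2) / 2 +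
      c / 8 * ‖X.1 - X.2‖ ^ 2) (closure (Ω ×ˢ Ω)) := by
    rw [closure_prod_eq]
    refine ((hv.comp (by fun_prop) ?_).sub (ContinuousOn.div_const
      ((hv.comp (by fun_prop) ?_).add (hv.comp (by fun_prop) ?_)) 2)).add (by fun_prop)
    · intro X hX; exact mid_mem hcl hX.1 hX.2
    · intro X hX; exact hX.1
    · intro X hX; exact hX.2
  have := le_on_closure (s := Ω ×ˢ Ω) (f := fun X : ℂ × ℂ => v ((X.1 + X.2) / 2) -
    (v X.1 + v X.2) / 2 + c / 8 * ‖X.1 - X.2‖ ^ 2) (g := fun _ => 0)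
    (fun X hX => inner X.1 hX.1 X.2 hX.2) hcont continuousOn_const
    (x := (x, y)) (by rw [closure_prod_eq]; exact ⟨hx, hy⟩)
  exact this

/-! ### Convexity for small mean curvature -/

/-- Uniform boundary regularity of class `C^{2,α}`: after a rotation by `c`, near each boundary
point `ξ` the set lies above the tangent line, contains the part of a disc above a parabola of
opening `G`, and its boundary is a quadratic graph up to an error of order `2 + α`. -/
def Frames (α G R : ℝ) (Ω : Set ℂ) : Prop :=
  ∀ ξ ∈ frontier Ω, ∃ (c : ℂ) (s₀ : ℝ) (q₀ : ℂ), ‖c‖ = 1 ∧ |s₀| ≤ G ∧ ‖q₀‖ ≤ G ∧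
    (∀ ζ : ℂ, ξ + c * ζ ∈ Ω → 0 < ζ.im) ∧
    (∀ ζ : ℂ, ‖ζ‖ < R → G * ‖ζ‖ ^ 2 < ζ.im → ξ + c * ζ ∈ Ω) ∧
    (∀ ζ : ℂ, ξ + c * ζ ∈ frontier Ω → ‖ζ‖ ≤ R →
      |ζ.im + qf s₀ q₀ ζ / 2| ≤ G * ‖ζ‖ ^ 2 * ‖ζ‖ ^ α)

theorem Eqn.rotate {H s : ℝ} {p q b : ℂ} (hb : ‖b‖ = 1) (e : Eqn H p q s) :
    Eqn H (starRingEnd ℂ b * p) (b ^ 2 * q) s := by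
  unfold Eqn at *
  have h1 : ‖starRingEnd ℂ b * p‖ = ‖p‖ := by rw [norm_mul, RCLike.norm_conj, hb, one_mul]
  have hbb : b * starRingEnd ℂ b = 1 := by
    rw [Complex.mul_conj, Complex.normSq_eq_norm_sq, hb]; norm_num
  have h2 : qf s (b ^ 2 * q) (Complex.I * (starRingEnd ℂ b * p)) = qf s q (Complex.I * p) := by
    rw [qf_eq, qf_eq, norm_mul, norm_mul Complex.I p, h1]
    congr 2
    calc b ^ 2 * q * (Complex.I * (starRingEnd ℂ b * p)) ^ 2
        = (b * starRingEnd ℂ b) ^ 2 * (q * (Complex.I * p) ^ 2) := by ring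
      _ = _ := by rw [hbb]; ring
  rw [h1, h2, e]

/-- The affine homeomorphism `ζ ↦ ξ + b ζ`. -/
def frameHomeo (ξ b : ℂ) (hb : b ≠ 0) : ℂ ≃ₜ ℂ :=
  (Homeomorph.mulLeft₀ b hb).trans (Homeomorph.addLeft ξ)

theorem frameHomeo_apply (ξ b : ℂ) (hb : b ≠ 0) (ζ : ℂ) : frameHomeo ξ b hb ζ = ξ + b * ζ := rfl

set_option maxHeartbeats 1000000 in
/-- Strong midpoint convexity of a solution for pairs having one point on the boundary. -/
theorem bdry_convex {Ω : Set ℂ} {α G R D H c ρ δ r₀ r : ℝ} {k₁ : ℕ} {w v : ℂ → ℝ} (hα : 0 < α)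
    (g : Geo Ω D) (hconv : Convex ℝ Ω) (hG : 1 ≤ G) (fr : Frames α G R Ω) (hH : 0 ≤ H)
    (hHD : H * D ≤ 1/100) (h : SolC H Ω w) (hc : 0 < c) (hρ : 0 < ρ) (hρ1 : ρ ≤ 1/256)
    (hρα : ρ ^ α ≤ 1/2) (hδ : 0 < δ) (hδ1 : δ ≤ 1/100)
    (himp : ∀ (U : Set ℂ) (E : ℂ → ℝ), Normalized δ U E → ∃ a b : ℝ, |a| ≤ 8 ∧ |b| ≤ 8 ∧
      ∀ z ∈ closure U, ‖z‖ ≤ 1/4 → |E z - a * z.im - b * (z ^ 2).im| ≤ 32 * ‖z‖ ^ 3 + ρ ^ 2 / 8)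
    (hr₀ : 0 < r₀) (hr₁ : r₀ ≤ 1) (hrR : r₀ ≤ R) (hrδ : 1000 * G ^ 3 * r₀ ≤ δ)
    (hHK : 10 * H * (400 * G * (4 * D + 1) / r₀) ^ 3 ≤ δ)
    (hr : r = ρ ^ k₁ * r₀) (hrlt : r < r₀)
    (hk : 96 * (200 * G * (4 * D + 1) / r₀) * (1/2) ^ k₁ ≤ c * ρ ^ 2)
    (hκ : 4 * G * r ≤ 1) (hKr : 48 * (400 * G * (4 * D + 1) / r₀) * G * r ≤ c)
    {τ : ℝ} (hτ : 48 * τ ≤ c * ρ ^ 2 * r ^ 2)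
    (hwv : ∀ z ∈ closure Ω, |w z - v z| ≤ τ) (hv0 : ∀ z ∈ frontier Ω, v z = 0)
    (hv : ∀ x ∈ closure Ω, ∀ y ∈ closure Ω,
      v ((x + y) / 2) - (v x + v y) / 2 + c / 8 * ‖x - y‖ ^ 2 ≤ 0) :
    ∀ ξ ∈ frontier Ω, ∀ y ∈ closure Ω, w ((ξ + y) / 2) - w y / 2 ≤ - (c / 64) * ‖ξ - y‖ ^ 2 := by
  intro ξ hξ y hy
  have hD := g.one_le
  obtain ⟨b, s₀, q₀, hb, hs₀, hq₀, up, full, bd⟩ := fr ξ hξ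
  have hb0 : b ≠ 0 := by intro h0; rw [h0, norm_zero] at hb; norm_num at hb
  set Φ := frameHomeo ξ b hb0 with hΦ
  set U : Set ℂ := Φ ⁻¹' Ω with hU
  have hUcl : closure U = Φ ⁻¹' closure Ω := (Φ.preimage_closure Ω).symm
  have hUfr : frontier U = Φ ⁻¹' frontier Ω := (Φ.preimage_frontier Ω).symm
  have hξcl : ξ ∈ closure Ω := hξ.1
  have S : Stage G (4 * D + 1) δ r₀ H U (fun ζ => w (ξ + b * ζ)) s₀ q₀ := by
    refine ⟨hG, by linarith, hδ, hδ1, hr₀, hr₁, hrδ, hH, hHK, g.isOpen.preimage Φ.continuous, up,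
      fun z hz hz2 => full z (by linarith) hz2, hs₀, hq₀, ?_, ?_, ?_⟩
    · rw [hUcl]
      exact h.cont.comp Φ.continuous.continuousOn (mapsTo_preimage _ _)
    · intro z hz
      rw [hUfr] at hz
      exact h.zero _ hz
    · intro z hz
      obtain ⟨p, q, s, j, e⟩ := h.eqn _ hz
      have j' := Jet.comp_affine (w := w) (x₀ := ξ) (c := b) (ζ := z) j
      rw [hb, one_pow, one_mul] at j'
      refine ⟨_, _, _, j', e.rotate hb, ?_⟩
      rw [norm_mul, RCLike.norm_conj, hb, one_mul]
      have := h.grad_le g hH hHD hz j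
      linarith
  obtain ⟨p, q, s, hsq, hexp⟩ := S.expansion hρ hρ1 himp (by
      intro z hz
      rw [hUcl] at hz
      have a1 := h.lip g hH hHD _ hz _ hξcl
      have a2 := h.lip g hH hHD _ hξcl _ hz
      rw [norm_sub_rev] at a2
      rw [frameHomeo_apply, add_sub_cancel_left, norm_mul, hb, one_mul, h.zero ξ hξ] at a1 a2
      rw [abs_le]; constructor <;> linarith) (by
      intro k ζ hζ hζk
      rw [hUfr] at hζ
      have hρk : ρ ^ k ≤ 1 := pow_le_one₀ hρ.le (by linarith)
      have e1 : ρ ^ k * r₀ ≤ r₀ := by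
        calc ρ ^ k * r₀ ≤ 1 * r₀ := by gcongr
          _ = r₀ := one_mul _
      refine (bd ζ hζ (by linarith)).trans ?_
      have e2 : ‖ζ‖ ^ α ≤ (1/2) ^ k := by
        have e3 : ‖ζ‖ ≤ ρ ^ k := hζk.trans (by
          calc ρ ^ k * r₀ ≤ ρ ^ k * 1 := by gcongr
            _ = _ := mul_one _)
        calc ‖ζ‖ ^ α ≤ (ρ ^ k) ^ α := Real.rpow_le_rpow (norm_nonneg _) e3 hα.le
          _ = (ρ ^ α) ^ k := by
            rw [← Real.rpow_natCast, ← Real.rpow_mul hρ.le, mul_comm, Real.rpow_mul hρ.le,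
              Real.rpow_natCast]
          _ ≤ _ := by gcongr
      gcongr)
  have hpos := bdry_pos (Ω := U) (w := fun ζ => w (ξ + b * ζ)) (v := fun ζ => v (ξ + b * ζ)) (τ := τ)
    hG hsq (by positivity) hc hρ (by linarith) hr₀ hr hk hκ hKr hτ
    (fun z hz hz2 => full z (by linarith) hz2) (by
      intro z hz
      rw [hUcl] at hz ⊢
      have := mid_mem hconv.closure hξcl hz
      simp only [mem_preimage, frameHomeo_apply, hΦ] at this ⊢
      convert this using 1; ring) (by simpa using h.zero ξ hξ) hexp (by
      intro z hz
      rw [hUcl] at hz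
      have a := hv ξ hξcl _ hz
      rw [hv0 ξ hξ] at a
      have e : (ξ + Φ z) / 2 = ξ + b * (z / 2) := by rw [hΦ, frameHomeo_apply]; ring
      rw [e, norm_sub_rev, hΦ, frameHomeo_apply, add_sub_cancel_left, norm_mul, hb, one_mul] at a
      linarith) (fun z hz => hwv _ (by rwa [hUcl] at hz))
  set ζ := Φ.symm y with hζ
  have e1 : ξ + b * ζ = y := Φ.apply_symm_apply y
  have hζcl : ζ ∈ closure U := by
    rw [hUcl, mem_preimage, hζ, Φ.apply_symm_apply]; exact hy
  have a := hpos ζ hζcl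
  have e2 : ξ + b * (ζ / 2) = (ξ + y) / 2 := by rw [← e1]; ring
  rw [e1, e2] at a
  have e3 : ‖ξ - y‖ = ‖ζ‖ := by
    rw [norm_sub_rev, ← e1, add_sub_cancel_left, norm_mul, hb, one_mul]
  rw [e3]; exact a

/-- Strict convexity of `w` for small `H` when the torsion function `v` is uniformly convex. -/
theorem convex_small {Ω : Set ℂ} {α G R D c₀ : ℝ} {v : ℂ → ℝ} (hα : 0 < α)
    (g : Geo Ω D) (hconv : Convex ℝ Ω) (hG : 1 ≤ G) (hR : 0 < R) (fr : Frames α G R Ω)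
    (hv : SolC 0 Ω v) (hc₀ : 0 < c₀) (hvj : ∀ z ∈ Ω, ∀ p q s, Jet v z p q s → c₀ < s - ‖q‖) :
    ∃ ε : ℝ, 0 < ε ∧ ∀ H : ℝ, 0 < H → H < ε → ∀ w : ℂ → ℝ, SolC H Ω w →
      ∀ z ∈ Ω, ∀ p q s, Jet w z p q s → ∀ h : ℂ, h ≠ 0 → 0 < qf s q h := by
  have hD := g.one_le
  set c := min c₀ 1 with hcdef
  have hc : 0 < c := lt_min hc₀ one_pos
  -- `ρ ^ α ≤ 1/2` makes the `C^{2,α}` error of the boundary gain a factor `1/2` at each step.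
  obtain ⟨ρ, hρ, hρ1, hρα⟩ : ∃ ρ : ℝ, 0 < ρ ∧ ρ ≤ 1/256 ∧ ρ ^ α ≤ 1/2 := by
    have hx : (0:ℝ) < (1/2) ^ (1/α) := by positivity
    refine ⟨min (1/256) ((1/2) ^ (1/α)), lt_min (by norm_num) hx, min_le_left _ _, ?_⟩
    calc _ ≤ (((1:ℝ)/2) ^ (1/α)) ^ α :=
          Real.rpow_le_rpow (by positivity) (min_le_right _ _) hα.le
      _ = 1/2 := by
          rw [← Real.rpow_mul (by norm_num)]
          rw [one_div_mul_cancel hα.ne', Real.rpow_one]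
  obtain ⟨δ, hδ, hδ1, himp⟩ := improvement (ρ ^ 2 / 8) (by positivity)
  set r₀ := min 1 (min R (δ / (1000 * G ^ 3))) with hr₀def
  have hr₀ : 0 < r₀ := by positivity
  have hr₁ : r₀ ≤ 1 := min_le_left _ _
  have hrR : r₀ ≤ R := (min_le_right _ _).trans (min_le_left _ _)
  have hrδ : 1000 * G ^ 3 * r₀ ≤ δ := by
    have : r₀ ≤ δ / (1000 * G ^ 3) := (min_le_right _ _).trans (min_le_right _ _)
    rw [le_div_iff₀ (by positivity)] at this
    linarith
  -- `M` and `K` bound the remainder and the coefficients in the boundary expansion; `4 D` is the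
  -- Lipschitz constant of `w`.
  set M := 200 * G * (4 * D + 1) / r₀ with hM
  set K := 400 * G * (4 * D + 1) / r₀ with hK
  have hM0 : 0 < M := by positivity
  have hK0 : 0 < K := by positivity
  -- At the fixed scale `r = ρ ^ k₁ * r₀` the remainder is small compared with the convexity `c`.
  obtain ⟨k₀, hk₀⟩ := exists_pow_lt_of_lt_one (y := (1/2 : ℝ))
    (x := min (c * ρ ^ 2 / (96 * M)) (min (1 / (4 * G * r₀)) (c / (48 * K * G * r₀))))
    (by positivity) (by norm_num)
  set k₁ := k₀ + 1 with hk₁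
  have hk₁' : (1/2 : ℝ) ^ k₁ ≤ (1/2) ^ k₀ := by
    rw [hk₁, pow_succ]; have : (0:ℝ) < (1/2) ^ k₀ := by positivity
    linarith
  have u1 : (1/2 : ℝ) ^ k₁ * (96 * M) ≤ c * ρ ^ 2 := by
    rw [← le_div_iff₀ (by positivity)]
    exact hk₁'.trans (hk₀.le.trans (min_le_left _ _))
  have u2 : (1/2 : ℝ) ^ k₁ * (4 * G * r₀) ≤ 1 := by
    rw [← le_div_iff₀ (by positivity)]
    exact hk₁'.trans (hk₀.le.trans ((min_le_right _ _).trans (min_le_left _ _)))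
  have u3 : (1/2 : ℝ) ^ k₁ * (48 * K * G * r₀) ≤ c := by
    rw [← le_div_iff₀ (by positivity)]
    exact hk₁'.trans (hk₀.le.trans ((min_le_right _ _).trans (min_le_right _ _)))
  have hρk : ρ ^ k₁ ≤ (1/2) ^ k₁ := by gcongr; linarith
  set r := ρ ^ k₁ * r₀ with hr
  have hr0 : 0 < r := by positivity
  have hrlt : r < r₀ := by
    have : ρ ^ k₁ < 1 := pow_lt_one₀ hρ.le (by linarith) (by omega)
    calc r < 1 * r₀ := by rw [hr]; gcongr
      _ = r₀ := one_mul _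
  -- The last bound makes the distance `32 H² D⁴` between `w` and `v` small at scale `r`.
  set ε := min 1 (min (1 / (100 * D)) (min (δ / (10 * K ^ 3)) (c * ρ ^ 2 * r ^ 2 / (1536 * D ^ 4)))) with hε
  have hε0 : 0 < ε := by positivity
  refine ⟨ε, hε0, fun H hH hHε w h => ?_⟩
  have v1 : H ≤ 1 := hHε.le.trans (min_le_left _ _)
  have v2 : H * (100 * D) ≤ 1 := by
    rw [← le_div_iff₀ (by positivity)]
    exact hHε.le.trans ((min_le_right _ _).trans (min_le_left _ _))
  have v3 : H * (10 * K ^ 3) ≤ δ := by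
    rw [← le_div_iff₀ (by positivity)]
    exact hHε.le.trans ((min_le_right _ _).trans ((min_le_right _ _).trans (min_le_left _ _)))
  have v4 : H * (1536 * D ^ 4) ≤ c * ρ ^ 2 * r ^ 2 := by
    rw [← le_div_iff₀ (by positivity)]
    exact hHε.le.trans ((min_le_right _ _).trans ((min_le_right _ _).trans (min_le_right _ _)))
  have hHD : H * D ≤ 1/100 := by linarith
  have hclose := h.close_of_convex_v g hH hHD hv (fun z hz p q s j => by
    have := hvj z hz p q s j; linarith)
  have hbd := bdry_convex (c := c) (r := r) (k₁ := k₁) (τ := 32 * H ^ 2 * D ^ 4) hα g hconv hG fr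
    hH.le hHD h hc hρ hρ1 hρα hδ hδ1 himp hr₀ hr₁
    hrR hrδ (by linarith) hr hrlt (by linarith) (by
      have : 4 * G * r ≤ (1/2) ^ k₁ * (4 * G * r₀) := by
        calc 4 * G * r = ρ ^ k₁ * (4 * G * r₀) := by rw [hr]; ring
          _ ≤ _ := by gcongr
      linarith) (by
      have : 48 * K * G * r ≤ (1/2) ^ k₁ * (48 * K * G * r₀) := by
        calc 48 * K * G * r = ρ ^ k₁ * (48 * K * G * r₀) := by rw [hr]; ring
          _ ≤ _ := by gcongr
      linarith) (by
      have : H * H * (1536 * D ^ 4) ≤ 1 * H * (1536 * D ^ 4) := by gcongr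
      linarith) hclose hv.zero (strong_convex hconv hv.cont fun z hz => by
        obtain ⟨p, q, s, j, _⟩ := hv.eqn z hz
        exact ⟨p, q, s, j, lt_of_le_of_lt (min_le_left _ _) (hvj z hz p q s j)⟩)
  have e : c / (128 * D ^ 2) * (2 * D ^ 2) = c / 64 := by field_simp; norm_num
  have hc1 : c ≤ 1 := min_le_right _ _
  have hZ := two_point (c := c / (128 * D ^ 2)) g hconv hH.le hHD h (by positivity)
    (by rw [e]; linarith) (by
      intro x hx y hy
      have := hbd x hx y hy
      have e' : 2 * D ^ 2 * (c / (128 * D ^ 2)) = c / 64 := by rw [← e]; ring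
      rw [e']
      linarith)
  intro z hz p q s j d hd
  exact two_point_hess g.isOpen (by positivity) hZ hz j hd

/-! ### Failure of convexity for small mean curvature -/

theorem convexOn_mid {Ω : Set ℂ} {w : ℂ → ℝ} (hw : ConvexOn ℝ Ω w) {z h : ℂ} {t : ℝ}
    (h1 : z + t * h ∈ Ω) (h2 : z + t * -h ∈ Ω) : 2 * w z ≤ w (z + t * h) + w (z + t * -h) := by
  have a := hw.2 h1 h2 (show (0:ℝ) ≤ 1/2 by norm_num) (show (0:ℝ) ≤ 1/2 by norm_num) (by norm_num)
  have e : (1/2 : ℝ) • (z + t * h) + (1/2 : ℝ) • (z + t * -h) = z := by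
    simp only [Complex.real_smul]; push_cast; ring
  rw [e] at a
  simp only [smul_eq_mul] at a
  linarith

theorem convexOn_jet {Ω : Set ℂ} {w : ℂ → ℝ} (hΩ : IsOpen Ω) (hw : ConvexOn ℝ Ω w) {z p q : ℂ}
    {s : ℝ} (hz : z ∈ Ω) (j : Jet w z p q s) : ‖q‖ ≤ s := by
  have := le_eig (s := s) (q := q) (c := 0) (by
    intro h
    have T := ((j.line h).const_mul (-1/2)).add ((j.line (-h)).const_mul (-1/2))
    obtain ⟨-, a⟩ := T.le_of_upper (A := 0) (B := 0) (C := 0) (by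
      filter_upwards [(tendsto_line z h).eventually (hΩ.mem_nhds hz),
        (tendsto_line z (-h)).eventually (hΩ.mem_nhds hz)] with t h1 h2
      have := convexOn_mid hw h1 h2
      simp only [Complex.ofReal_zero, zero_mul, add_zero]
      linarith)
    have e : qf s q (-h) = qf s q h := by simp only [qf, Complex.neg_re, Complex.neg_im]; ring
    rw [e] at a
    linarith)
  linarith

/-- Failure of convexity for small `H` when the torsion function has a negative Hessian direction:
a convex `w` would be uniformly close to `v` and so violate a strict midpoint inequality. -/
theorem nonconvex_small {Ω : Set ℂ} {D : ℝ} {v : ℂ → ℝ} (g : Geo Ω D) (hv : SolC 0 Ω v)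
    {x₀ p q : ℂ} {s : ℝ} (hx₀ : x₀ ∈ Ω) (j : Jet v x₀ p q s) (hneg : s < ‖q‖) :
    ∃ ε : ℝ, 0 < ε ∧ ∀ H : ℝ, 0 < H → H < ε → ∀ w : ℂ → ℝ, SolC H Ω w → ¬ ConvexOn ℝ Ω w := by
  have hD := g.one_le
  obtain ⟨μ, hμ⟩ : ∃ μ, qf s q μ < 0 := by
    by_contra hcon
    push Not at hcon
    have := le_eig (s := s) (q := q) (c := 0) (fun μ => by simpa using hcon μ)
    linarith
  obtain ⟨t, h1, h2, hgap⟩ : ∃ t : ℝ, x₀ + t * μ ∈ Ω ∧ x₀ + t * -μ ∈ Ω ∧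
      v (x₀ + t * μ) + v (x₀ + t * -μ) < 2 * v x₀ := by
    by_contra hcon
    push Not at hcon
    have T := ((j.line μ).const_mul (-1/2)).add ((j.line (-μ)).const_mul (-1/2))
    obtain ⟨-, a⟩ := T.le_of_upper (A := 0) (B := 0) (C := 0) (by
      filter_upwards [(tendsto_line x₀ μ).eventually (g.isOpen.mem_nhds hx₀),
        (tendsto_line x₀ (-μ)).eventually (g.isOpen.mem_nhds hx₀)] with t h1 h2
      have := hcon t h1 h2
      simp only [Complex.ofReal_zero, zero_mul, add_zero]
      linarith)
    have e : qf s q (-μ) = qf s q μ := by simp only [qf, Complex.neg_re, Complex.neg_im]; ring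
    rw [e] at a
    linarith
  set η := 2 * v x₀ - (v (x₀ + t * μ) + v (x₀ + t * -μ)) with hη
  have hη0 : 0 < η := by linarith
  refine ⟨min 1 (min (1 / (100 * D)) (η / (256 * D ^ 4))), by positivity, fun H hH hHε w h hw => ?_⟩
  have v1 : H ≤ 1 := hHε.le.trans (min_le_left _ _)
  have v2 : H * (100 * D) ≤ 1 := by
    rw [← le_div_iff₀ (by positivity)]
    exact hHε.le.trans ((min_le_right _ _).trans (min_le_left _ _))
  have v3 : H * (256 * D ^ 4) ≤ η := by
    rw [← le_div_iff₀ (by positivity)]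
    exact hHε.le.trans ((min_le_right _ _).trans (min_le_right _ _))
  have hcl := h.close_of_convex_w g hH (by linarith) hv
    (fun z hz p q s j => convexOn_jet g.isOpen hw hz j)
  have c0 := abs_le.1 (hcl _ (subset_closure hx₀))
  have c1 := abs_le.1 (hcl _ (subset_closure h1))
  have c2 := abs_le.1 (hcl _ (subset_closure h2))
  have := convexOn_mid hw h1 h2
  have : H * H * (256 * D ^ 4) ≤ 1 * H * (256 * D ^ 4) := by gcongr
  linarith [c0.1, c0.2, c1.1, c1.2, c2.1, c2.2]

/-! ### The mean curvature operator in nondivergence form -/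

theorem grad_apply (u : E2 → ℝ) (x : E2) (i : Fin 2) : gradient u x i = fderiv ℝ u x (e2 i) := by
  have h := inner_gradient_left (𝕜 := ℝ) (f := u) (x := x) (y := e2 i)
  rw [← h, e2, EuclideanSpace.inner_single_right]
  simp

theorem hess2_eq {u : E2 → ℝ} {x : E2} (hu : DifferentiableAt ℝ (fderiv ℝ u) x) (a b : E2) :
    hess2 u x a b = fderiv ℝ (fderiv ℝ u) x a b := by
  unfold hess2
  rw [fderiv_clm_apply hu (differentiableAt_const b)]
  simp

theorem differentiableAt_fderiv {u : E2 → ℝ} {x : E2} (hu : ContDiffAt ℝ 2 u x) :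
    DifferentiableAt ℝ (fderiv ℝ u) x :=
  (hu.fderiv_right (m := 1) (by norm_num)).differentiableAt (by norm_num)

theorem hess2_symm {u : E2 → ℝ} {x : E2} (hu : ContDiffAt ℝ 2 u x) (a b : E2) :
    hess2 u x a b = hess2 u x b a := by
  rw [hess2_eq (differentiableAt_fderiv hu), hess2_eq (differentiableAt_fderiv hu)]
  exact hu.isSymmSndFDerivAt (by simp) a b

theorem hasDerivAt_inv_sqrt {t : ℝ} (ht : 0 < t) :
    HasDerivAt (fun t => (√t)⁻¹) (-(1 / (2 * √t ^ 3))) t := by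
  have h := (Real.hasDerivAt_sqrt ht.ne').inv (Real.sqrt_pos.2 ht).ne'
  refine HasDerivAt.congr_deriv h ?_
  rw [neg_div, div_div]
  congr 2
  ring

/-- The mean curvature operator in nondivergence form. -/
theorem mcDiv_eq {u : E2 → ℝ} {x : E2} (hu : ContDiffAt ℝ 2 u x) {a₀ a₁ : ℝ}
    (ha₀ : a₀ = fderiv ℝ u x (e2 0)) (ha₁ : a₁ = fderiv ℝ u x (e2 1)) :
    mcDiv u x * √(1 + (a₀ ^ 2 + a₁ ^ 2)) ^ 3 =
      (1 + (a₀ ^ 2 + a₁ ^ 2)) * (hess2 u x (e2 0) (e2 0) + hess2 u x (e2 1) (e2 1)) -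
      (a₀ ^ 2 * hess2 u x (e2 0) (e2 0) + 2 * a₀ * a₁ * hess2 u x (e2 0) (e2 1) +
        a₁ ^ 2 * hess2 u x (e2 1) (e2 1)) := by
  set Gc : Fin 2 → E2 → ℝ := fun i y => fderiv ℝ u y (e2 i) with hGc
  have hd := differentiableAt_fderiv hu
  have hG : ∀ i, HasFDerivAt (Gc i) (fderiv ℝ (Gc i) x) x := fun i =>
    (hd.clm_apply (differentiableAt_const (e2 i))).hasFDerivAt
  have hpos : 0 < 1 + (Gc 0 x ^ 2 + Gc 1 x ^ 2) := by positivity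
  have hN : HasFDerivAt (fun y => 1 + (Gc 0 y ^ 2 + Gc 1 y ^ 2))
      ((2 * Gc 0 x) • fderiv ℝ (Gc 0) x + (2 * Gc 1 x) • fderiv ℝ (Gc 1) x) x := by
    have h0 := HasFDerivAt.pow (hG 0) 2
    have h1 := HasFDerivAt.pow (hG 1) 2
    have := (HasFDerivAt.add h0 h1).const_add 1
    refine HasFDerivAt.congr_fderiv this ?_
    simp
  have hI := (hasDerivAt_inv_sqrt hpos).comp_hasFDerivAt x hN
  have hF : ∀ i, HasFDerivAt (fun y => (√(1 + (Gc 0 y ^ 2 + Gc 1 y ^ 2)))⁻¹ * Gc i y) _ x :=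
    fun i => hI.fun_mul (hG i)
  have hcomp : ∀ i y, ((√(1 + ‖gradient u y‖ ^ 2))⁻¹ • gradient u y) i =
      (√(1 + (Gc 0 y ^ 2 + Gc 1 y ^ 2)))⁻¹ * Gc i y := by
    intro i y
    rw [EuclideanSpace.norm_sq_eq, Fin.sum_univ_two]
    simp only [PiLp.smul_apply, smul_eq_mul, grad_apply, Real.norm_eq_abs, sq_abs, hGc]
  have hvec : HasFDerivAt (fun y => (√(1 + ‖gradient u y‖ ^ 2))⁻¹ • gradient u y)
      (fderiv ℝ (fun y => (√(1 + ‖gradient u y‖ ^ 2))⁻¹ • gradient u y) x) x := by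
    apply DifferentiableAt.hasFDerivAt
    rw [differentiableAt_euclidean]
    intro i
    have : (fun y => ((√(1 + ‖gradient u y‖ ^ 2))⁻¹ • gradient u y) i) =
      fun y => (√(1 + (Gc 0 y ^ 2 + Gc 1 y ^ 2)))⁻¹ * Gc i y := funext (hcomp i)
    rw [this]
    exact (hF i).differentiableAt
  have hval : ∀ i, fderiv ℝ (fun y => (√(1 + ‖gradient u y‖ ^ 2))⁻¹ • gradient u y) x (e2 i) i =
      fderiv ℝ (fun y => (√(1 + (Gc 0 y ^ 2 + Gc 1 y ^ 2)))⁻¹ * Gc i y) x (e2 i) := by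
    intro i
    have h1 := (EuclideanSpace.proj i : E2 →L[ℝ] ℝ).hasFDerivAt.comp x hvec
    have : (fun y => ((√(1 + ‖gradient u y‖ ^ 2))⁻¹ • gradient u y) i) =
      fun y => (√(1 + (Gc 0 y ^ 2 + Gc 1 y ^ 2)))⁻¹ * Gc i y := funext (hcomp i)
    change HasFDerivAt (fun y => ((√(1 + ‖gradient u y‖ ^ 2))⁻¹ • gradient u y) i) _ x at h1
    rw [this] at h1
    rw [h1.fderiv]
    rfl
  unfold mcDiv
  rw [Fin.sum_univ_two, hval, hval, (hF 0).fderiv, (hF 1).fderiv]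
  have hs : fderiv ℝ (Gc 1) x (e2 0) = fderiv ℝ (Gc 0) x (e2 1) := hess2_symm hu (e2 0) (e2 1)
  have e00 : hess2 u x (e2 0) (e2 0) = fderiv ℝ (Gc 0) x (e2 0) := rfl
  have e01 : hess2 u x (e2 0) (e2 1) = fderiv ℝ (Gc 0) x (e2 1) := hs
  have e11 : hess2 u x (e2 1) (e2 1) = fderiv ℝ (Gc 1) x (e2 1) := rfl
  rw [e00, e01, e11, ha₀, ha₁]
  change _ * √(1 + (Gc 0 x ^ 2 + Gc 1 x ^ 2)) ^ 3 = (1 + (Gc 0 x ^ 2 + Gc 1 x ^ 2)) * _ -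
    (Gc 0 x ^ 2 * _ + 2 * Gc 0 x * Gc 1 x * _ + Gc 1 x ^ 2 * _)
  simp only [add_apply, smul_apply, smul_eq_mul, hs,
    Function.comp]
  set W := √(1 + (Gc 0 x ^ 2 + Gc 1 x ^ 2)) with hW
  have hWp : 0 < W := Real.sqrt_pos.2 hpos
  have hW2 : W ^ 2 = 1 + (Gc 0 x ^ 2 + Gc 1 x ^ 2) := Real.sq_sqrt hpos.le
  rw [← hW2]
  field_simp
  ring

/-! ### From the plane to the complex numbers -/

/-- Second order Taylor estimate from a bound on the first order remainder of the derivative. -/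
theorem taylor_two {f : E2 → ℝ} {f' : E2 → E2 →L[ℝ] ℝ} {B : E2 →L[ℝ] E2 →L[ℝ] ℝ} {x h : E2}
    {κ : ℝ} (hB : ∀ a b, B a b = B b a)
    (hf : ∀ y ∈ Metric.closedBall x ‖h‖, HasFDerivAt f (f' y) y)
    (hb : ∀ y ∈ Metric.closedBall x ‖h‖, ‖f' y - f' x - B (y - x)‖ ≤ κ) :
    |f (x + h) - f x - f' x h - B h h / 2| ≤ κ * ‖h‖ := by
  have hg : ∀ y ∈ Metric.closedBall x ‖h‖,
      HasFDerivWithinAt (fun y => f y - f' x y - B (y - x) (y - x) / 2)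
        (f' y - f' x - B (y - x)) (Metric.closedBall x ‖h‖) y := by
    intro y hy
    have hid : HasFDerivAt (fun y : E2 => y - x) (ContinuousLinearMap.id ℝ E2) y :=
      (hasFDerivAt_id y).sub_const x
    have h1 : HasFDerivAt (fun y : E2 => B (y - x)) (B.comp (ContinuousLinearMap.id ℝ E2)) y :=
      B.hasFDerivAt.comp y hid
    have h2 := (h1.clm_apply hid).mul_const (1 / 2)
    have h3 := ((hf y hy).fun_sub (f' x).hasFDerivAt).fun_sub h2
    refine HasFDerivAt.hasFDerivWithinAt ?_
    have h4 : (fun y => f y - f' x y - B (y - x) (y - x) / 2) =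
        fun y => f y - f' x y - B (y - x) (y - x) * (1 / 2) := by
      funext y; ring
    rw [h4]
    refine HasFDerivAt.congr_fderiv h3 ?_
    ext w
    simp [hB w y, hB w x]
    ring
  have h := (convex_closedBall x ‖h‖).norm_image_sub_le_of_norm_hasFDerivWithin_le hg hb
    (Metric.mem_closedBall_self (norm_nonneg h)) (y := x + h) (by simp)
  simp only [add_sub_cancel_left, map_add, sub_self, map_zero] at h
  rw [Real.norm_eq_abs] at h
  convert h using 2
  simp
  ring

/-- The isometry from `ℂ` to the plane. -/
def emb : ℂ ≃ₗᵢ[ℝ] E2 := Complex.orthonormalBasisOneI.repr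

theorem emb_eq (z : ℂ) : emb z = z.re • e2 0 + z.im • e2 1 := by
  ext i
  have : emb z i = ![z.re, z.im] i := by
    simp [emb, Complex.orthonormalBasisOneI_repr_apply]
  rw [this]
  fin_cases i <;> simp [e2]

/-- The gradient of `l`, as a complex number. -/
def cgrad (l : E2 →L[ℝ] ℝ) : ℂ := ⟨l (e2 0), l (e2 1)⟩

/-- Half the trace of a bilinear form on the plane. -/
def ctr (B : E2 →L[ℝ] E2 →L[ℝ] ℝ) : ℝ := (B (e2 0) (e2 0) + B (e2 1) (e2 1)) / 2

/-- The trace-free part of a bilinear form on the plane, in the convention of `qf`. -/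
def cdev (B : E2 →L[ℝ] E2 →L[ℝ] ℝ) : ℂ :=
  ⟨(B (e2 0) (e2 0) - B (e2 1) (e2 1)) / 2, -B (e2 0) (e2 1)⟩

theorem lin_cgrad (l : E2 →L[ℝ] ℝ) (h : ℂ) : lin (cgrad l) h = l (emb h) := by
  rw [emb_eq]
  simp [lin, cgrad]
  ring

theorem qf_cdev {B : E2 →L[ℝ] E2 →L[ℝ] ℝ} (hB : ∀ a b, B a b = B b a) (h : ℂ) :
    qf (ctr B) (cdev B) h = B (emb h) (emb h) := by
  rw [emb_eq]
  simp [qf, ctr, cdev, hB (e2 1) (e2 0)]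
  ring

/-- The second derivative of a `C²` function provides its jets. -/
theorem jet_of_contDiffAt {u : E2 → ℝ} {z : ℂ} (hu : ContDiffAt ℝ 2 u (emb z)) :
    Jet (fun x => u (emb x)) z (cgrad (fderiv ℝ u (emb z)))
      (cdev (fderiv ℝ (fderiv ℝ u) (emb z))) (ctr (fderiv ℝ (fderiv ℝ u) (emb z))) := by
  have hsym : ∀ a b, fderiv ℝ (fderiv ℝ u) (emb z) a b = fderiv ℝ (fderiv ℝ u) (emb z) b a :=
    fun a b => hu.isSymmSndFDerivAt (by simp) a b
  unfold Jet
  rw [isLittleO_iff]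
  intro ε hε
  have h1 := (differentiableAt_fderiv hu).hasFDerivAt
  rw [hasFDerivAt_iff_isLittleO] at h1
  have h2 := (isLittleO_iff.1 h1) hε
  have h3 : ∀ᶠ y in 𝓝 (emb z), DifferentiableAt ℝ u y :=
    (hu.eventually (by simp)).mono fun y hy => hy.differentiableAt (by simp)
  obtain ⟨ρ, hρ, hb⟩ := Metric.eventually_nhds_iff.1 (h2.and h3)
  filter_upwards [Metric.ball_mem_nhds (0 : ℂ) hρ] with h hh
  have hh' : ‖h‖ < ρ := by simpa using hh
  have hmem : ∀ y ∈ Metric.closedBall (emb z) ‖emb h‖, dist y (emb z) < ρ := by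
    intro y hy
    rw [Metric.mem_closedBall, emb.norm_map] at hy
    linarith
  have h5 := taylor_two (f := u) (f' := fderiv ℝ u) (B := fderiv ℝ (fderiv ℝ u) (emb z))
    (x := emb z) (h := emb h) (κ := ε * ‖h‖) hsym
    (fun y hy => (hb (hmem y hy)).2.hasFDerivAt)
    (fun y hy => by
      refine (hb (hmem y hy)).1.trans ?_
      rw [Metric.mem_closedBall, emb.norm_map, dist_eq_norm] at hy
      exact mul_le_mul_of_nonneg_left hy hε.le)
  rw [lin_cgrad, qf_cdev hsym, map_add, Real.norm_eq_abs, norm_pow, norm_norm, sq, ← mul_assoc]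
  rwa [emb.norm_map] at h5

theorem closure_emb (Ω : Set E2) : closure (emb ⁻¹' Ω) = emb ⁻¹' closure Ω :=
  (emb.toHomeomorph.preimage_closure Ω).symm

theorem frontier_emb (Ω : Set E2) : frontier (emb ⁻¹' Ω) = emb ⁻¹' frontier Ω :=
  (emb.toHomeomorph.preimage_frontier Ω).symm

theorem contDiffAt_of_mem {Ω : Set E2} (hΩ : IsOpen Ω) {u : E2 → ℝ} (hu : ContDiffOn ℝ 2 u Ω)
    {x : E2} (hx : x ∈ Ω) : ContDiffAt ℝ 2 u x :=
  hu.contDiffAt (hΩ.mem_nhds hx)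

/-- The torsion function is the case `H = 0` of the rescaled problem. -/
theorem solC_torsion {Ω : Set E2} (hΩ : IsOpen Ω) {v : E2 → ℝ} (hv2 : ContDiffOn ℝ 2 v Ω)
    (hvc : ContinuousOn v (closure Ω))
    (hveq : ∀ x ∈ Ω, hess2 v x (e2 0) (e2 0) + hess2 v x (e2 1) (e2 1) = 2)
    (hvbd : ∀ x ∈ frontier Ω, v x = 0) : SolC 0 (emb ⁻¹' Ω) (fun z => v (emb z)) where
  cont := by
    rw [closure_emb]
    exact hvc.comp emb.continuous.continuousOn (fun z hz => hz)
  zero := by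
    intro z hz
    rw [frontier_emb] at hz
    exact hvbd _ hz
  eqn := by
    intro z hz
    have hu := contDiffAt_of_mem hΩ hv2 hz
    refine ⟨_, _, _, jet_of_contDiffAt hu, ?_⟩
    have h := hveq _ hz
    rw [hess2_eq (differentiableAt_fderiv hu), hess2_eq (differentiableAt_fderiv hu)] at h
    simp [Eqn, ctr, h]

/-- A solution `u` of problem (*) gives the solution `u / H` of the rescaled problem. -/
theorem solC_star {Ω : Set E2} (hΩ : IsOpen Ω) {H : ℝ} (hH : 0 < H) {u : E2 → ℝ}
    (hu : SolvesStar Ω H u) : SolC H (emb ⁻¹' Ω) (fun z => H⁻¹ * u (emb z)) where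
  cont := by
    rw [closure_emb]
    exact continuousOn_const.mul (hu.2.1.comp emb.continuous.continuousOn (fun z hz => hz))
  zero := by
    intro z hz
    rw [frontier_emb] at hz
    simp [hu.2.2.2 _ hz]
  eqn := by
    intro z hz
    have hd := contDiffAt_of_mem hΩ hu.1 hz
    refine ⟨_, _, _, (jet_of_contDiffAt hd).const_mul H⁻¹, ?_⟩
    have h := mcDiv_eq hd rfl rfl
    rw [hu.2.2.1 _ hz] at h
    simp only [hess2_eq (differentiableAt_fderiv hd)] at h
    set l := fderiv ℝ u (emb z)
    set B := fderiv ℝ (fderiv ℝ u) (emb z)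
    have hN : H ^ 2 * ‖((H⁻¹ : ℝ) : ℂ) * cgrad l‖ ^ 2 = l (e2 0) ^ 2 + l (e2 1) ^ 2 := by
      rw [norm_mul, mul_pow, norm_sq_eq (cgrad l), Complex.norm_real, Real.norm_eq_abs, sq_abs]
      simp only [cgrad]
      field_simp
    unfold Eqn
    rw [hN]
    have hq : H ^ 2 * qf (H⁻¹ * ctr B) (((H⁻¹ : ℝ) : ℂ) * cdev B)
        (Complex.I * (((H⁻¹ : ℝ) : ℂ) * cgrad l)) = H⁻¹ * qf (ctr B) (cdev B)
          (Complex.I * cgrad l) := by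
      simp [qf]
      field_simp
    rw [hq]
    have hq2 : qf (ctr B) (cdev B) (Complex.I * cgrad l) =
        2 * H * √(1 + (l (e2 0) ^ 2 + l (e2 1) ^ 2)) ^ 3 - 2 * ctr B := by
      rw [h]
      simp [qf, ctr, cdev, cgrad]
      ring
    rw [hq2]
    field_simp
    ring

/-- In the notation of `qf`, the determinant of the Hessian. -/
theorem gdet_eq {u : E2 → ℝ} {x : E2} (hu : ContDiffAt ℝ 2 u x) :
    Gdet u x = ctr (fderiv ℝ (fderiv ℝ u) x) ^ 2 - ‖cdev (fderiv ℝ (fderiv ℝ u) x)‖ ^ 2 := by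
  unfold Gdet
  simp only [hess2_eq (differentiableAt_fderiv hu)]
  rw [norm_sq_eq]
  simp [ctr, cdev]
  ring

/-- The Hessian form in the notation of `qf`. -/
theorem hess2_eq_qf {u : E2 → ℝ} {x : E2} (hu : ContDiffAt ℝ 2 u x) (h : ℂ) :
    hess2 u x (emb h) (emb h) =
      qf (ctr (fderiv ℝ (fderiv ℝ u) x)) (cdev (fderiv ℝ (fderiv ℝ u) x)) h := by
  rw [hess2_eq (differentiableAt_fderiv hu),
    qf_cdev (fun a b => hu.isSymmSndFDerivAt (by simp) a b)]

/-! ### Boundary geometry -/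

theorem norm_hess_sub_le (f : E2 → ℝ) (x y : E2) :
    ‖fderiv ℝ (fderiv ℝ f) x - fderiv ℝ (fderiv ℝ f) y‖ ≤
      ‖iteratedFDeriv ℝ 2 f x - iteratedFDeriv ℝ 2 f y‖ := by
  refine ContinuousLinearMap.opNorm_le_bound₂ _ (norm_nonneg _) fun a b => ?_
  have h := (iteratedFDeriv ℝ 2 f x - iteratedFDeriv ℝ 2 f y).le_opNorm ![a, b]
  rw [sub_apply, iteratedFDeriv_two_apply, iteratedFDeriv_two_apply,
    Fin.prod_univ_two] at h
  simpa [mul_assoc] using h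

/-- Second order expansion with a uniform Hölder remainder. -/
theorem holder_taylor {f : E2 → ℝ} (hf : ContDiff ℝ 2 f) {α C : ℝ} (hα : 0 < α) (hC : 0 ≤ C)
    (hol : ∀ x y : E2, ‖iteratedFDeriv ℝ 2 f x - iteratedFDeriv ℝ 2 f y‖ ≤ C * ‖x - y‖ ^ α)
    (ξ h : ℂ) :
    |f (emb (ξ + h)) - f (emb ξ) - lin (cgrad (fderiv ℝ f (emb ξ))) h -
      qf (ctr (fderiv ℝ (fderiv ℝ f) (emb ξ))) (cdev (fderiv ℝ (fderiv ℝ f) (emb ξ))) h / 2| ≤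
      C * ‖h‖ ^ 2 * ‖h‖ ^ α := by
  have hsym : ∀ a b, fderiv ℝ (fderiv ℝ f) (emb ξ) a b = fderiv ℝ (fderiv ℝ f) (emb ξ) b a :=
    fun a b => hf.contDiffAt.isSymmSndFDerivAt (by simp) a b
  have hfd : ∀ y, HasFDerivAt f (fderiv ℝ f y) y := fun y =>
    (hf.contDiffAt.differentiableAt (by simp)).hasFDerivAt
  have hfd2 : ∀ y, HasFDerivAt (fderiv ℝ f) (fderiv ℝ (fderiv ℝ f) y) y := fun y =>
    (differentiableAt_fderiv hf.contDiffAt).hasFDerivAt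
  set x := emb ξ with hx
  set B := fderiv ℝ (fderiv ℝ f) x with hBdef
  have h1 : ∀ y ∈ Metric.closedBall x ‖emb h‖,
      ‖fderiv ℝ f y - fderiv ℝ f x - B (y - x)‖ ≤ C * ‖h‖ ^ α * ‖h‖ := by
    intro y hy
    have hg : ∀ y ∈ Metric.closedBall x ‖emb h‖,
        HasFDerivWithinAt (fun y => fderiv ℝ f y - B y) (fderiv ℝ (fderiv ℝ f) y - B)
          (Metric.closedBall x ‖emb h‖) y := fun y _ =>
      ((hfd2 y).fun_sub B.hasFDerivAt).hasFDerivWithinAt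
    have hb : ∀ y ∈ Metric.closedBall x ‖emb h‖, ‖fderiv ℝ (fderiv ℝ f) y - B‖ ≤
        C * ‖h‖ ^ α := by
      intro y hy
      rw [Metric.mem_closedBall, emb.norm_map, dist_eq_norm] at hy
      refine ((norm_hess_sub_le f y x).trans (hol y x)).trans ?_
      exact mul_le_mul_of_nonneg_left
        (Real.rpow_le_rpow (norm_nonneg _) hy hα.le) hC
    have h := (convex_closedBall x ‖emb h‖).norm_image_sub_le_of_norm_hasFDerivWithin_le hg hb
      (Metric.mem_closedBall_self (norm_nonneg _)) hy
    have he : fderiv ℝ f y - fderiv ℝ f x - B (y - x) =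
        fderiv ℝ f y - B y - (fderiv ℝ f x - B x) := by
      rw [map_sub]; abel
    rw [he]
    refine h.trans ?_
    rw [Metric.mem_closedBall, emb.norm_map, dist_eq_norm] at hy
    exact mul_le_mul_of_nonneg_left hy (by positivity)
  have h2 := taylor_two (f := f) hsym (fun y _ => hfd y) h1
  rw [lin_cgrad, qf_cdev hsym, map_add]
  refine h2.trans (le_of_eq ?_)
  rw [emb.norm_map]
  ring

/-- The boundary frame at one point, from the expansion of a defining function `F` there. -/
theorem frame_at {Ω : Set ℂ} {F : ℂ → ℝ} {α K M C S : ℝ} {ξ P Q : ℂ} (hα : 0 < α)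
    (hΩ : IsOpen Ω) (hconv : Convex ℝ Ω) (hF : ∀ z, z ∈ Ω ↔ F z < 0)
    (hFc : ∀ z ∈ closure Ω, F z ≤ 0) (hFf : ∀ z ∈ frontier Ω, F z = 0) (hξ : ξ ∈ frontier Ω)
    (hK : 0 ≤ K) (hM : 0 ≤ M) (hC : 0 ≤ C) (hP : 1 ≤ K * ‖P‖) (hS : |S| ≤ M) (hQ : ‖Q‖ ≤ M)
    (ht : ∀ h, |F (ξ + h) - F ξ - lin P h - qf S Q h / 2| ≤ C * ‖h‖ ^ 2 * ‖h‖ ^ α) :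
    ∃ (c : ℂ) (s₀ : ℝ) (q₀ : ℂ), ‖c‖ = 1 ∧ |s₀| ≤ max 1 (K * (M + C)) ∧
      ‖q₀‖ ≤ max 1 (K * (M + C)) ∧
      (∀ ζ, ξ + c * ζ ∈ Ω → 0 < ζ.im) ∧
      (∀ ζ : ℂ, ‖ζ‖ < 1 → max 1 (K * (M + C)) * ‖ζ‖ ^ 2 < ζ.im → ξ + c * ζ ∈ Ω) ∧
      (∀ ζ : ℂ, ξ + c * ζ ∈ frontier Ω → ‖ζ‖ ≤ 1 →
        |ζ.im + qf s₀ q₀ ζ / 2| ≤ max 1 (K * (M + C)) * ‖ζ‖ ^ 2 * ‖ζ‖ ^ α) := by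
  set G := max 1 (K * (M + C)) with hG
  have hG1 : K * (M + C) ≤ G := le_max_right _ _
  have hPpos : 0 < ‖P‖ := by
    rcases (norm_nonneg P).eq_or_lt with h | h
    · rw [← h] at hP; linarith
    · exact h
  set r := ‖P‖ with hr
  have hinv : r⁻¹ ≤ K := by
    rw [inv_le_iff_one_le_mul₀ hPpos]; exact hP
  have hFξ : F ξ = 0 := hFf ξ hξ
  set c : ℂ := Complex.I * P * ((r⁻¹ : ℝ) : ℂ) with hc
  have hcn : ‖c‖ = 1 := by
    rw [hc, norm_mul, norm_mul, Complex.norm_I, Complex.norm_real, Real.norm_eq_abs,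
      abs_of_pos (inv_pos.2 hPpos), ← hr]
    field_simp
  have hrr : P.re ^ 2 + P.im ^ 2 = r ^ 2 := (norm_sq_eq P).symm
  have hlin : ∀ ζ : ℂ, lin P (c * ζ) = -(r * ζ.im) := by
    intro ζ
    have : lin P (c * ζ) = -((P.re ^ 2 + P.im ^ 2) * r⁻¹ * ζ.im) := by
      simp [lin, hc]; ring
    rw [this, hrr]
    field_simp
  have hcz : ∀ ζ : ℂ, ‖c * ζ‖ = ‖ζ‖ := fun ζ => by rw [norm_mul, hcn, one_mul]
  have hqc : ∀ ζ : ℂ, qf S Q (c * ζ) = qf S (Q * c ^ 2) ζ := by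
    intro ζ
    have h1 : c.re ^ 2 + c.im ^ 2 = 1 := by rw [← norm_sq_eq, hcn]; norm_num
    have h2 : qf S Q (c * ζ) = S * ((c.re ^ 2 + c.im ^ 2) * (ζ.re ^ 2 + ζ.im ^ 2)) +
        (qf 0 (Q * c ^ 2) ζ) := by
      simp [qf, sq]; ring
    rw [h2, h1]
    simp [qf]
  have ht' : ∀ ζ : ℂ, |F (ξ + c * ζ) + r * ζ.im - qf S (Q * c ^ 2) ζ / 2| ≤
      C * ‖ζ‖ ^ 2 * ‖ζ‖ ^ α := by
    intro ζ
    have h := ht (c * ζ)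
    rw [hFξ, hlin, hqc, hcz] at h
    convert h using 2
    ring
  have hqM : ∀ ζ : ℂ, |qf S (Q * c ^ 2) ζ| ≤ 2 * M * ‖ζ‖ ^ 2 := by
    intro ζ
    have h1 := qf_abs_le S (Q * c ^ 2) ζ
    have h2 : ‖Q * c ^ 2‖ = ‖Q‖ := by rw [norm_mul, norm_pow, hcn]; simp
    rw [h2] at h1
    refine h1.trans (mul_le_mul_of_nonneg_right (by linarith) (sq_nonneg _))
  have hsmall : ∀ ζ : ℂ, ‖ζ‖ ≤ 1 → |F (ξ + c * ζ) + r * ζ.im| ≤ (M + C) * ‖ζ‖ ^ 2 := by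
    intro ζ hζ
    have h1 := ht' ζ
    have h2 := hqM ζ
    have h3 : C * ‖ζ‖ ^ 2 * ‖ζ‖ ^ α ≤ C * ‖ζ‖ ^ 2 :=
      mul_le_of_le_one_right (by positivity) (Real.rpow_le_one (norm_nonneg _) hζ hα.le)
    rw [abs_le] at h1 h2 ⊢
    constructor <;> linarith [h1.1, h1.2, h2.1, h2.2]
  have hup0 : ∀ ζ, ξ + c * ζ ∈ Ω → 0 ≤ ζ.im := by
    intro ζ hζ
    by_contra hneg
    push Not at hneg
    have hA : 0 ≤ (M + C) * ‖ζ‖ ^ 2 := by positivity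
    have hB : 0 < r * (-ζ.im) := mul_pos hPpos (by linarith)
    obtain ⟨t, ht0, ht1, ht2, ht3⟩ : ∃ t : ℝ, 0 < t ∧ t < 1 ∧ t * ‖ζ‖ ≤ 1 ∧
        t * ((M + C) * ‖ζ‖ ^ 2) < r * (-ζ.im) := by
      refine ⟨min (1 / 2) (min (1 / (1 + ‖ζ‖))
        (r * (-ζ.im) / (2 * (1 + (M + C) * ‖ζ‖ ^ 2)))), by positivity, ?_, ?_, ?_⟩
      · exact (min_le_left _ _).trans_lt (by norm_num)
      · refine (mul_le_mul_of_nonneg_right ((min_le_right _ _).trans (min_le_left _ _))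
          (norm_nonneg ζ)).trans ?_
        rw [div_mul_eq_mul_div, div_le_one (by positivity)]
        linarith
      · refine (mul_le_mul_of_nonneg_right ((min_le_right _ _).trans (min_le_right _ _))
          hA).trans_lt ?_
        rw [div_mul_eq_mul_div, div_lt_iff₀ (by positivity)]
        refine mul_lt_mul_of_pos_left ?_ hB
        linarith
    have hmem : ξ + c * (((t : ℝ) : ℂ) * ζ) ∈ closure Ω := by
      have h := hconv.closure (frontier_subset_closure hξ) (subset_closure hζ)
        (a := 1 - t) (b := t) (by linarith) ht0.le (by ring)
      convert h using 1
      simp only [Complex.real_smul]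
      push_cast
      ring
    have h1 := hFc _ hmem
    have h2 := hsmall (((t : ℝ) : ℂ) * ζ) (by
      rw [norm_mul, Complex.norm_real, Real.norm_eq_abs, abs_of_pos ht0]; exact ht2)
    rw [abs_le, norm_mul, Complex.norm_real, Real.norm_eq_abs, abs_of_pos ht0,
      Complex.im_ofReal_mul] at h2
    have h3 := mul_lt_mul_of_pos_left ht3 ht0
    have h4 : (M + C) * (t * ‖ζ‖) ^ 2 = t * (t * ((M + C) * ‖ζ‖ ^ 2)) := by ring
    have h5 : t * (r * -ζ.im) = - (r * (t * ζ.im)) := by ring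
    linarith [h2.1]
  have hk : ∀ x : ℝ, 0 ≤ x → x ≤ M → r⁻¹ * x ≤ G := fun x hx hxM =>
    (mul_le_mul hinv (show x ≤ M + C by linarith) hx hK).trans hG1
  refine ⟨c, -(r⁻¹ * S), -(((r⁻¹ : ℝ) : ℂ) * (Q * c ^ 2)), hcn, ?_, ?_, ?_, ?_, ?_⟩
  · rw [abs_neg, abs_mul, abs_of_pos (inv_pos.2 hPpos)]
    exact hk _ (abs_nonneg _) hS
  · rw [norm_neg, norm_mul, norm_mul, norm_pow, hcn, Complex.norm_real, Real.norm_eq_abs,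
      abs_of_pos (inv_pos.2 hPpos), one_pow, mul_one]
    exact hk _ (norm_nonneg _) hQ
  · intro ζ hζ
    -- openness upgrades the weak inequality to a strict one
    have hcont : Continuous fun t : ℝ => ξ + c * (ζ - (t : ℂ) * Complex.I) := by fun_prop
    have h1 : (fun t : ℝ => ξ + c * (ζ - (t : ℂ) * Complex.I)) ⁻¹' Ω ∈ 𝓝 (0 : ℝ) :=
      (hΩ.preimage hcont).mem_nhds (by simpa using hζ)
    obtain ⟨ε, hε, hb⟩ := Metric.mem_nhds_iff.1 h1
    have h2 := hup0 _ (hb (show ε / 2 ∈ Metric.ball (0 : ℝ) ε by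
      simp [abs_of_pos hε, hε]))
    simp at h2
    linarith
  · intro ζ hζ1 hζ
    rw [hF]
    have h1 := hsmall ζ hζ1.le
    rw [abs_le] at h1
    have h2 : r * (G * ‖ζ‖ ^ 2) < r * ζ.im := mul_lt_mul_of_pos_left hζ hPpos
    have h3 : M + C ≤ r * G := by
      have := mul_le_mul_of_nonneg_left hG1 hPpos.le
      have h5 : (M + C) * 1 ≤ (M + C) * (K * r) :=
        mul_le_mul_of_nonneg_left hP (by linarith)
      linarith
    have h4 := mul_le_mul_of_nonneg_right h3 (sq_nonneg ‖ζ‖)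
    linarith [h1.2]
  · intro ζ hζ _
    have h1 := ht' ζ
    rw [hFf _ hζ] at h1
    have h2 : ζ.im + qf (-(r⁻¹ * S)) (-(((r⁻¹ : ℝ) : ℂ) * (Q * c ^ 2))) ζ / 2 =
        r⁻¹ * (0 + r * ζ.im - qf S (Q * c ^ 2) ζ / 2) := by
      have : qf (-(r⁻¹ * S)) (-(((r⁻¹ : ℝ) : ℂ) * (Q * c ^ 2))) ζ =
          -(r⁻¹ * qf S (Q * c ^ 2) ζ) := by
        generalize Q * c ^ 2 = Y
        simp [qf]; ring
      rw [this]
      field_simp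
      ring
    rw [h2, abs_mul, abs_of_pos (inv_pos.2 hPpos)]
    have h3 := mul_le_mul hinv h1 (abs_nonneg _) hK
    refine h3.trans ?_
    have h4 : K * C ≤ G := (mul_le_mul_of_nonneg_left (by linarith) hK).trans hG1
    have h5 : 0 ≤ ‖ζ‖ ^ 2 * ‖ζ‖ ^ α := by positivity
    have h6 := mul_le_mul_of_nonneg_right h4 h5
    linarith

theorem norm_cgrad_ne_zero {f : E2 → ℝ} {x : E2} (h : gradient f x ≠ 0) :
    ‖cgrad (fderiv ℝ f x)‖ ≠ 0 := by
  intro h0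
  apply h
  have h1 : cgrad (fderiv ℝ f x) = 0 := norm_eq_zero.1 h0
  have h2 := congrArg Complex.re h1
  have h3 := congrArg Complex.im h1
  ext i
  rw [grad_apply]
  fin_cases i
  · exact h2
  · exact h3

/-- A convex domain with `C^{2,α}` boundary has uniform boundary frames. -/
theorem geometry {α : ℝ} (hα : 0 < α) {Ω : Set E2} (h : StrictlyConvexDomain α Ω)
    (hconv : Convex ℝ Ω) :
    ∃ D G, Geo (emb ⁻¹' Ω) D ∧ 1 ≤ G ∧ Frames α G 1 (emb ⁻¹' Ω) := by
  obtain ⟨hO, hbdd, -, f, hf, hΩf, hfr, ⟨C, hol⟩, hgrad, -⟩ := h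
  have hopen : IsOpen (emb ⁻¹' Ω) := hO.preimage emb.continuous
  have hconv' : Convex ℝ (emb ⁻¹' Ω) := hconv.linear_preimage emb.toLinearEquiv.toLinearMap
  have hC0 : (0 : ℝ) ≤ |C| := abs_nonneg C
  have hol' : ∀ x y : E2, ‖iteratedFDeriv ℝ 2 f x - iteratedFDeriv ℝ 2 f y‖ ≤
      |C| * ‖x - y‖ ^ α := fun x y => (hol x y).trans
    (mul_le_mul_of_nonneg_right (le_abs_self C) (by positivity))
  have hcpt : IsCompact (frontier Ω) :=
    Metric.isCompact_of_isClosed_isBounded isClosed_frontier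
      (hbdd.closure.subset frontier_subset_closure)
  have hc1 : Continuous (fderiv ℝ f) := hf.continuous_fderiv (by simp)
  have hc2 : Continuous (fderiv ℝ (fderiv ℝ f)) :=
    (hf.fderiv_right (m := 1) (by norm_num)).continuous_fderiv (by simp)
  have hPc : Continuous fun x => cgrad (fderiv ℝ f x) := by
    have : (fun x => cgrad (fderiv ℝ f x)) = fun x =>
        ((fderiv ℝ f x (e2 0) : ℝ) : ℂ) + ((fderiv ℝ f x (e2 1) : ℝ) : ℂ) * Complex.I := by
      funext x; exact (Complex.re_add_im _).symm
    rw [this]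
    fun_prop
  have hSc : Continuous fun x => ctr (fderiv ℝ (fderiv ℝ f) x) := by
    unfold ctr; fun_prop
  have hQc : Continuous fun x => cdev (fderiv ℝ (fderiv ℝ f) x) := by
    have : (fun x => cdev (fderiv ℝ (fderiv ℝ f) x)) = fun x =>
        (((fderiv ℝ (fderiv ℝ f) x (e2 0) (e2 0) - fderiv ℝ (fderiv ℝ f) x (e2 1) (e2 1)) / 2 : ℝ)
          : ℂ) + ((-fderiv ℝ (fderiv ℝ f) x (e2 0) (e2 1) : ℝ) : ℂ) * Complex.I := by
      funext x; exact (Complex.re_add_im _).symm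
    rw [this]
    fun_prop
  obtain ⟨K, hK⟩ := hcpt.exists_bound_of_continuousOn
    (f := fun x => ‖cgrad (fderiv ℝ f x)‖⁻¹)
    (hPc.norm.continuousOn.inv₀ fun x hx => norm_cgrad_ne_zero (hgrad x hx))
  obtain ⟨M₁, hM₁⟩ := hcpt.exists_bound_of_continuousOn hSc.continuousOn
  obtain ⟨M₂, hM₂⟩ := hcpt.exists_bound_of_continuousOn hQc.continuousOn
  set M := max |M₁| |M₂|
  obtain ⟨D, hD⟩ := hbdd.closure.exists_norm_le
  have hfr' := frontier_emb Ω
  have key : ∀ ξ ∈ frontier (emb ⁻¹' Ω), _ := fun ξ hξ =>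
    frame_at (Ω := emb ⁻¹' Ω) (F := fun z => f (emb z)) (α := α) (K := |K|) (M := M) (C := |C|)
      (ξ := ξ) (P := cgrad (fderiv ℝ f (emb ξ))) (Q := cdev (fderiv ℝ (fderiv ℝ f) (emb ξ)))
      (S := ctr (fderiv ℝ (fderiv ℝ f) (emb ξ))) hα hopen hconv'
      (fun z => by rw [mem_preimage, hΩf]; rfl)
      (fun z hz => by
        rw [closure_emb, mem_preimage] at hz
        have : closure Ω ⊆ {x | f x ≤ 0} := by
          refine closure_minimal ?_ (isClosed_le hf.continuous continuous_const)
          rw [hΩf]; exact fun x (hx : f x < 0) => show f x ≤ 0 from hx.le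
        exact this hz)
      (fun z hz => by rw [hfr', hfr] at hz; exact hz) hξ (abs_nonneg _)
      ((abs_nonneg _).trans (le_max_left _ _)) (abs_nonneg _)
      (by
        rw [hfr', mem_preimage] at hξ
        have h1 := hK _ hξ
        have h2 := norm_cgrad_ne_zero (hgrad _ hξ)
        have h3 : 0 < ‖cgrad (fderiv ℝ f (emb ξ))‖ := lt_of_le_of_ne (norm_nonneg _) h2.symm
        rw [Real.norm_eq_abs, abs_of_pos (inv_pos.2 h3)] at h1
        rw [← inv_le_iff_one_le_mul₀ h3]
        exact h1.trans (le_abs_self K))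
      (by
        rw [hfr', mem_preimage] at hξ
        exact (hM₁ _ hξ).trans ((le_abs_self _).trans (le_max_left _ _)))
      (by
        rw [hfr', mem_preimage] at hξ
        exact (hM₂ _ hξ).trans ((le_abs_self _).trans (le_max_right _ _)))
      (fun h => holder_taylor hf hα hC0 hol' ξ h)
  refine ⟨max 1 D, max 1 (|K| * (M + |C|)), ⟨hopen, le_max_left _ _, ?_, ?_⟩, le_max_left _ _, key⟩
  · intro z hz
    rw [closure_emb, mem_preimage] at hz
    rw [← emb.norm_map]
    exact (hD _ hz).trans (le_max_right _ _)
  · intro ξ hξ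
    obtain ⟨c, -, -, hc, -, -, hup, -, -⟩ := key ξ hξ
    have hc0 : c ≠ 0 := by
      rintro rfl; simp at hc
    refine ⟨c * Complex.I, by simp [hc], fun z hz => ?_⟩
    have h1 := hup ((z - ξ) / c) (by
      rw [mul_div_cancel₀ _ hc0, add_sub_cancel]; exact hz)
    have h2 : lin (c * Complex.I) (z - ξ) = ((z - ξ) / c).im := by
      have h3 : z - ξ = c * ((z - ξ) / c) := (mul_div_cancel₀ _ hc0).symm
      have h4 : c.re ^ 2 + c.im ^ 2 = 1 := by rw [← norm_sq_eq, hc]; norm_num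
      generalize (z - ξ) / c = ζ at h3 ⊢
      rw [h3]
      have : lin (c * Complex.I) (c * ζ) = (c.re ^ 2 + c.im ^ 2) * ζ.im := by
        simp [lin]; ring
      rw [this, h4, one_mul]
    rw [h2]; exact h1.le

theorem convexOn_emb {Ω : Set E2} {u : E2 → ℝ} (h : ConvexOn ℝ Ω u) :
    ConvexOn ℝ (emb ⁻¹' Ω) (fun z => u (emb z)) :=
  h.comp_linearMap emb.toLinearEquiv.toLinearMap

/-- **1-convexity, Theorem 5.**  Let `Ω` be a bounded strictly convex planar
domain and `v` the solution of the torsion problem `Δv = 2` in `Ω`, `v = 0` on `∂Ω`.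
If `v` is uniformly second order convex (convex with `G_v ≥ λ > 0` on `Ω`), then there is
`ε > 0` such that for `0 < H < ε` the solution `u(·;H)` of (*) is strictly second order
convex.  Conversely, if the Gauss curvature of `graph v` is negative somewhere (`G_v < 0`
at some point of `Ω`), then for all sufficiently small `H > 0` the solution `u(·;H)` fails
to be convex. -/
theorem small_bubbles_convexity (α : ℝ) (hα : 0 < α) (hα1 : α ≤ 1)
    (Ω : Set E2) (hΩ : StrictlyConvexDomain α Ω)
    (v : E2 → ℝ) (hv2 : ContDiffOn ℝ 2 v Ω) (hvc : ContinuousOn v (closure Ω))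
    (hveq : ∀ x ∈ Ω, hess2 v x (e2 0) (e2 0) + hess2 v x (e2 1) (e2 1) = 2)
    (hvbd : ∀ x ∈ frontier Ω, v x = 0) :
    ((ConvexOn ℝ Ω v ∧ ∃ lam : ℝ, 0 < lam ∧ ∀ x ∈ Ω, lam ≤ Gdet v x) →
      ∃ ε : ℝ, 0 < ε ∧ ∀ H : ℝ, 0 < H → H < ε → ∀ u : E2 → ℝ, SolvesStar Ω H u →
        ∀ x ∈ Ω, ∀ w : E2, w ≠ 0 → 0 < hess2 u x w w) ∧
    ((∃ x₀ ∈ Ω, Gdet v x₀ < 0) →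
      ∃ ε : ℝ, 0 < ε ∧ ∀ H : ℝ, 0 < H → H < ε → ∀ u : E2 → ℝ, SolvesStar Ω H u →
        ¬ ConvexOn ℝ Ω u) := by
  have hO : IsOpen Ω := hΩ.1
  have hV := solC_torsion hO hv2 hvc hveq hvbd
  have hs : ∀ x ∈ Ω, ctr (fderiv ℝ (fderiv ℝ v) x) = 1 := by
    intro x hx
    have h := hveq x hx
    have hd := differentiableAt_fderiv (contDiffAt_of_mem hO hv2 hx)
    rw [hess2_eq hd, hess2_eq hd] at h
    rw [ctr, h]; norm_num
  constructor
  · rintro ⟨hconv, lam, hlam, hG⟩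
    obtain ⟨D, G, g, hG1, fr⟩ := geometry hα hΩ hconv.1
    obtain ⟨ε, hε, hmain⟩ := convex_small hα g
      (hconv.1.linear_preimage emb.toLinearEquiv.toLinearMap) hG1 one_pos fr hV
      (c₀ := lam / 4) (by linarith) (by
        intro z hz p q s j
        have hd := contDiffAt_of_mem hO hv2 hz
        have j' := jet_of_contDiffAt hd
        obtain ⟨-, hq, hs'⟩ := j.unique j'
        have h1 := hG _ hz
        have h2 := convexOn_jet g.isOpen (convexOn_emb hconv) hz j'
        rw [gdet_eq hd] at h1
        rw [hs _ hz] at h1 h2 hs'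
        rw [hs', hq]
        -- `lam ≤ (1 - ‖q‖) (1 + ‖q‖) ≤ 2 (1 - ‖q‖)`
        nlinarith [norm_nonneg (cdev (fderiv ℝ (fderiv ℝ v) (emb z)))])
    refine ⟨ε, hε, fun H hH hHε u hu x hx w hw => ?_⟩
    obtain ⟨z, rfl⟩ := emb.surjective x
    obtain ⟨h, rfl⟩ := emb.surjective w
    have hd := contDiffAt_of_mem hO hu.1 hx
    have hh : h ≠ 0 := by
      rintro rfl; simp at hw
    have h1 := hmain H hH hHε _ (solC_star hO hH hu) z hx _ _ _
      ((jet_of_contDiffAt hd).const_mul H⁻¹) h hh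
    rw [hess2_eq_qf hd]
    set S := ctr (fderiv ℝ (fderiv ℝ u) (emb z))
    set Q := cdev (fderiv ℝ (fderiv ℝ u) (emb z))
    have h2 : qf (H⁻¹ * S) (((H⁻¹ : ℝ) : ℂ) * Q) h = H⁻¹ * qf S Q h := by
      simp [qf]; ring
    rw [h2] at h1
    exact pos_of_mul_pos_right h1 (inv_pos.2 hH).le
  · rintro ⟨x₀, hx₀, hneg⟩
    by_cases hconv : Convex ℝ Ω
    · obtain ⟨D, G, g, -, -⟩ := geometry hα hΩ hconv
      obtain ⟨z, rfl⟩ := emb.surjective x₀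
      have hd := contDiffAt_of_mem hO hv2 hx₀
      have hlt : ctr (fderiv ℝ (fderiv ℝ v) (emb z)) <
          ‖cdev (fderiv ℝ (fderiv ℝ v) (emb z))‖ := by
        rw [gdet_eq hd] at hneg
        exact lt_of_pow_lt_pow_left₀ 2 (norm_nonneg _) (by linarith)
      obtain ⟨ε, hε, hmain⟩ := nonconvex_small g hV (x₀ := z) hx₀ (jet_of_contDiffAt hd) hlt
      refine ⟨ε, hε, fun H hH hHε u hu hcu => ?_⟩
      exact hmain H hH hHε _ (solC_star hO hH hu)
        ((convexOn_emb hcu).smul (inv_pos.2 hH).le)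
    · exact ⟨1, one_pos, fun H _ _ u _ hcu => hconv hcu.1⟩
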